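/- arXiv:2102.02778 — 3 statements merged into one kernel-verified Lean document; each statement's English description precedes it below -/
import Mathlib

section
/- Let X be an infinite-dimensional Banach space with non-trivial type, i.e. X has Rademacher type p for some p > 1 (there is a constant T such that for every finite sequence x₁,…,x_m in X the average over all choices of signs ε_i ∈ {−1,1} of ‖Σ ε_i x_i‖ is at most T·(Σ‖x_i‖^p)^{1/p}). Then P(²X) is not complemented in Lip₀(B_X). -/
open Metric Set Real

noncomputable section

/-- The closed unit ball of a normed space, as a pointed metric space. -/
def UBall (X : Type*) [NormedAddCommGroup X] : Set X := Metric.closedBall (0 : X) 1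

/-- The base point of the unit ball. -/
def zeroB (X : Type*) [NormedAddCommGroup X] : ↥(UBall X) :=
  ⟨0, Metric.mem_closedBall_self zero_le_one⟩

/-- `Lip₀(B_X)`: real-valued Lipschitz functions on the closed unit ball vanishing at `0`. -/
def Lip0B (X : Type*) [NormedAddCommGroup X] : Set (↥(UBall X) → ℝ) :=
  {f | (∃ K : NNReal, LipschitzWith K f) ∧ f (zeroB X) = 0}

/-- The image of the space `P(ᵏX)` of `k`-homogeneous polynomials on `X` inside the
functions on the unit ball, via the restriction embedding `P ↦ P↾_{B_X}`. -/
def PhomB (k : ℕ) (X : Type*) [NormedAddCommGroup X] [NormedSpace ℝ X] :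
    Set (↥(UBall X) → ℝ) :=
  {f | ∃ M : ContinuousMultilinearMap ℝ (fun _ : Fin k => X) ℝ,
    ∀ x : ↥(UBall X), f x = M (fun _ => (x : X))}

/-- `C₀¹(B_E)`: functions on the closed unit ball that are continuous on the closed ball,
continuously differentiable on the open ball with uniformly continuous derivative,
and vanish at `0`. -/
def C01B (E : Type*) [NormedAddCommGroup E] [NormedSpace ℝ E] :
    Set (↥(UBall E) → ℝ) :=
  {f | ∃ g : E → ℝ,
    (∀ x : ↥(UBall E), f x = g x) ∧
    ContinuousOn g (UBall E) ∧ g 0 = 0 ∧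
    ∃ g' : E → (E →L[ℝ] ℝ),
      (∀ x ∈ Metric.ball (0 : E) 1, HasFDerivAt g (g' x) x) ∧
      UniformContinuousOn g' (Metric.ball (0 : E) 1)}

def nuM {ι 𝔅 : Type*} [NormedRing 𝔅] [NormedAlgebra ℝ 𝔅] (Φ : (ι → ℝ) →ₐ[ℝ] 𝔅) (m : ι → ℂ) : ℝ :=
  ‖Φ (fun i => (m i).re)‖ + ‖Φ (fun i => (m i).im)‖

section nuM
variable {ι 𝔅 : Type*} [NormedRing 𝔅] [NormedAlgebra ℝ 𝔅] (Φ : (ι → ℝ) →ₐ[ℝ] 𝔅)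

lemma nuM_nonneg (m : ι → ℂ) : 0 ≤ nuM Φ m := by unfold nuM; positivity

lemma nuM_add (m m' : ι → ℂ) : nuM Φ (fun i => m i + m' i) ≤ nuM Φ m + nuM Φ m' := by
  unfold nuM
  have h1 : (fun i => (m i + m' i).re) = (fun i => (m i).re) + (fun i => (m' i).re) := by
    ext i; simp
  have h2 : (fun i => (m i + m' i).im) = (fun i => (m i).im) + (fun i => (m' i).im) := by
    ext i; simp
  rw [h1, h2, map_add, map_add]
  have := norm_add_le (Φ (fun i => (m i).re)) (Φ (fun i => (m' i).re))
  have := norm_add_le (Φ (fun i => (m i).im)) (Φ (fun i => (m' i).im))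
  linarith

lemma nuM_mul (m m' : ι → ℂ) : nuM Φ (fun i => m i * m' i) ≤ nuM Φ m * nuM Φ m' := by
  unfold nuM
  have h1 : (fun i => (m i * m' i).re) = (fun i => (m i).re) * (fun i => (m' i).re)
      - (fun i => (m i).im) * (fun i => (m' i).im) := by
    ext i; simp
  have h2 : (fun i => (m i * m' i).im) = (fun i => (m i).re) * (fun i => (m' i).im)
      + (fun i => (m i).im) * (fun i => (m' i).re) := by
    ext i; simp
  rw [h1, h2, map_sub, map_add, map_mul, map_mul, map_mul, map_mul]
  generalize Φ (fun i => (m i).re) = a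
  generalize Φ (fun i => (m i).im) = b
  generalize Φ (fun i => (m' i).re) = c
  generalize Φ (fun i => (m' i).im) = d
  have e1 := norm_sub_le (a * c) (b * d)
  have e2 := norm_add_le (a * d) (b * c)
  have := norm_mul_le a c
  have := norm_mul_le b d
  have := norm_mul_le a d
  have := norm_mul_le b c
  nlinarith

lemma nuM_const_mul (c : ℂ) (m : ι → ℂ) : nuM Φ (fun i => c * m i) ≤ 2 * ‖c‖ * nuM Φ m := by
  unfold nuM
  have h1 : (fun i => (c * m i).re) = c.re • (fun i => (m i).re) - c.im • (fun i => (m i).im) := by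
    ext i; simp
  have h2 : (fun i => (c * m i).im) = c.re • (fun i => (m i).im) + c.im • (fun i => (m i).re) := by
    ext i; simp
  rw [h1, h2, map_sub, map_add, map_smul, map_smul, map_smul, map_smul]
  generalize Φ (fun i => (m i).re) = a
  generalize Φ (fun i => (m i).im) = b
  have e1 := norm_sub_le (c.re • a) (c.im • b)
  have e2 := norm_add_le (c.re • b) (c.im • a)
  simp only [norm_smul, Real.norm_eq_abs] at e1 e2
  have := Complex.abs_re_le_norm c
  have := Complex.abs_im_le_norm c
  nlinarith [norm_nonneg a, norm_nonneg b]

lemma nuM_ofReal (r : ι → ℝ) : nuM Φ (fun i => (r i : ℂ)) = ‖Φ r‖ := by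
  unfold nuM
  have : (fun i : ι => ((r i : ℂ)).im) = 0 := by ext i; simp
  simp only [Complex.ofReal_re]
  rw [this, map_zero, norm_zero, add_zero]

lemma nuM_pow (m : ι → ℂ) (n : ℕ) (h1 : ‖Φ 1‖ ≤ 1) :
    nuM Φ (fun i => m i ^ n) ≤ nuM Φ m ^ n := by
  induction n with
  | zero =>
    have := nuM_ofReal Φ (1 : ι → ℝ)
    simp only [Pi.one_apply, Complex.ofReal_one] at this
    simp only [pow_zero]; rw [this]; exact h1
  | succ n ih =>
    simp only [pow_succ]
    refine (nuM_mul Φ _ _).trans ?_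
    exact mul_le_mul_of_nonneg_right ih (nuM_nonneg _ _)

/-- Neumann bound. -/
lemma nuM_inv (h1 : ‖Φ 1‖ ≤ 1) (m v : ι → ℂ) (hm : ∀ i, m i * (1 - v i) = 1) (θ : ℝ)
    (hv : nuM Φ v ≤ θ) (hθ : θ < 1) : nuM Φ m ≤ 1 / (1 - θ) := by
  have e : m = fun i => ((1 : ι → ℝ) i : ℂ) + m i * v i := by
    ext i; have := hm i; simp; linear_combination this
  have h2 : nuM Φ m ≤ 1 + nuM Φ m * θ := by
    calc nuM Φ m = nuM Φ (fun i => ((1 : ι → ℝ) i : ℂ) + m i * v i) := by rw [← e]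
      _ ≤ nuM Φ (fun i => ((1 : ι → ℝ) i : ℂ)) + nuM Φ (fun i => m i * v i) := nuM_add Φ _ _
      _ ≤ 1 + nuM Φ m * θ := by
        rw [nuM_ofReal]
        refine add_le_add h1 ((nuM_mul Φ _ _).trans ?_)
        exact mul_le_mul_of_nonneg_left hv (nuM_nonneg _ _)
  rw [le_div_iff₀ (by linarith)]
  linarith

variable [Fintype ι]

lemma nuM_continuous : Continuous (nuM Φ) := by
  unfold nuM
  have hΦ : Continuous Φ.toLinearMap := Φ.toLinearMap.continuous_of_finiteDimensional
  refine Continuous.add ?_ ?_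
  · refine continuous_norm.comp (hΦ.comp (continuous_pi fun i => ?_))
    exact Complex.continuous_re.comp (continuous_apply i)
  · refine continuous_norm.comp (hΦ.comp (continuous_pi fun i => ?_))
    exact Complex.continuous_im.comp (continuous_apply i)

lemma nuM_sum (s : Finset ℕ) (f : ℕ → ι → ℂ) :
    nuM Φ (fun i => ∑ j ∈ s, f j i) ≤ ∑ j ∈ s, nuM Φ (f j) := by
  classical
  induction s using Finset.induction_on with
  | empty =>
    have := nuM_ofReal Φ (0 : ι → ℝ)
    simp only [Pi.zero_apply, Complex.ofReal_zero, map_zero, norm_zero] at this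
    simp [this]
  | insert a s ha ih =>
    simp only [Finset.sum_insert ha]
    exact (nuM_add Φ _ _).trans (add_le_add le_rfl ih)

lemma nuM_hasSum (f : ℕ → ι → ℂ) (m : ι → ℂ) (hf : ∀ i, HasSum (fun j => f j i) (m i))
    (b : ℕ → ℝ) (B : ℝ) (hb : ∀ j, nuM Φ (f j) ≤ b j) (hB : HasSum b B) : nuM Φ m ≤ B := by
  have h1 : Filter.Tendsto (fun s : Finset ℕ => (fun i => ∑ j ∈ s, f j i)) Filter.atTop (nhds m) :=
    tendsto_pi_nhds.2 fun i => hf i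
  have h2 := ((nuM_continuous Φ).tendsto m).comp h1
  refine le_of_tendsto_of_tendsto h2 hB (Filter.Eventually.of_forall fun s => ?_)
  exact (nuM_sum Φ s f).trans (Finset.sum_le_sum fun j _ => hb j)

variable [CompleteSpace 𝔅]

lemma nuM_integral {α : Type*} [MeasurableSpace α] (μ : MeasureTheory.Measure α)
    (f : α → ι → ℂ) (hf : ∀ i, MeasureTheory.Integrable (fun s => f s i) μ) (g : α → ℝ)
    (hg : MeasureTheory.Integrable g μ) (h : ∀ᵐ s ∂μ, nuM Φ (f s) ≤ g s) :
    nuM Φ (fun i => ∫ s, f s i ∂μ) ≤ ∫ s, g s ∂μ := by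
  set Ψ : (ι → ℝ) →L[ℝ] 𝔅 := LinearMap.toContinuousLinearMap Φ.toLinearMap with hΨ
  have hre : MeasureTheory.Integrable (fun s => fun i => (f s i).re) μ :=
    MeasureTheory.Integrable.of_eval fun i => (hf i).re
  have him : MeasureTheory.Integrable (fun s => fun i => (f s i).im) μ :=
    MeasureTheory.Integrable.of_eval fun i => (hf i).im
  have e1 : (fun i => (∫ s, f s i ∂μ).re) = ∫ s, (fun i => (f s i).re) ∂μ := by
    ext i
    have hh : ∀ i, MeasureTheory.Integrable (fun s => (f s i).re) μ := fun i => (hf i).re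
    rw [MeasureTheory.eval_integral hh]
    exact (integral_re (hf i)).symm
  have e2 : (fun i => (∫ s, f s i ∂μ).im) = ∫ s, (fun i => (f s i).im) ∂μ := by
    ext i
    have hh : ∀ i, MeasureTheory.Integrable (fun s => (f s i).im) μ := fun i => (hf i).im
    rw [MeasureTheory.eval_integral hh]
    exact (integral_im (hf i)).symm
  have k1 : Φ (fun i => (∫ s, f s i ∂μ).re) = ∫ s, Ψ (fun i => (f s i).re) ∂μ := by
    rw [e1, Ψ.integral_comp_comm hre]; rfl
  have k2 : Φ (fun i => (∫ s, f s i ∂μ).im) = ∫ s, Ψ (fun i => (f s i).im) ∂μ := by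
    rw [e2, Ψ.integral_comp_comm him]; rfl
  have i1 := (Ψ.integrable_comp hre).norm
  have i2 := (Ψ.integrable_comp him).norm
  unfold nuM
  rw [k1, k2]
  calc _ ≤ (∫ s, ‖Ψ (fun i => (f s i).re)‖ ∂μ) + ∫ s, ‖Ψ (fun i => (f s i).im)‖ ∂μ :=
        add_le_add (MeasureTheory.norm_integral_le_integral_norm _)
          (MeasureTheory.norm_integral_le_integral_norm _)
    _ = ∫ s, (‖Ψ (fun i => (f s i).re)‖ + ‖Ψ (fun i => (f s i).im)‖) ∂μ :=
        (MeasureTheory.integral_add i1 i2).symm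
    _ ≤ ∫ s, g s ∂μ := MeasureTheory.integral_mono_ae (i1.add i2) hg h

end nuM

section S2
variable {ι 𝔅 : Type*} [NormedRing 𝔅] [NormedAlgebra ℝ 𝔅] (Φ : (ι → ℝ) →ₐ[ℝ] 𝔅)

lemma nuM_one (h1 : ‖Φ 1‖ ≤ 1) : nuM Φ (fun _ => 1) ≤ 1 := by
  have := nuM_ofReal Φ (1 : ι → ℝ)
  simp only [Pi.one_apply, Complex.ofReal_one] at this
  rw [this]; exact h1

lemma phi_real_inv (h1 : ‖Φ 1‖ ≤ 1) (m v : ι → ℝ) (hm : ∀ i, m i * (1 - v i) = 1) (θ : ℝ)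
    (hv : ‖Φ v‖ ≤ θ) (hθ : θ < 1) : ‖Φ m‖ ≤ 1 / (1 - θ) := by
  rw [← nuM_ofReal]
  refine nuM_inv Φ h1 _ (fun i => (v i : ℂ)) (fun i => ?_) θ (by rw [nuM_ofReal]; exact hv) hθ
  exact_mod_cast hm i

lemma phi_geom (h1 : ‖Φ 1‖ ≤ 1) (w : ι → ℝ) (hw : ‖Φ w‖ ≤ 1) (N : ℕ) :
    ‖Φ (∑ j ∈ Finset.range N, w ^ j)‖ ≤ N := by
  rw [map_sum]
  refine (norm_sum_le _ _).trans ?_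
  have : ∀ j ∈ Finset.range N, ‖Φ (w ^ j)‖ ≤ 1 := by
    intro j _
    induction j with
    | zero => simpa using h1
    | succ j ih =>
      rw [pow_succ, map_mul]
      refine (norm_mul_le _ _).trans ?_
      exact mul_le_one₀ (ih (by simp_all; omega)) (norm_nonneg _) hw
  refine (Finset.sum_le_sum this).trans ?_
  simp

variable (k : ι → ℕ) (N : ℕ) (hN1 : 1 ≤ N)
  (hs : ∀ s : ℝ, 0 ≤ s → s ≤ 1 → ‖Φ (fun i => s ^ k i)‖ ≤ 1)
  (hN : ∀ s : ℝ, 0 ≤ s → s ≤ 1 → ‖Φ (fun i => (1 - s ^ k i) ^ N)‖ ≤ 2 ^ N - 1 / 2)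

include hs in
lemma phi_one : ‖Φ 1‖ ≤ 1 := by
  have := hs 1 zero_le_one le_rfl
  simp only [one_pow] at this
  exact this

include hN1 hs hN in
lemma S2 (a s : ℝ) (ha : 0 ≤ a) (ha1 : a ≤ 1) (hs0 : 0 ≤ s) (hs1 : s ≤ 1) :
    ‖Φ (fun i => 1 / (1 + a * s ^ k i))‖ ≤ N * 2 ^ (N + 1) := by
  have h1 := phi_one Φ k hs
  set b : ℝ := a / (1 + a) with hb
  have hb0 : 0 ≤ b := by positivity
  have hb1 : b ≤ 1 / 2 := by
    rw [hb, div_le_iff₀ (by linarith)]; linarith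
  set w : ι → ℝ := b • (1 - fun i => s ^ k i) with hw
  have hwn : ‖Φ w‖ ≤ 1 := by
    rw [hw, map_smul, map_sub, norm_smul, Real.norm_eq_abs, abs_of_nonneg hb0]
    have := norm_sub_le (Φ 1) (Φ fun i => s ^ k i)
    have := hs s hs0 hs1
    nlinarith [norm_nonneg (Φ 1 - Φ fun i => s ^ k i)]
  have hwi : ∀ i, 0 ≤ w i ∧ w i ≤ 1 / 2 := by
    intro i
    have : s ^ k i ≤ 1 := pow_le_one₀ hs0 hs1
    have : 0 ≤ s ^ k i := by positivity
    simp only [hw, Pi.smul_apply, Pi.sub_apply, Pi.one_apply, smul_eq_mul]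
    constructor <;> nlinarith
  have hwN : ‖Φ (w ^ N)‖ ≤ 1 - 1 / 2 ^ (N + 1) := by
    have e : w ^ N = b ^ N • (fun i => (1 - s ^ k i) ^ N) := by
      ext i; simp [hw, mul_pow]
    rw [e, map_smul, norm_smul, norm_pow, Real.norm_eq_abs, abs_of_nonneg hb0]
    have h2 := hN s hs0 hs1
    calc b ^ N * ‖Φ fun i => (1 - s ^ k i) ^ N‖ ≤ (1 / 2) ^ N * (2 ^ N - 1 / 2) := by gcongr
      _ = 1 - 1 / 2 ^ (N + 1) := by
        rw [one_div_pow, pow_succ]; field_simp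
  set g : ι → ℝ := fun i => 1 / (1 - w i ^ N) with hg
  have hpos : ∀ i, 0 < 1 - w i ^ N := by
    intro i
    have := pow_lt_one₀ (hwi i).1 (by linarith [(hwi i).2] : w i < 1) (by omega : N ≠ 0)
    linarith
  have hgn : ‖Φ g‖ ≤ 2 ^ (N + 1) := by
    have := phi_real_inv Φ h1 g (w ^ N) (fun i => by
      have := hpos i
      simp only [hg, Pi.pow_apply]; field_simp) _ hwN (by
        have : (0:ℝ) < 1 / 2 ^ (N + 1) := by positivity
        linarith)
    simpa using this
  have e : (fun i => 1 / (1 + a * s ^ k i)) = (1 / (1 + a)) • ((∑ j ∈ Finset.range N, w ^ j) * g) := by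
    ext i
    have h3 := geom_sum_mul_neg (w i) N
    have h4 : (1 + a) * (1 - w i) = 1 + a * s ^ k i := by
      simp only [hw, hb, Pi.smul_apply, Pi.sub_apply, Pi.one_apply, smul_eq_mul]
      field_simp
      ring
    have h5 := hpos i
    have h6 : 0 < 1 - w i := by linarith [(hwi i).2]
    simp only [Pi.smul_apply, Pi.mul_apply, Finset.sum_apply, Pi.pow_apply, smul_eq_mul, hg]
    rw [← h4, ← h3]
    have h7 : (∑ j ∈ Finset.range N, w i ^ j) ≠ 0 := by
      intro h; rw [h] at h3; simp at h3; linarith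
    field_simp
  rw [e, map_smul, map_mul, norm_smul]
  have h8 : ‖1 / (1 + a)‖ ≤ 1 := by
    rw [Real.norm_eq_abs, abs_of_nonneg (by positivity), div_le_one (by linarith)]; linarith
  calc _ ≤ 1 * ((N : ℝ) * 2 ^ (N + 1)) := by
        refine mul_le_mul h8 ?_ (norm_nonneg _) zero_le_one
        refine (norm_mul_le _ _).trans ?_
        exact mul_le_mul (phi_geom Φ h1 w hwn N) hgn (norm_nonneg _) (by positivity)
    _ = _ := one_mul _

variable [Fintype ι] [CompleteSpace 𝔅]

omit [Fintype ι] [CompleteSpace 𝔅] in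
include hs in
lemma phi_exp (h : ℝ) (hh : 0 ≤ h) : ‖Φ (fun i => Real.exp (-h * k i))‖ ≤ 1 := by
  have := hs (Real.exp (-h)) (Real.exp_pos _).le (by simpa using hh)
  convert this using 4 with i
  rw [← Real.exp_nat_mul]; ring_nf

include hs in
lemma S3int (h : ℝ) (hh : 0 ≤ h) (lam : ℂ) (hlam : 0 < lam.re) (t : ℝ) (ht : 0 ≤ t) :
    nuM Φ (fun i => (1 - Complex.exp (-(lam + h * k i) * t)) / (lam + h * k i)) ≤ 2 * t := by
  have hne : ∀ i, lam + h * k i ≠ 0 := by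
    intro i h0
    have := congrArg Complex.re h0
    simp at this
    have : 0 ≤ h * k i := by positivity
    linarith
  have e : (fun i => (1 - Complex.exp (-(lam + h * k i) * t)) / (lam + h * k i))
      = fun i => ∫ s, Complex.exp (-(lam + h * k i) * s) ∂(MeasureTheory.volume.restrict (Ioc 0 t)) := by
    ext i
    rw [← intervalIntegral.integral_of_le ht, integral_exp_mul_complex (neg_ne_zero.2 (hne i))]
    have := hne i
    simp only [Complex.ofReal_zero, mul_zero, Complex.exp_zero]
    rw [div_neg, ← neg_div, neg_sub]
  rw [e]
  have hb : ∀ s ∈ Ioc 0 t, nuM Φ (fun i => Complex.exp (-(lam + h * k i) * s)) ≤ 2 := by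
    intro s hs'
    have e2 : (fun i => Complex.exp (-(lam + h * k i) * s)) = fun i =>
        Complex.exp (-lam * s) * ((Real.exp (-(h * s) * k i) : ℝ) : ℂ) := by
      ext i; push_cast; rw [← Complex.exp_add]; ring_nf
    rw [e2]
    refine (nuM_const_mul Φ _ _).trans ?_
    rw [nuM_ofReal Φ (fun i => Real.exp (-(h * s) * k i))]
    have h3 := phi_exp Φ k hs (h * s) (mul_nonneg hh hs'.1.le)
    have h4 : ‖Complex.exp (-lam * s)‖ ≤ 1 := by
      rw [Complex.norm_exp]; simp
      nlinarith [hs'.1]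
    nlinarith [norm_nonneg (Complex.exp (-lam * s)), norm_nonneg (Φ (fun i => Real.exp (-(h * s) * k i)))]
  refine (nuM_integral Φ _ (fun (s : ℝ) i => Complex.exp (-(lam + h * k i) * s)) (fun i => ?_) (fun _ => 2) ?_ ?_).trans ?_
  · exact (Continuous.integrableOn_Icc (by fun_prop)).mono_set Ioc_subset_Icc_self
  · simp
  · exact (MeasureTheory.ae_restrict_iff' measurableSet_Ioc).2 (Filter.Eventually.of_forall hb)
  · simp [ht, mul_comm]

include hN1 hs hN in
lemma S3a (h : ℝ) (hh : 0 ≤ h) (lam : ℂ) (hlam : 0 < lam.re) :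
    nuM Φ (fun i => 1 / (lam + h * k i)) ≤ 16 * (N * 2 ^ (N + 1)) / ‖lam‖ := by
  have h1 := phi_one Φ k hs
  have hne : ∀ i, lam + h * k i ≠ 0 := by
    intro i h0
    have := congrArg Complex.re h0
    simp at this
    have : 0 ≤ h * k i := by positivity
    linarith
  have hlne : 0 < ‖lam‖ := norm_pos_iff.2 (fun h => by simp [h] at hlam)
  have hnorm := Complex.norm_le_abs_re_add_abs_im lam
  rw [abs_of_pos hlam] at hnorm
  have hCN : (1:ℝ) ≤ N * 2 ^ (N + 1) := by
    have : (1:ℝ) ≤ N := by exact_mod_cast hN1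
    have : (1:ℝ) ≤ 2 ^ (N + 1) := one_le_pow₀ (by norm_num)
    nlinarith
  set C : ℝ := N * 2 ^ (N + 1)
  by_cases hc : lam.re ≤ |lam.im|
  · have him : 0 < |lam.im| := by linarith
    set t : ℝ := π / |lam.im| with ht
    have htp : 0 < t := by positivity
    have hexp : ∀ i, Complex.exp (-(lam + h * k i) * t)
        = - ((Real.exp (-lam.re * t) * (Real.exp (-(h * t))) ^ k i : ℝ) : ℂ) := by
      intro i
      have e3 : Complex.exp (-(lam.im * Complex.I) * t) = -1 := by
        rcases abs_cases lam.im with ⟨h5, h6⟩ | ⟨h5, h6⟩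
        · have : (-(lam.im * Complex.I) * t : ℂ) = -(π * Complex.I) := by
            have h7 : lam.im * t = π := by
              rw [ht, h5]; rw [h5] at him; rw [mul_div_assoc', mul_div_cancel_left₀ _ him.ne']
            rw [← h7]; push_cast; ring
          rw [this, Complex.exp_neg, Complex.exp_pi_mul_I]; norm_num
        · have : (-(lam.im * Complex.I) * t : ℂ) = (π * Complex.I) := by
            have h7 : -lam.im * t = π := by
              rw [ht, h5]; rw [h5] at him; rw [mul_div_assoc', mul_div_cancel_left₀ _ him.ne']
            rw [← h7]; push_cast; ring
          rw [this, Complex.exp_pi_mul_I]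
      have e4 : (-(lam + h * k i) * t : ℂ) = -(lam.im * Complex.I) * t + (-lam.re * t) + k i * (-(h * t)) := by
        conv_lhs => rw [← Complex.re_add_im lam]
        ring
      rw [e4, Complex.exp_add, Complex.exp_add, e3, ← Real.exp_nat_mul]
      push_cast; ring
    have e : (fun i => 1 / (lam + h * k i)) = fun i =>
        ((1 / (1 + Real.exp (-lam.re * t) * (Real.exp (-(h * t))) ^ k i) : ℝ) : ℂ) *
        ((1 - Complex.exp (-(lam + h * k i) * t)) / (lam + h * k i)) := by
      ext i
      rw [hexp i]
      have : (1 + Real.exp (-lam.re * t) * (Real.exp (-(h * t))) ^ k i : ℂ) ≠ 0 := by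
        have : 0 < (1 + Real.exp (-lam.re * t) * (Real.exp (-(h * t))) ^ k i : ℝ) := by positivity
        exact_mod_cast this.ne'
      have h7 := hne i
      have h8 : ∀ a b : ℂ, 1 + a ≠ 0 → b ≠ 0 → 1 / b = 1 / (1 + a) * ((1 - -a) / b) := by
        intro a b ha hb; rw [sub_neg_eq_add]; field_simp
      have h9 := h8 _ _ this h7
      push_cast at h9 ⊢
      exact h9
    rw [e]
    refine (nuM_mul Φ _ _).trans ?_
    rw [nuM_ofReal Φ (fun i => 1 / (1 + Real.exp (-lam.re * t) * (Real.exp (-(h * t))) ^ k i))]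
    have f1 := S2 Φ k N hN1 hs hN (Real.exp (-lam.re * t)) (Real.exp (-(h * t))) (Real.exp_pos _).le
      (by rw [Real.exp_le_one_iff]; nlinarith) (Real.exp_pos _).le
      (by rw [Real.exp_le_one_iff]; nlinarith)
    have f2 := S3int Φ k hs h hh lam hlam t htp.le
    calc _ ≤ C * (2 * t) := mul_le_mul f1 f2 (nuM_nonneg _ _) (by linarith)
      _ ≤ 16 * C / ‖lam‖ := by
        rw [ht, le_div_iff₀ hlne]
        have : 2 * (π / |lam.im|) * ‖lam‖ ≤ 16 := by
          rw [mul_div_assoc', div_mul_eq_mul_div, div_le_iff₀ him]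
          nlinarith [Real.pi_lt_four, Real.pi_pos]
        nlinarith
  · push Not at hc
    set t : ℝ := 1 / lam.re with ht
    have htp : 0 < t := by positivity
    have f2 := S3int Φ k hs h hh lam hlam t htp.le
    have e2 : (fun i => Complex.exp (-(lam + h * k i) * t)) = fun i =>
        Complex.exp (-lam * t) * ((Real.exp (-(h * t) * k i) : ℝ) : ℂ) := by
      ext i; push_cast; rw [← Complex.exp_add]; ring_nf
    have hv : nuM Φ (fun i => Complex.exp (-(lam + h * k i) * t)) ≤ 3 / 4 := by
      rw [e2]
      refine (nuM_const_mul Φ _ _).trans ?_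
      rw [nuM_ofReal Φ (fun i => Real.exp (-(h * t) * k i))]
      have h3 := phi_exp Φ k hs (h * t) (by positivity)
      have h4 : ‖Complex.exp (-lam * t)‖ ≤ 3 / 8 := by
        rw [Complex.norm_exp]
        have : (-lam * t).re = -1 := by
          simp [ht]; field_simp
        rw [this, Real.exp_neg]
        have := Real.exp_one_gt_d9
        rw [inv_le_comm₀ (by positivity) (by norm_num)]
        linarith
      nlinarith [norm_nonneg (Complex.exp (-lam * t)), norm_nonneg (Φ (fun i => Real.exp (-(h * t) * k i)))]
    have hnex : ∀ i, 1 - Complex.exp (-(lam + h * k i) * t) ≠ 0 := by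
      intro i h0
      have h9 : ‖Complex.exp (-(lam + h * k i) * t)‖ = 1 := by
        rw [sub_eq_zero] at h0; rw [← h0]; simp
      rw [Complex.norm_exp] at h9
      simp at h9
      have : 0 ≤ h * k i := by positivity
      rcases h9 with h9 | h9
      · linarith
      · linarith
    have f3 := nuM_inv Φ h1 (fun i => 1 / (1 - Complex.exp (-(lam + h * k i) * t)))
      (fun i => Complex.exp (-(lam + h * k i) * t)) (fun i => by
        exact one_div_mul_cancel (hnex i)) _ hv (by norm_num)
    have e : (fun i => 1 / (lam + h * k i)) = fun i =>
        (1 / (1 - Complex.exp (-(lam + h * k i) * t))) *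
        ((1 - Complex.exp (-(lam + h * k i) * t)) / (lam + h * k i)) := by
      ext i
      have h8 : ∀ a b : ℂ, a ≠ 0 → b ≠ 0 → 1 / b = 1 / a * (a / b) := by
        intro a b ha hb; field_simp
      exact h8 _ _ (hnex i) (hne i)
    rw [e]
    refine (nuM_mul Φ _ _).trans ?_
    calc _ ≤ 4 * (2 * t) := mul_le_mul (f3.trans (by norm_num)) f2 (nuM_nonneg _ _) (by norm_num)
      _ ≤ 16 * C / ‖lam‖ := by
        rw [ht, le_div_iff₀ hlne]
        have : 2 * (1 / lam.re) * ‖lam‖ ≤ 4 := by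
          rw [mul_div_assoc', div_mul_eq_mul_div, div_le_iff₀ hlam]
          nlinarith
        nlinarith
end S2

section FourierPart
open MeasureTheory Filter Topology FourierTransform

lemma integrableOn_sq_exp (a : ℝ) (ha : 0 < a) :
    IntegrableOn (fun x : ℝ => x ^ 2 * Real.exp (-a * x)) (Ioi 0) := by
  have := integrableOn_rpow_mul_exp_neg_mul_rpow (p := 1) (s := 2) (b := a) (by norm_num)
    (by norm_num) ha
  simpa using this

lemma integral_sq_cexp (b : ℂ) (hb : 0 < b.re) :
    ∫ x in Ioi (0:ℝ), (x : ℂ) ^ 2 * Complex.exp (-b * x) = 2 / b ^ 3 := by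
  have hb0 : b ≠ 0 := by rintro rfl; simp at hb
  have hd : ∀ x ∈ Ici (0:ℝ), HasDerivAt (fun x : ℝ => -(Complex.exp (-b * x)
      * ((x : ℂ) ^ 2 / b + 2 * x / b ^ 2 + 2 / b ^ 3)))
      ((x : ℂ) ^ 2 * Complex.exp (-b * x)) x := by
    intro x _
    have hx : HasDerivAt (fun x : ℝ => (x : ℂ)) 1 x := Complex.ofRealCLM.hasDerivAt
    have h1 : HasDerivAt (fun x : ℝ => Complex.exp (-b * x)) (Complex.exp (-b * x) * (-b * 1)) x :=
      (hx.const_mul (-b)).cexp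
    have h2 := (((hx.pow 2).div_const b).add ((hx.const_mul 2).div_const (b ^ 2))).add_const
      (2 / b ^ 3)
    have h3 := (h1.mul h2).neg
    refine h3.congr_deriv ?_
    simp only [Pi.add_apply, Pi.pow_apply]
    field_simp
    push_cast
    ring
  have hintg : IntegrableOn (fun x : ℝ => (x : ℂ) ^ 2 * Complex.exp (-b * x)) (Ioi 0) := by
    refine Integrable.mono' (integrableOn_sq_exp b.re hb) ?_ ?_
    · exact (Continuous.aestronglyMeasurable (by fun_prop))
    · refine Filter.Eventually.of_forall fun x => ?_
      rw [norm_mul, Complex.norm_exp]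
      simp
  have ht : Tendsto (fun x : ℝ => -(Complex.exp (-b * x)
      * ((x : ℂ) ^ 2 / b + 2 * x / b ^ 2 + 2 / b ^ 3))) atTop (𝓝 0) := by
    have key : ∀ n : ℕ, Tendsto (fun x : ℝ => Complex.exp (-b * x) * (x : ℂ) ^ n) atTop (𝓝 0) := by
      intro n
      rw [tendsto_zero_iff_norm_tendsto_zero]
      have := tendsto_rpow_mul_exp_neg_mul_atTop_nhds_zero n b.re hb
      refine this.congr' ?_
      filter_upwards [eventually_ge_atTop 0] with x hx
      rw [norm_mul, Complex.norm_exp]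
      simp [abs_of_nonneg hx, mul_comm]
    have h := ((((key 2).mul_const (1 / b)).add ((key 1).mul_const (2 / b ^ 2))).add
      ((key 0).mul_const (2 / b ^ 3))).neg
    simp only [zero_mul, add_zero, neg_zero] at h
    refine h.congr fun x => ?_
    ring
  rw [integral_Ioi_of_hasDerivAt_of_tendsto' hd hintg ht]
  simp

lemma fourier_key (a : ℝ) (ha : 0 < a) :
    ∫ ξ : ℝ, Complex.exp (2 * π * ξ * Complex.I) * (2 / (a + 2 * π * ξ * Complex.I) ^ 3)
      = Complex.exp (-a) := by
  set f : ℝ → ℂ := fun x => (((max x 0) ^ 2 * Real.exp (-a * x) : ℝ) : ℂ) with hf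
  have hcont : Continuous f := by rw [hf]; fun_prop
  have hfi : f = (Ioi (0:ℝ)).indicator (fun x => ((x ^ 2 * Real.exp (-a * x) : ℝ) : ℂ)) := by
    ext x
    by_cases hx : 0 < x
    · rw [indicator_of_mem (mem_Ioi.2 hx)]
      simp [hf, max_eq_left hx.le]
    · rw [indicator_of_notMem (by simpa using hx)]
      simp [hf, max_eq_right (not_lt.1 hx)]
  have hintg : Integrable f := by
    rw [hfi, integrable_indicator_iff measurableSet_Ioi]
    exact (integrableOn_sq_exp a ha).ofReal
  have hF : 𝓕 f = fun ξ : ℝ => 2 / (a + 2 * π * ξ * Complex.I) ^ 3 := by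
    ext ξ
    rw [Real.fourier_real_eq_integral_exp_smul]
    have hb : 0 < ((a : ℂ) + 2 * π * ξ * Complex.I).re := by simpa using ha
    rw [← integral_sq_cexp _ hb, ← integral_indicator measurableSet_Ioi]
    congr 1
    ext x
    rw [hfi]
    by_cases hx : 0 < x
    · rw [indicator_of_mem (mem_Ioi.2 hx), indicator_of_mem (mem_Ioi.2 hx)]
      rw [smul_eq_mul]
      push_cast
      rw [mul_left_comm, ← Complex.exp_add]
      ring_nf
    · rw [indicator_of_notMem (by simpa using hx), indicator_of_notMem (by simpa using hx)]
      simp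
  have hFi : Integrable (𝓕 f) := by
    rw [hF]
    have h1 : Integrable fun x : ℝ => (2 / (a ^ 3)) * (1 + ((2 * π / a) * x) ^ 2)⁻¹ :=
      ((integrable_inv_one_add_sq.comp_mul_left' (by positivity : 2 * π / a ≠ 0))).const_mul _
    have hne : ∀ ξ : ℝ, (a + 2 * π * ξ * Complex.I : ℂ) ≠ 0 := by
      intro ξ h
      have := congrArg Complex.re h
      simp at this
      linarith
    refine h1.mono' ?_ (Eventually.of_forall fun ξ => ?_)
    · refine (Continuous.aestronglyMeasurable ?_)
      refine Continuous.div (by fun_prop) (by fun_prop) fun ξ => pow_ne_zero _ (hne ξ)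
    · rw [norm_div, norm_pow]
      have h2 : ‖(a + 2 * π * ξ * Complex.I : ℂ)‖ ^ 2 = a ^ 2 + (2 * π * ξ) ^ 2 := by
        rw [← Complex.normSq_eq_norm_sq, Complex.normSq_apply]; simp; ring
      have h3 : a ≤ ‖(a + 2 * π * ξ * Complex.I : ℂ)‖ := by
        have := Complex.abs_re_le_norm (a + 2 * π * ξ * Complex.I : ℂ)
        simp at this
        exact (le_abs_self _).trans this
      have h4 : a * (a ^ 2 + (2 * π * ξ) ^ 2) ≤ ‖(a + 2 * π * ξ * Complex.I : ℂ)‖ ^ 3 := by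
        have h6 : ∀ n : ℝ, n ^ 3 = n ^ 2 * n := fun n => pow_succ n 2
        rw [h6, h2]; nlinarith [sq_nonneg (2 * π * ξ)]
      have h5 : 2 / a ^ 3 * (1 + (2 * π / a * ξ) ^ 2)⁻¹ = 2 / (a * (a ^ 2 + (2 * π * ξ) ^ 2)) := by
        field_simp
      rw [h5]
      simp only [Complex.norm_ofNat]
      gcongr
  have h := hintg.fourierInv_fourier_eq hFi (v := 1) hcont.continuousAt
  rw [Real.fourierInv_eq', hF] at h
  have e : f 1 = Complex.exp (-a) := by simp [hf]
  rw [← e, ← h]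
  congr 1
  ext ξ
  simp
end FourierPart

section S3b
variable {ι 𝔅 : Type*} [NormedRing 𝔅] [NormedAlgebra ℝ 𝔅] (Φ : (ι → ℝ) →ₐ[ℝ] 𝔅)
variable (k : ι → ℕ) [Fintype ι] [CompleteSpace 𝔅] (h1 : ‖Φ 1‖ ≤ 1)
open MeasureTheory

include h1 in
lemma S3b (h : ℝ) (hh : 0 ≤ h) (B : ℝ) (hB0 : 0 ≤ B)
    (hB : ∀ lam : ℂ, 0 < lam.re → nuM Φ (fun i => 1 / (lam + h * k i)) ≤ B / ‖lam‖) :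
    ‖Φ (fun i => h * k i * Real.exp (-(h * k i)))‖ ≤ 4 * Real.exp 1 * (1 + 2 * B) * B ^ 2 * π := by
  rw [← nuM_ofReal]
  set lam : ℝ → ℂ := fun ξ => 1 + 2 * π * ξ * Complex.I with hlam
  have hre : ∀ ξ, 0 < (lam ξ).re := by intro ξ; simp [hlam]
  have hne : ∀ ξ i, lam ξ + h * k i ≠ 0 := by
    intro ξ i h0
    have := congrArg Complex.re h0
    simp [hlam] at this
    have : 0 ≤ h * k i := by positivity
    linarith
  set G : ℝ → ι → ℂ := fun ξ i => (Real.exp 1 * 2 * Complex.exp (2 * π * ξ * Complex.I)) *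
    ((1 + (-(lam ξ)) * (1 / (lam ξ + h * k i))) *
      ((1 / (lam ξ + h * k i)) * (1 / (lam ξ + h * k i)))) with hG
  have hGe : ∀ i, (fun ξ => G ξ i) = fun ξ : ℝ => ((Real.exp 1 * (h * k i) : ℝ) : ℂ) *
      (Complex.exp (2 * π * ξ * Complex.I) *
        (2 / (((1 + h * k i : ℝ) : ℂ) + 2 * π * ξ * Complex.I) ^ 3)) := by
    intro i
    ext ξ
    have h0 := hne ξ i
    have e : ((1 + h * k i : ℝ) : ℂ) + 2 * π * ξ * Complex.I = lam ξ + h * k i := by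
      simp only [hlam]; push_cast; ring
    rw [e]
    simp only [hG]
    push_cast
    field_simp
    ring
  have hpos : ∀ i, 0 < 1 + h * k i := by
    intro i
    have : 0 ≤ h * k i := by positivity
    linarith
  have hGi : ∀ i, Integrable (fun ξ => G ξ i) := by
    intro i
    rw [hGe i]
    refine Integrable.const_mul ?_ _
    by_contra hc
    have h3 := integral_undef hc
    rw [fourier_key _ (hpos i)] at h3
    exact Complex.exp_ne_zero _ h3
  have hval : (fun i => ((h * k i * Real.exp (-(h * k i)) : ℝ) : ℂ)) = fun i => ∫ ξ, G ξ i := by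
    ext i
    rw [hGe i, integral_const_mul, fourier_key _ (hpos i)]
    push_cast
    have : Complex.exp (-(h * k i)) = Complex.exp 1 * Complex.exp (-(1 + h * k i)) := by
      rw [← Complex.exp_add]; ring_nf
    rw [this]
    ring
  rw [hval]
  refine (nuM_integral Φ volume G hGi
    (fun ξ => (4 * Real.exp 1 * (1 + 2 * B) * B ^ 2) * (1 + ξ ^ 2)⁻¹)
    (integrable_inv_one_add_sq.const_mul _) (Filter.Eventually.of_forall fun ξ => ?_)).trans ?_
  · have hn2 : ‖lam ξ‖ ^ 2 = 1 + (2 * π * ξ) ^ 2 := by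
      rw [← Complex.normSq_eq_norm_sq, Complex.normSq_apply]; simp [hlam]; ring
    have hnp : 0 < ‖lam ξ‖ := norm_pos_iff.2 (fun h0 => by have := hre ξ; simp [h0] at this)
    have b1 := hB (lam ξ) (hre ξ)
    have b2 : nuM Φ (fun i => 1 + (-(lam ξ)) * (1 / (lam ξ + h * k i))) ≤ 1 + 2 * B := by
      refine (nuM_add Φ (fun _ => 1) _).trans (add_le_add (nuM_one Φ h1) ?_)
      refine (nuM_const_mul Φ _ _).trans ?_
      rw [norm_neg]
      calc _ ≤ 2 * ‖lam ξ‖ * (B / ‖lam ξ‖) := by gcongr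
        _ = 2 * B := by field_simp
    have b3 : nuM Φ (fun i => (1 / (lam ξ + h * k i)) * (1 / (lam ξ + h * k i)))
        ≤ (B / ‖lam ξ‖) * (B / ‖lam ξ‖) :=
      (nuM_mul Φ _ _).trans (mul_le_mul b1 b1 (nuM_nonneg _ _) (by positivity))
    refine (nuM_const_mul Φ _ _).trans ?_
    have b4 : ‖(Real.exp 1 * 2 * Complex.exp (2 * π * ξ * Complex.I) : ℂ)‖ = Real.exp 1 * 2 := by
      rw [norm_mul, norm_mul, Complex.norm_exp, Complex.norm_real]
      simp
    rw [b4]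
    have b5 : (B / ‖lam ξ‖) * (B / ‖lam ξ‖) ≤ B ^ 2 * (1 + ξ ^ 2)⁻¹ := by
      have : (B / ‖lam ξ‖) * (B / ‖lam ξ‖) = B ^ 2 * (‖lam ξ‖ ^ 2)⁻¹ := by field_simp
      rw [this, hn2]
      refine mul_le_mul_of_nonneg_left (inv_anti₀ (by positivity) ?_) (by positivity)
      have := Real.pi_gt_three
      have : 1 ≤ 2 * π := by linarith
      have : 1 ≤ (2 * π) ^ 2 := one_le_pow₀ this
      rw [mul_pow]; nlinarith [sq_nonneg ξ]
    calc _ ≤ 2 * (Real.exp 1 * 2) * ((1 + 2 * B) * (B ^ 2 * (1 + ξ ^ 2)⁻¹)) := by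
          gcongr
          refine (nuM_mul Φ _ _).trans ?_
          exact mul_le_mul b2 (b3.trans b5) (nuM_nonneg _ _) (by positivity)
      _ = _ := by ring
  · rw [integral_const_mul, integral_univ_inv_one_add_sq]

lemma S4 (C : ℝ) (hC0 : 0 < C)
    (hE : ∀ h : ℝ, 0 ≤ h → ‖Φ (fun i => Real.exp (-(h * k i)))‖ ≤ 1)
    (hC : ∀ h : ℝ, 0 ≤ h → ‖Φ (fun i => h * k i * Real.exp (-(h * k i)))‖ ≤ C) (t : ℝ)
    (ht : 0 < t) (j : ℕ) :
    ‖Φ (fun i => (k i : ℝ) ^ j * Real.exp (-(t * k i)))‖ ≤ (C * j / t) ^ j := by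
  rcases Nat.eq_zero_or_pos j with rfl | hj
  · simpa using hE t ht.le
  · have hj' : (0:ℝ) < j := by exact_mod_cast hj
    have e : (fun i => (k i : ℝ) ^ j * Real.exp (-(t * k i))) =
        ((j / t) • (fun i => (t / j) * k i * Real.exp (-((t / j) * k i)))) ^ j := by
      ext i
      simp only [Pi.pow_apply, Pi.smul_apply, smul_eq_mul]
      have : j / t * (t / j * k i * Real.exp (-(t / j * k i))) = k i * Real.exp (-(t / j * k i)) := by
        field_simp
      rw [this, mul_pow, ← Real.exp_nat_mul]
      congr 2
      field_simp
    rw [e, map_pow]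
    refine (norm_pow_le' _ hj).trans ?_
    refine pow_le_pow_left₀ (norm_nonneg _) ?_ _
    rw [map_smul, norm_smul, Real.norm_eq_abs, abs_of_pos (by positivity)]
    calc _ ≤ j / t * C := by gcongr; exact hC _ (by positivity)
      _ = _ := by ring

lemma S5 (C : ℝ) (hC0 : 0 < C)
    (hE : ∀ h : ℝ, 0 ≤ h → ‖Φ (fun i => Real.exp (-(h * k i)))‖ ≤ 1)
    (hC : ∀ h : ℝ, 0 ≤ h → ‖Φ (fun i => h * k i * Real.exp (-(h * k i)))‖ ≤ C)
    (θ : ℝ) (hθ0 : 0 ≤ θ) (hθ : θ ≤ 2 * π) :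
    nuM Φ (fun i => Complex.exp (θ * Complex.I * k i) *
      ((Real.exp (-((4 * π * Real.exp 1 * C) * k i)) : ℝ) : ℂ)) ≤ 4 := by
  set t : ℝ := 4 * π * Real.exp 1 * C with ht
  have htp : 0 < t := by positivity
  refine nuM_hasSum Φ (fun j i => ((θ * Complex.I) ^ j / (j.factorial : ℂ)) *
    (((k i : ℝ) ^ j * Real.exp (-(t * k i)) : ℝ) : ℂ)) _ (fun i => ?_)
    (fun j => 2 * (1 / 2 : ℝ) ^ j) 4 (fun j => ?_) ?_
  · have h := NormedSpace.expSeries_div_hasSum_exp ((θ * Complex.I * k i : ℂ))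
    rw [← Complex.exp_eq_exp_ℂ] at h
    have h2 := h.mul_right ((Real.exp (-(t * k i)) : ℝ) : ℂ)
    have e : (fun j : ℕ => ((θ * Complex.I) ^ j / (j.factorial : ℂ)) *
        (((k i : ℝ) ^ j * Real.exp (-(t * k i)) : ℝ) : ℂ)) = fun j : ℕ =>
        (θ * Complex.I * k i : ℂ) ^ j / j.factorial * ((Real.exp (-(t * k i)) : ℝ) : ℂ) := by
      ext j
      push_cast
      rw [mul_pow (θ * Complex.I) (k i : ℂ)]
      ring
    simp only [e]
    exact h2
  · refine (nuM_const_mul Φ _ _).trans ?_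
    rw [nuM_ofReal Φ (fun i => (k i : ℝ) ^ j * Real.exp (-(t * k i)))]
    have h4 := S4 Φ k C hC0 hE hC t htp j
    have h5 : ‖((θ * Complex.I) ^ j / (j.factorial : ℂ))‖ = θ ^ j / j.factorial := by
      simp [abs_of_nonneg hθ0]
    rw [h5]
    have h6 := Real.pow_div_factorial_le_exp (x := (j : ℝ)) (by positivity) j
    have h7 : Real.exp (j : ℝ) = Real.exp 1 ^ j := by rw [← Real.exp_nat_mul, mul_one]
    rw [h7] at h6
    calc _ ≤ 2 * (θ ^ j / j.factorial) * (C * j / t) ^ j := by gcongr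
      _ = 2 * (θ * C / t) ^ j * ((j:ℝ) ^ j / j.factorial) := by
        rw [div_pow, div_pow, mul_pow, mul_pow]; ring
      _ ≤ 2 * (θ * C / t) ^ j * Real.exp 1 ^ j := by gcongr
      _ = 2 * (θ * C / t * Real.exp 1) ^ j := by rw [mul_pow (θ * C / t)]; ring
      _ ≤ 2 * (1 / 2) ^ j := by
        gcongr
        rw [ht]
        have : θ * C / (4 * π * Real.exp 1 * C) * Real.exp 1 = θ / (4 * π) := by field_simp
        rw [this, div_le_iff₀ (by positivity)]
        linarith
  · have := hasSum_geometric_two.mul_left 2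
    have e : (2:ℝ) * 2 = 4 := by norm_num
    rw [e] at this
    exact this

lemma S6 (C : ℝ) (hC0 : 0 < C)
    (hE : ∀ h : ℝ, 0 ≤ h → ‖Φ (fun i => Real.exp (-(h * k i)))‖ ≤ 1)
    (hC : ∀ h : ℝ, 0 ≤ h → ‖Φ (fun i => h * k i * Real.exp (-(h * k i)))‖ ≤ C) :
    ‖Φ (fun i => if k i = 1 then 1 else 0)‖ ≤ 8 * Real.exp (4 * π * Real.exp 1 * C) := by
  set t : ℝ := 4 * π * Real.exp 1 * C with ht
  rw [← nuM_ofReal]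
  set G : ℝ → ι → ℂ := fun θ i => ((Real.exp t / (2 * π) : ℝ) * Complex.exp (-(θ * Complex.I))) *
    (Complex.exp (θ * Complex.I * k i) * ((Real.exp (-(t * k i)) : ℝ) : ℂ)) with hG
  have hval : (fun i => (((if k i = 1 then 1 else 0 : ℝ)) : ℂ)) =
      fun i => ∫ θ, G θ i ∂(volume.restrict (Ioc 0 (2 * π))) := by
    ext i
    have e : ∀ θ : ℝ, G θ i = ((Real.exp t / (2 * π) : ℝ) * ((Real.exp (-(t * k i)) : ℝ) : ℂ)) *
      Complex.exp ((((k i : ℂ) - 1) * Complex.I) * θ) := by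
      intro θ
      simp only [hG]
      have : Complex.exp ((((k i : ℂ) - 1) * Complex.I) * θ) =
          Complex.exp (-(θ * Complex.I)) * Complex.exp (θ * Complex.I * k i) := by
        rw [← Complex.exp_add]; ring_nf
      rw [this]; ring
    simp only [e]
    rw [integral_const_mul, ← intervalIntegral.integral_of_le (by positivity)]
    by_cases hk : k i = 1
    · have hpi : (π : ℂ) ≠ 0 := by exact_mod_cast Real.pi_ne_zero
      simp [hk]
      rw [Complex.exp_neg]
      have := Complex.exp_ne_zero t
      field_simp
    · have hne : ((k i : ℂ) - 1) * Complex.I ≠ 0 := by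
        refine mul_ne_zero ?_ Complex.I_ne_zero
        rw [sub_ne_zero]; exact_mod_cast hk
      rw [integral_exp_mul_complex hne]
      have : Complex.exp (((k i : ℂ) - 1) * Complex.I * ((2 * π : ℝ) : ℂ)) = 1 := by
        rw [Complex.exp_eq_one_iff]
        refine ⟨(k i : ℤ) - 1, ?_⟩
        push_cast; ring
      rw [this]
      simp [hk]
  rw [hval]
  refine (nuM_integral Φ _ G (fun i => ?_) (fun _ => 8 * Real.exp t / (2 * π)) (by simp) ?_).trans ?_
  · refine (Continuous.integrableOn_Icc ?_).mono_set Ioc_subset_Icc_self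
    simp only [hG]; fun_prop
  · refine (ae_restrict_iff' measurableSet_Ioc).2 (Filter.Eventually.of_forall fun θ hθ => ?_)
    refine (nuM_const_mul Φ _ _).trans ?_
    have h5 := S5 Φ k C hC0 hE hC θ hθ.1.le hθ.2
    rw [← ht] at h5
    have h6 : ‖((Real.exp t / (2 * π) : ℝ) * Complex.exp (-(θ * Complex.I)) : ℂ)‖ = Real.exp t / (2 * π) := by
      rw [norm_mul, Complex.norm_exp, Complex.norm_real, Real.norm_eq_abs, abs_of_pos (by positivity)]
      simp
    rw [h6]
    calc _ ≤ 2 * (Real.exp t / (2 * π)) * 4 := by gcongr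
      _ = _ := by ring
  · have := Real.pi_pos
    simp
    rw [max_eq_left (by positivity)]
    apply le_of_eq
    field_simp

end S3b


def multC (N : ℕ) : ℝ :=
  8 * Real.exp (4 * π * Real.exp 1 * (4 * Real.exp 1 * (1 + 2 * (16 * (N * 2 ^ (N + 1)))) *
    (16 * (N * 2 ^ (N + 1))) ^ 2 * π))

theorem multiplier_bound {ι 𝔅 : Type*} [NormedRing 𝔅] [NormedAlgebra ℝ 𝔅] [Fintype ι]
    [CompleteSpace 𝔅] (Φ : (ι → ℝ) →ₐ[ℝ] 𝔅) (k : ι → ℕ) (N : ℕ) (hN1 : 1 ≤ N)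
    (hs : ∀ s : ℝ, 0 ≤ s → s ≤ 1 → ‖Φ (fun i => s ^ k i)‖ ≤ 1)
    (hN : ∀ s : ℝ, 0 ≤ s → s ≤ 1 → ‖Φ (fun i => (1 - s ^ k i) ^ N)‖ ≤ 2 ^ N - 1 / 2) :
    ‖Φ (fun i => if k i = 1 then 1 else 0)‖ ≤ multC N := by
  have hNp : (0:ℝ) < N := by exact_mod_cast hN1
  refine S6 Φ k _ (by positivity) (fun h hh => ?_) (fun h hh => ?_)
  · have := phi_exp Φ k hs h hh
    simpa using this
  · exact S3b Φ k (phi_one Φ k hs) h hh _ (by positivity)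
      (fun lam hl => S3a Φ k N hN1 hs hN h hh lam hl)

def sg (b : Bool) : ℝ := if b then 1 else -1

lemma sg_sq (b : Bool) : sg b * sg b = 1 := by cases b <;> simp [sg]
lemma sg_abs (b : Bool) : |sg b| = 1 := by cases b <;> simp [sg]

def walsh {n : ℕ} (A : Finset (Fin n)) (ω : Fin n → Bool) : ℝ := ∏ i ∈ A, sg (ω i)

lemma walsh_orth {n : ℕ} (A B : Finset (Fin n)) :
    ∑ ω, walsh A ω * walsh B ω = if A = B then (2:ℝ) ^ n else 0 := by
  have e : ∀ ω : Fin n → Bool, walsh A ω * walsh B ω =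
      ∏ i, ((if i ∈ A then sg (ω i) else 1) * (if i ∈ B then sg (ω i) else 1)) := by
    intro ω
    rw [Finset.prod_mul_distrib]
    simp [walsh, Finset.prod_ite_mem]
  simp only [e]
  rw [← Fintype.prod_sum (fun (i : Fin n) (b : Bool) =>
    ((if i ∈ A then sg b else 1) * (if i ∈ B then sg b else 1)))]
  split_ifs with h
  · subst h
    have : ∀ i : Fin n, ∑ b : Bool, ((if i ∈ A then sg b else 1) * (if i ∈ A then sg b else 1)) = 2 := by
      intro i
      by_cases hi : i ∈ A <;> simp [hi, sg] <;> norm_num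
    rw [Finset.prod_congr rfl (fun i _ => this i)]; simp
  · obtain ⟨i, hi⟩ : ∃ i, ¬ (i ∈ A ↔ i ∈ B) := by
      by_contra hc; push Not at hc; exact h (Finset.ext hc)
    refine Finset.prod_eq_zero (Finset.mem_univ i) ?_
    by_cases hA : i ∈ A <;> by_cases hB : i ∈ B <;> simp_all [sg]

lemma walsh_kernel {n : ℕ} (S : Finset (Fin n)) (ω η : Fin n → Bool) :
    ∑ A ∈ S.powerset, walsh A ω * walsh A η = ∏ i ∈ S, (1 + sg (ω i) * sg (η i)) := by
  rw [Finset.prod_one_add]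
  refine Finset.sum_congr rfl fun A _ => ?_
  simp [walsh, Finset.prod_mul_distrib]

lemma walsh_dual {n : ℕ} (ω η : Fin n → Bool) :
    ∑ A, walsh A ω * walsh A η = if ω = η then (2:ℝ) ^ n else 0 := by
  have := walsh_kernel Finset.univ ω η
  rw [Finset.powerset_univ] at this
  rw [this]
  split_ifs with h
  · subst h
    simp only [sg_sq]; norm_num
  · obtain ⟨i, hi⟩ := Function.ne_iff.1 h
    refine Finset.prod_eq_zero (Finset.mem_univ i) ?_
    revert hi
    cases ω i <;> cases η i <;> simp [sg]

def wker {n : ℕ} (m : Finset (Fin n) → ℝ) (ω η : Fin n → Bool) : ℝ :=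
  (1 / 2 ^ n) * ∑ A, m A * (walsh A ω * walsh A η)

section ker
variable {Ω X : Type*} [Fintype Ω] [NormedAddCommGroup X] [NormedSpace ℝ X]

def kerOp (K : Ω → Ω → ℝ) : PiLp 2 (fun _ : Ω => X) →L[ℝ] PiLp 2 (fun _ : Ω => X) :=
  ((PiLp.continuousLinearEquiv 2 ℝ (fun _ : Ω => X)).symm : (Ω → X) →L[ℝ] PiLp 2 (fun _ : Ω => X)) ∘L
    (ContinuousLinearMap.pi fun ω => ∑ η, K ω η • (ContinuousLinearMap.proj η : (Ω → X) →L[ℝ] X)) ∘L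
    ((PiLp.continuousLinearEquiv 2 ℝ (fun _ : Ω => X)) : PiLp 2 (fun _ : Ω => X) →L[ℝ] (Ω → X))

lemma kerOp_apply (K : Ω → Ω → ℝ) (F : PiLp 2 (fun _ : Ω => X)) (ω : Ω) :
    (kerOp K F) ω = ∑ η, K ω η • F η := by
  simp [kerOp]

lemma kerOp_contr (K : Ω → Ω → ℝ) (h0 : ∀ ω η, 0 ≤ K ω η) (h1 : ∀ ω, ∑ η, K ω η = 1)
    (h2 : ∀ η, ∑ ω, K ω η = 1) : ‖(kerOp K : PiLp 2 (fun _ : Ω => X) →L[ℝ] PiLp 2 (fun _ : Ω => X))‖ ≤ 1 := by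
  refine ContinuousLinearMap.opNorm_le_bound _ zero_le_one fun F => ?_
  rw [one_mul]
  refine le_of_sq_le_sq ?_ (norm_nonneg _)
  rw [PiLp.norm_sq_eq_of_L2, PiLp.norm_sq_eq_of_L2]
  calc ∑ ω, ‖(kerOp K F) ω‖ ^ 2 ≤ ∑ ω, ∑ η, K ω η * ‖F η‖ ^ 2 := by
        refine Finset.sum_le_sum fun ω _ => ?_
        rw [kerOp_apply]
        refine le_trans ?_ (Real.pow_arith_mean_le_arith_mean_pow _ (K ω) (fun η => ‖F η‖)
          (fun η _ => h0 ω η) (h1 ω) (fun η _ => norm_nonneg _) 2)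
        gcongr
        refine (norm_sum_le _ _).trans (le_of_eq (Finset.sum_congr rfl fun η _ => ?_))
        rw [norm_smul, Real.norm_eq_abs, abs_of_nonneg (h0 ω η)]
    _ = ∑ η, ‖F η‖ ^ 2 := by
        rw [Finset.sum_comm]
        refine Finset.sum_congr rfl fun η _ => ?_
        rw [← Finset.sum_mul, h2, one_mul]
end ker

section Phi
variable (n : ℕ) (X : Type*) [NormedAddCommGroup X] [NormedSpace ℝ X]

abbrev ZZ := PiLp 2 (fun _ : Fin n → Bool => X)

def PhiLin : (Finset (Fin n) → ℝ) →ₗ[ℝ] (ZZ n X →L[ℝ] ZZ n X) where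
  toFun m := kerOp (wker m)
  map_add' m m' := by
    ext F ω
    simp only [ContinuousLinearMap.add_apply, PiLp.add_apply, kerOp_apply]
    rw [← Finset.sum_add_distrib]
    refine Finset.sum_congr rfl fun η _ => ?_
    rw [← add_smul]
    congr 1
    simp only [wker, Pi.add_apply, add_mul, Finset.sum_add_distrib, mul_add]
  map_smul' c m := by
    ext F ω
    simp only [ContinuousLinearMap.smul_apply, PiLp.smul_apply, kerOp_apply, RingHom.id_apply]
    rw [Finset.smul_sum]
    refine Finset.sum_congr rfl fun η _ => ?_
    rw [smul_smul]
    congr 1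
    simp only [wker, Pi.smul_apply, smul_eq_mul, mul_assoc, ← Finset.mul_sum]
    ring

lemma wker_one (ω η : Fin n → Bool) : wker (1 : Finset (Fin n) → ℝ) ω η = if ω = η then 1 else 0 := by
  simp only [wker, Pi.one_apply, one_mul, walsh_dual]
  split_ifs <;> simp

lemma wker_mul (m m' : Finset (Fin n) → ℝ) (ω ζ : Fin n → Bool) :
    wker (m * m') ω ζ = ∑ η, wker m ω η * wker m' η ζ := by
  have e : ∀ η, wker m ω η * wker m' η ζ = (1 / 2 ^ n) * ((1 / 2 ^ n) *
      ∑ A, ∑ B, (m A * walsh A ω * (m' B * walsh B ζ)) * (walsh A η * walsh B η)) := by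
    intro η
    simp only [wker]
    rw [mul_mul_mul_comm, Finset.sum_mul_sum, mul_assoc]
    congr 2
    refine Finset.sum_congr rfl fun A _ => Finset.sum_congr rfl fun B _ => ?_
    ring
  simp only [e]
  rw [← Finset.mul_sum, ← Finset.mul_sum, Finset.sum_comm]
  simp only [Finset.sum_comm (s := (Finset.univ : Finset (Fin n → Bool)))]
  simp only [← Finset.mul_sum, walsh_orth]
  simp only [wker, Pi.mul_apply, mul_ite, mul_zero, Finset.sum_ite_eq, Finset.mem_univ, if_true]
  congr 1
  rw [Finset.mul_sum]
  refine Finset.sum_congr rfl fun A _ => ?_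
  field_simp

def Phi : (Finset (Fin n) → ℝ) →ₐ[ℝ] (ZZ n X →L[ℝ] ZZ n X) :=
  AlgHom.ofLinearMap (PhiLin n X) (by
    ext F ω
    simp only [PhiLin, LinearMap.coe_mk, AddHom.coe_mk, kerOp_apply, wker_one, ContinuousLinearMap.one_apply]
    simp) (by
    intro m m'
    ext F ω
    simp only [PhiLin, LinearMap.coe_mk, AddHom.coe_mk, kerOp_apply, wker_mul, ContinuousLinearMap.mul_apply]
    simp only [Finset.smul_sum, Finset.sum_smul, smul_smul]
    rw [Finset.sum_comm])

lemma Phi_apply (m : Finset (Fin n) → ℝ) (F : ZZ n X) (ω) :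
    (Phi n X m F) ω = ∑ η, wker m ω η • F η := kerOp_apply _ _ _

def eS {n : ℕ} (S : Finset (Fin n)) : Finset (Fin n) → ℝ := fun A => if A ⊆ S then 1 else 0

lemma wker_eS (S : Finset (Fin n)) (ω η) : wker (eS S) ω η =
    (1 / 2 ^ n) * ∏ i ∈ S, (1 + sg (ω i) * sg (η i)) := by
  rw [← walsh_kernel]
  simp only [wker, eS, ite_mul, one_mul, zero_mul]
  rw [← Finset.sum_filter]
  congr 2
  ext A; simp

lemma wker_symm (m : Finset (Fin n) → ℝ) (ω η) : wker m ω η = wker m η ω := by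
  simp only [wker, mul_comm (walsh _ ω)]

lemma wker_sum (m : Finset (Fin n) → ℝ) (ω) : ∑ η, wker m ω η = m ∅ := by
  have h : ∀ A : Finset (Fin n), ∑ η, walsh A η = if A = ∅ then (2:ℝ) ^ n else 0 := by
    intro A
    have := walsh_orth A ∅
    simpa [walsh] using this
  simp only [wker]
  rw [← Finset.mul_sum, Finset.sum_comm]
  simp only [← mul_assoc, ← Finset.mul_sum, h]
  simp [walsh]
  field_simp

lemma Phi_eS (S : Finset (Fin n)) : ‖Phi n X (eS S)‖ ≤ 1 := by
  refine kerOp_contr _ (fun ω η => ?_) (fun ω => ?_) (fun η => ?_)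
  · rw [wker_eS]
    refine mul_nonneg (by positivity) (Finset.prod_nonneg fun i _ => ?_)
    cases ω i <;> cases η i <;> simp [sg] <;> norm_num
  · rw [wker_sum]; simp [eS]
  · simp only [wker_symm n _ _ η]
    rw [wker_sum]; simp [eS]

lemma Phi_single_apply (F : ZZ n X) (ω) :
    (Phi n X (fun A => if A.card = 1 then 1 else 0) F) ω =
      ∑ i, sg (ω i) • ((1 / 2 ^ n : ℝ) • ∑ η, sg (η i) • F η) := by
  rw [Phi_apply]
  have h : ∀ η, wker (fun A : Finset (Fin n) => if A.card = 1 then 1 else 0) ω η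
      = ∑ i, sg (ω i) * ((1 / 2 ^ n) * sg (η i)) := by
    intro η
    simp only [wker, ite_mul, one_mul, zero_mul]
    rw [← Finset.sum_filter, Finset.mul_sum]
    symm
    refine Finset.sum_bij (fun i _ => {i}) ?_ ?_ ?_ ?_
    · intro i _; simp
    · intro i _ j _ h; simpa using h
    · intro A hA
      obtain ⟨i, hi⟩ := Finset.card_eq_one.1 (Finset.mem_filter.1 hA).2
      exact ⟨i, Finset.mem_univ _, hi.symm⟩
    · intro i _; simp [walsh]; ring
  simp only [h, Finset.sum_smul, Finset.smul_sum, smul_smul]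
  rw [Finset.sum_comm]

end Phi

lemma lp_l2_bound (p : ℝ) (hp : 1 < p) : ∃ a : ℝ, a < 1 / 2 ∧ ∀ (N : ℕ), 1 ≤ N → ∀ t : Fin N → ℝ,
    (∀ i, 0 ≤ t i) → (∑ i, t i ^ p) ^ (1 / p) ≤ (N : ℝ) ^ a * Real.sqrt (∑ i, t i ^ 2) := by
  rcases le_or_gt 2 p with h2 | h2
  · refine ⟨0, by norm_num, fun N hN t ht => ?_⟩
    rw [Real.rpow_zero, one_mul]
    set s := Real.sqrt (∑ i, t i ^ 2) with hs
    have hs0 : 0 ≤ s := Real.sqrt_nonneg _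
    have hs2 : s ^ 2 = ∑ i, t i ^ 2 := Real.sq_sqrt (Finset.sum_nonneg fun i _ => sq_nonneg _)
    have hti : ∀ i, t i ≤ s := by
      intro i
      refine le_of_sq_le_sq ?_ hs0
      rw [hs2]
      exact Finset.single_le_sum (f := fun i => t i ^ 2) (fun i _ => sq_nonneg _) (Finset.mem_univ i)
    have : ∑ i, t i ^ p ≤ s ^ p := by
      have e : ∀ x : ℝ, 0 ≤ x → x ^ p = x ^ 2 * x ^ (p - 2) := by
        intro x hx
        rw [← Real.rpow_natCast x 2, ← Real.rpow_add_of_nonneg hx (by norm_num) (by linarith)]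
        congr 1; push_cast; ring
      rw [e s hs0, hs2, Finset.sum_mul]
      refine Finset.sum_le_sum fun i _ => ?_
      rw [e _ (ht i)]
      gcongr
      · exact ht i
      · exact hti i
    calc _ ≤ (s ^ p) ^ (1 / p) := by
          refine Real.rpow_le_rpow (Finset.sum_nonneg fun i _ => Real.rpow_nonneg (ht i) _) this ?_
          positivity
      _ = s := by
          rw [← Real.rpow_mul hs0, mul_one_div_cancel (by linarith), Real.rpow_one]
  · refine ⟨1 / p - 1 / 2, ?_, fun N hN t ht => ?_⟩
    · have : 1 / p < 1 := by rw [div_lt_one (by linarith)]; exact hp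
      linarith
    have hpp : 0 < p := by linarith
    have h := Real.rpow_sum_le_const_mul_sum_rpow_of_nonneg (p := 2 / p) Finset.univ (f := fun i => t i ^ p)
      (by rw [le_div_iff₀ hpp]; linarith) (fun i _ => Real.rpow_nonneg (ht i) _)
    have e : ∀ i, (t i ^ p) ^ (2 / p) = t i ^ 2 := by
      intro i
      rw [← Real.rpow_mul (ht i), mul_div_cancel₀ _ hpp.ne']
      exact Real.rpow_two _
    simp only [e, Finset.card_univ, Fintype.card_fin] at h
    have hnn : 0 ≤ ∑ i, t i ^ p := Finset.sum_nonneg fun i _ => Real.rpow_nonneg (ht i) _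
    refine le_of_sq_le_sq ?_ (by positivity)
    rw [mul_pow, Real.sq_sqrt (Finset.sum_nonneg fun i _ => sq_nonneg _)]
    rw [← Real.rpow_natCast, ← Real.rpow_mul hnn, ← Real.rpow_natCast ((N:ℝ) ^ _), ← Real.rpow_mul (by positivity)]
    have e1 : 1 / p * ((2:ℕ):ℝ) = 2 / p := by push_cast; ring
    have e2 : (1 / p - 1 / 2) * ((2:ℕ):ℝ) = 2 / p - 1 := by push_cast; ring
    rw [e1, e2]; exact h

lemma lp_bound (p : ℝ) (hp : 1 < p) : ∃ b : ℝ, b < 1 ∧ ∀ (N : ℕ), 1 ≤ N → ∀ t : Fin N → ℝ,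
    (∀ i, 0 ≤ t i) → (∑ i, t i) * (∑ i, t i ^ p) ^ (1 / p) ≤ (N : ℝ) ^ b * ∑ i, t i ^ 2 := by
  obtain ⟨a, ha, h⟩ := lp_l2_bound p hp
  refine ⟨1 / 2 + a, by linarith, fun N hN t ht => ?_⟩
  have h1 := h N hN t ht
  have hNp : (0:ℝ) < N := by exact_mod_cast hN
  have hnn : 0 ≤ ∑ i, t i ^ 2 := Finset.sum_nonneg fun i _ => sq_nonneg _
  have h2 : ∑ i, t i ≤ Real.sqrt N * Real.sqrt (∑ i, t i ^ 2) := by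
    rw [← Real.sqrt_mul (by positivity)]
    apply Real.le_sqrt_of_sq_le
    have := sq_sum_le_card_mul_sum_sq (s := Finset.univ) (f := t)
    simpa using this
  calc _ ≤ (Real.sqrt N * Real.sqrt (∑ i, t i ^ 2)) * ((N : ℝ) ^ a * Real.sqrt (∑ i, t i ^ 2)) := by
        refine mul_le_mul h2 h1 (Real.rpow_nonneg (Finset.sum_nonneg fun i _ => Real.rpow_nonneg (ht i) _) _) (by positivity)
    _ = (Real.sqrt N * (N : ℝ) ^ a) * (Real.sqrt (∑ i, t i ^ 2) * Real.sqrt (∑ i, t i ^ 2)) := by ring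
    _ = _ := by
        rw [Real.mul_self_sqrt hnn, Real.sqrt_eq_rpow, ← Real.rpow_add hNp]

section typ
variable {X : Type*} [NormedAddCommGroup X] [NormedSpace ℝ X]

def HasTyp (X : Type*) [NormedAddCommGroup X] [NormedSpace ℝ X] (p T : ℝ) : Prop :=
  ∀ (m : ℕ) (x : Fin m → X), (∑ ε : Fin m → Bool, ‖∑ i, sg (ε i) • x i‖) / 2 ^ m
        ≤ T * (∑ i, ‖x i‖ ^ p) ^ (1 / p)

lemma typ_l2 (p : ℝ) (hp : 1 < p) (T : ℝ) (hT : 0 ≤ T) (h : HasTyp X p T) (b : ℝ)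
    (N : ℕ) (hN : 1 ≤ N)
    (hb : ∀ t : Fin N → ℝ, (∀ i, 0 ≤ t i) →
      (∑ i, t i) * (∑ i, t i ^ p) ^ (1 / p) ≤ (N : ℝ) ^ b * ∑ i, t i ^ 2) (x : Fin N → X) :
    (∑ ε : Fin N → Bool, ‖∑ i, sg (ε i) • x i‖ ^ 2) / 2 ^ N ≤ T * ((N : ℝ) ^ b * ∑ i, ‖x i‖ ^ 2) := by
  have h1 : ∀ ε : Fin N → Bool, ‖∑ i, sg (ε i) • x i‖ ≤ ∑ i, ‖x i‖ := by
    intro ε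
    refine (norm_sum_le _ _).trans (le_of_eq (Finset.sum_congr rfl fun i _ => ?_))
    rw [norm_smul, Real.norm_eq_abs, sg_abs, one_mul]
  have h2 : (∑ ε : Fin N → Bool, ‖∑ i, sg (ε i) • x i‖ ^ 2) ≤
      (∑ i, ‖x i‖) * ∑ ε : Fin N → Bool, ‖∑ i, sg (ε i) • x i‖ := by
    rw [Finset.mul_sum]
    refine Finset.sum_le_sum fun ε _ => ?_
    rw [sq]
    exact mul_le_mul_of_nonneg_right (h1 ε) (norm_nonneg _)
  have h3 := h N x
  have h4 := hb (fun i => ‖x i‖) (fun i => norm_nonneg _)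
  have h5 : 0 ≤ ∑ i, ‖x i‖ := Finset.sum_nonneg fun i _ => norm_nonneg _
  calc _ ≤ ((∑ i, ‖x i‖) * ∑ ε : Fin N → Bool, ‖∑ i, sg (ε i) • x i‖) / 2 ^ N := by gcongr
    _ = (∑ i, ‖x i‖) * ((∑ ε : Fin N → Bool, ‖∑ i, sg (ε i) • x i‖) / 2 ^ N) := by ring
    _ ≤ (∑ i, ‖x i‖) * (T * (∑ i, ‖x i‖ ^ p) ^ (1 / p)) := by gcongr
    _ = T * ((∑ i, ‖x i‖) * (∑ i, ‖x i‖ ^ p) ^ (1 / p)) := by ring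
    _ ≤ _ := by gcongr

lemma eS_idem {n : ℕ} (S : Finset (Fin n)) : eS S * eS S = eS S := by
  ext A; simp [eS]

lemma Phi_prod_eS {n N : ℕ} (S : Fin N → Finset (Fin n)) (B : Finset (Fin N)) :
    ‖Phi n X (∏ i ∈ B, eS (S i))‖ ≤ 1 := by
  classical
  induction B using Finset.induction_on with
  | empty =>
    have : (∏ i ∈ (∅ : Finset (Fin N)), eS (S i)) = eS (Finset.univ : Finset (Fin n)) := by
      ext A; simp [eS]
    rw [this]; exact Phi_eS n X _
  | insert a s ha ih =>
    rw [Finset.prod_insert ha, map_mul]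
    refine (norm_mul_le _ _).trans ?_
    exact mul_le_one₀ (Phi_eS n X _) (norm_nonneg _) ih

lemma Phi_lower_aux {R Z : Type*} [CommRing R] [Algebra ℝ R] [NormedAddCommGroup Z] [NormedSpace ℝ Z]
    (Φ : R →ₐ[ℝ] (Z →L[ℝ] Z)) {N : ℕ} (e : Fin N → R) (hidem : ∀ i, e i * e i = e i)
    (he : ∀ i, ‖Φ (e i)‖ ≤ 1) (hprod : ∀ B : Finset (Fin N), ‖Φ (∏ i ∈ B, e i)‖ ≤ 1)
    (hc : 2 ^ N - 1 / 2 < ‖Φ (∏ i, (1 - e i))‖) : ∃ v : Fin N → Z,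
    (∀ i, ‖v i‖ ≤ 1) ∧ ∀ ε : Fin N → Bool, (N : ℝ) / 2 ≤ ‖∑ i, sg (ε i) • v i‖ := by
  classical
  obtain ⟨F, hF, hlt⟩ := ContinuousLinearMap.exists_lt_apply_of_lt_opNorm _ hc
  obtain ⟨ξ, hξ, hξv⟩ := exists_dual_vector'' ℝ (Φ (∏ i, (1 - e i)) F)
  have hbd : ∀ B : Finset (Fin N), ∀ G : Z, |ξ (Φ (∏ i ∈ B, e i) G)| ≤ ‖G‖ := by
    intro B G
    calc _ ≤ ‖ξ‖ * (‖Φ (∏ i ∈ B, e i)‖ * ‖G‖) :=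
          (ξ.le_opNorm _).trans (mul_le_mul_of_nonneg_left (ContinuousLinearMap.le_opNorm _ _) (norm_nonneg _))
      _ ≤ 1 * (1 * ‖G‖) := by
          gcongr
          exact hprod B
      _ = _ := by ring
  have hexp : ξ (Φ (∏ i, (1 - e i)) F) =
      ∑ B : Finset (Fin N), (-1) ^ B.card * ξ (Φ (∏ i ∈ B, e i) F) := by
    have hee : (∏ i, (1 - e i)) = ∑ B : Finset (Fin N), ((-1 : ℝ) ^ B.card) • (∏ i ∈ B, e i) := by
      have : ∀ i, 1 - e i = -e i + 1 := fun i => by ring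
      simp only [this]
      rw [Fintype.prod_add]
      refine Finset.sum_congr rfl fun B _ => ?_
      rw [Finset.prod_neg]
      rw [Algebra.smul_def]; simp
    rw [hee, map_sum, ContinuousLinearMap.sum_apply, map_sum]
    refine Finset.sum_congr rfl fun B _ => ?_
    rw [map_smul, ContinuousLinearMap.smul_apply, map_smul, smul_eq_mul]
  rw [hexp] at hξv
  have hterm : ∀ B : Finset (Fin N), (-1) ^ B.card * ξ (Φ (∏ i ∈ B, e i) F) ≤ 1 := by
    intro B
    have h1 := hbd B F
    refine (le_abs_self _).trans ?_
    rw [abs_mul, abs_pow, abs_neg, abs_one, one_pow, one_mul]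
    linarith
  have hhalf : ∀ B : Finset (Fin N), 1 / 2 ≤ (-1) ^ B.card * ξ (Φ (∏ i ∈ B, e i) F) := by
    intro B
    have h1 : (2:ℝ) ^ N - 1 / 2 < ∑ B : Finset (Fin N), (-1) ^ B.card * ξ (Φ (∏ i ∈ B, e i) F) := by
      rw [hξv]; exact hlt
    rw [← Finset.add_sum_erase _ _ (Finset.mem_univ B)] at h1
    have h2 : ∑ x ∈ Finset.univ.erase B, (-1) ^ x.card * ξ (Φ (∏ i ∈ x, e i) F) ≤ 2 ^ N - 1 := by
      refine (Finset.sum_le_sum fun B _ => hterm B).trans ?_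
      rw [Finset.sum_const, nsmul_eq_mul, mul_one, Finset.card_erase_of_mem (Finset.mem_univ _)]
      have : 1 ≤ 2 ^ N := Nat.one_le_two_pow
      simp [Fintype.card_finset]
    linarith
  refine ⟨fun i => Φ (e i) F, fun i => ?_, fun ε => ?_⟩
  · refine (ContinuousLinearMap.le_opNorm _ _).trans ?_
    exact mul_le_one₀ (he _) (norm_nonneg _) hF.le
  · set B : Finset (Fin N) := Finset.univ.filter (fun i => ε i = true) with hB
    set G := ∑ i, sg (ε i) • Φ (e i) F with hG
    have h1 := hbd B G
    refine le_trans ?_ h1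
    have h2 : (-1) ^ B.card * ξ (Φ (∏ i ∈ B, e i) G) ≤ |ξ (Φ (∏ i ∈ B, e i) G)| := by
      refine (le_abs_self _).trans ?_
      rw [abs_mul, abs_pow, abs_neg, abs_one, one_pow, one_mul]
    refine le_trans ?_ h2
    rw [hG, map_sum, map_sum, Finset.mul_sum]
    have h3 : ∀ i ∈ (Finset.univ : Finset (Fin N)), (1:ℝ) / 2 ≤ (-1) ^ B.card * ξ (Φ (∏ i ∈ B, e i) (sg (ε i) • Φ (e i) F)) := by
      intro i _
      have hee : Φ (∏ i ∈ B, e i) (Φ (e i) F) = Φ ((e i) * ∏ i ∈ B, e i) F := by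
        rw [mul_comm, map_mul]; rfl
      rw [map_smul, map_smul, smul_eq_mul, hee]
      by_cases hi : ε i = true
      · have hiB : i ∈ B := by simp [hB, hi]
        rw [← Finset.mul_prod_erase _ _ hiB, ← mul_assoc (e i) (e i), hidem, Finset.mul_prod_erase _ (fun i => e i) hiB]
        simp only [sg, hi, if_true, one_mul]
        exact hhalf B
      · have hiB : i ∉ B := by simp [hB, hi]
        rw [← Finset.prod_insert hiB]
        have := hhalf (insert i B)
        rw [Finset.card_insert_of_notMem hiB, pow_succ] at this
        simp only [sg, hi]
        simp only [Bool.false_eq_true, if_false]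
        linarith
    have := Finset.sum_le_sum h3
    simpa [div_eq_mul_inv] using this

lemma Phi_lower {n N : ℕ} (S : Fin N → Finset (Fin n))
    (hc : 2 ^ N - 1 / 2 < ‖Phi n X (∏ i, (1 - eS (S i)))‖) : ∃ v : Fin N → ZZ n X,
    (∀ i, ‖v i‖ ≤ 1) ∧ ∀ ε : Fin N → Bool, (N : ℝ) / 2 ≤ ‖∑ i, sg (ε i) • v i‖ :=
  Phi_lower_aux (Phi n X) (fun i => eS (S i)) (fun _ => eS_idem _) (fun _ => Phi_eS n X _)
    (fun B => Phi_prod_eS S B) hc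

lemma Phi_upper (p : ℝ) (hp : 1 < p) (T : ℝ) (hT : 0 ≤ T) (h : HasTyp X p T) (b : ℝ)
    (N : ℕ) (hN : 1 ≤ N)
    (hb : ∀ t : Fin N → ℝ, (∀ i, 0 ≤ t i) →
      (∑ i, t i) * (∑ i, t i ^ p) ^ (1 / p) ≤ (N : ℝ) ^ b * ∑ i, t i ^ 2)
    (hbig : 4 * T * (N : ℝ) ^ b < N) (n : ℕ) (S : Fin N → Finset (Fin n)) :
    ‖Phi n X (∏ i, (1 - eS (S i)))‖ ≤ 2 ^ N - 1 / 2 := by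
  by_contra hc
  push Not at hc
  obtain ⟨v, hv, hlow⟩ := Phi_lower S hc
  have hNp : (0:ℝ) < N := by exact_mod_cast hN
  have h1 : ((N : ℝ) / 2) ^ 2 ≤ (∑ ε : Fin N → Bool, ‖∑ i, sg (ε i) • v i‖ ^ 2) / 2 ^ N := by
    rw [le_div_iff₀ (by positivity)]
    have : ∑ _ε : Fin N → Bool, ((N : ℝ) / 2) ^ 2 ≤ ∑ ε : Fin N → Bool, ‖∑ i, sg (ε i) • v i‖ ^ 2 :=
      Finset.sum_le_sum fun ε _ => pow_le_pow_left₀ (by positivity) (hlow ε) 2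
    simp at this
    linarith
  have h2 : (∑ ε : Fin N → Bool, ‖∑ i, sg (ε i) • v i‖ ^ 2) / 2 ^ N ≤
      T * ((N : ℝ) ^ b * ∑ i, ‖v i‖ ^ 2) := by
    simp only [PiLp.norm_sq_eq_of_L2]
    rw [Finset.sum_comm, Finset.sum_div, Finset.sum_comm (γ := Fin N), Finset.mul_sum, Finset.mul_sum]
    refine Finset.sum_le_sum fun ω _ => ?_
    have := typ_l2 p hp T hT h b N hN hb (fun i => v i ω)
    simpa using this
  have h3 : ∑ i, ‖v i‖ ^ 2 ≤ N := by
    have : ∑ i, ‖v i‖ ^ 2 ≤ ∑ i : Fin N, (1:ℝ) :=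
      Finset.sum_le_sum fun i _ => pow_le_one₀ (norm_nonneg _) (hv i)
    simpa using this
  have h4 : T * ((N : ℝ) ^ b * ∑ i, ‖v i‖ ^ 2) ≤ T * ((N : ℝ) ^ b * N) := by gcongr
  nlinarith

lemma pow_eq_sum_eS {n : ℕ} (s : ℝ) (A : Finset (Fin n)) :
    s ^ A.card = ∑ S : Finset (Fin n), (s ^ S.card * (1 - s) ^ (n - S.card)) * eS S A := by
  classical
  have h := Fintype.prod_add (fun _ : Fin n => s) (fun i => (1 - s) * (if i ∈ A then 0 else 1))
  have e : ∏ a : Fin n, (s + (1 - s) * (if a ∈ A then 0 else 1)) = s ^ A.card := by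
    have : ∀ a : Fin n, (s + (1 - s) * (if a ∈ A then 0 else 1)) = if a ∈ A then s else 1 := by
      intro a; split_ifs <;> ring
    simp only [this]
    simp [Finset.prod_ite_mem]
  rw [e] at h
  rw [h]
  refine Finset.sum_congr rfl fun S _ => ?_
  rw [Finset.prod_const, Finset.prod_mul_distrib, Finset.prod_const, Finset.card_compl, Fintype.card_fin, mul_assoc]
  congr 2
  simp only [eS]
  split_ifs with hA
  · refine Finset.prod_eq_one fun i hi => ?_
    rw [if_neg]
    intro hiA
    exact (Finset.mem_compl.1 hi) (hA hiA)
  · obtain ⟨i, hi, hiS⟩ := Finset.not_subset.1 hA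
    exact Finset.prod_eq_zero (Finset.mem_compl.2 hiS) (by simp [hi])

theorem Kconvex [CompleteSpace X] (p : ℝ) (hp : 1 < p) (T : ℝ) (hT : 0 ≤ T) (h : HasTyp X p T) :
    ∃ C : ℝ, 0 ≤ C ∧ ∀ (n : ℕ) (F : (Fin n → Bool) → X),
      ∑ ω : Fin n → Bool, ‖∑ i, sg (ω i) • ((1 / 2 ^ n : ℝ) • ∑ η : Fin n → Bool, sg (η i) • F η)‖ ^ 2
        ≤ C * ∑ ω, ‖F ω‖ ^ 2 := by
  obtain ⟨b, hb1, hb⟩ := lp_bound p hp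
  obtain ⟨N, hN1, hbig⟩ : ∃ N : ℕ, 1 ≤ N ∧ 4 * T * (N : ℝ) ^ b < N := by
    have h1 : Filter.Tendsto (fun N : ℕ => (N : ℝ) ^ (1 - b)) Filter.atTop Filter.atTop :=
      (tendsto_rpow_atTop (by linarith)).comp tendsto_natCast_atTop_atTop
    obtain ⟨N, hN, hN1⟩ := ((h1.eventually_gt_atTop (4 * T)).and (Filter.eventually_ge_atTop 1)).exists
    refine ⟨N, hN1, ?_⟩
    have hNp : (0:ℝ) < N := by exact_mod_cast hN1
    have : (N:ℝ) = (N:ℝ) ^ (1 - b) * (N:ℝ) ^ b := by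
      rw [← Real.rpow_add hNp]; simp
    calc _ < (N:ℝ) ^ (1 - b) * (N:ℝ) ^ b := by gcongr
      _ = _ := this.symm
  refine ⟨multC N ^ 2, sq_nonneg _, fun n F => ?_⟩
  have hps : ∀ s : ℝ, ∑ S : Finset (Fin n), (s ^ S.card * (1 - s) ^ (n - S.card)) = 1 := by
    intro s
    rw [Fin.sum_pow_mul_eq_add_pow]; simp
  have hmain := multiplier_bound (Phi n X) (fun A => A.card) N hN1 (fun s hs0 hs1 => ?_) (fun s hs0 hs1 => ?_)
  · set F' : ZZ n X := WithLp.toLp 2 F with hF'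
    have h2 := ContinuousLinearMap.le_of_opNorm_le _ hmain F'
    have h3 := pow_le_pow_left₀ (norm_nonneg _) h2 2
    rw [mul_pow, PiLp.norm_sq_eq_of_L2, PiLp.norm_sq_eq_of_L2] at h3
    simp only [Phi_single_apply] at h3
    exact h3
  · have e : (fun A : Finset (Fin n) => s ^ A.card) =
        ∑ S : Finset (Fin n), (s ^ S.card * (1 - s) ^ (n - S.card)) • eS S := by
      ext A; rw [pow_eq_sum_eS]; simp
    rw [e, map_sum]
    refine (norm_sum_le _ _).trans ((Finset.sum_le_sum fun S _ => ?_).trans (le_of_eq (hps s)))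
    have h0 : 0 ≤ s ^ S.card * (1 - s) ^ (n - S.card) :=
      mul_nonneg (pow_nonneg hs0 _) (pow_nonneg (by linarith) _)
    rw [map_smul, norm_smul, Real.norm_eq_abs, abs_of_nonneg h0]
    exact mul_le_of_le_one_right h0 (Phi_eS n X S)
  · have e : (fun A : Finset (Fin n) => (1 - s ^ A.card) ^ N) =
        ∑ f : Fin N → Finset (Fin n), (∏ i, (s ^ (f i).card * (1 - s) ^ (n - (f i).card))) • ∏ i, (1 - eS (f i)) := by
      ext A
      have : 1 - s ^ A.card = ∑ S : Finset (Fin n), (s ^ S.card * (1 - s) ^ (n - S.card)) * (1 - eS S A) := by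
        simp only [mul_sub, mul_one, Finset.sum_sub_distrib]
        rw [hps s, pow_eq_sum_eS]
      rw [this, Fintype.sum_pow]
      simp [Finset.prod_mul_distrib]
    have hsum1 : ∑ f : Fin N → Finset (Fin n), (∏ i, (s ^ (f i).card * (1 - s) ^ (n - (f i).card))) = 1 := by
      rw [← Fintype.sum_pow (fun S : Finset (Fin n) => s ^ S.card * (1 - s) ^ (n - S.card)), hps s, one_pow]
    rw [e, map_sum]
    refine (norm_sum_le _ _).trans ?_
    have h4 : ∀ f ∈ (Finset.univ : Finset (Fin N → Finset (Fin n))),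
        ‖(Phi n X) ((∏ i, (s ^ (f i).card * (1 - s) ^ (n - (f i).card))) • ∏ i, (1 - eS (f i)))‖ ≤
        (∏ i, (s ^ (f i).card * (1 - s) ^ (n - (f i).card))) * (2 ^ N - 1 / 2) := by
      intro f _
      have h0 : 0 ≤ ∏ i, (s ^ (f i).card * (1 - s) ^ (n - (f i).card)) :=
        Finset.prod_nonneg fun i _ => mul_nonneg (pow_nonneg hs0 _) (pow_nonneg (by linarith) _)
      rw [map_smul, norm_smul, Real.norm_eq_abs, abs_of_nonneg h0]
      exact mul_le_mul_of_nonneg_left (Phi_upper p hp T hT h b N hN1 (hb N hN1) hbig n f) h0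
    refine (Finset.sum_le_sum h4).trans ?_
    rw [← Finset.sum_mul, hsum1, one_mul]

end typ

section spreading
open Filter Topology
variable {Y : Type*} [NormedAddCommGroup Y] [NormedSpace ℝ Y]

def MM (V : Ultrafilter Y) : (k : ℕ) → (Fin k → ℝ) → Y → ℝ
  | 0, _, v => ‖v‖
  | k + 1, a, v => limUnder (V : Filter Y) (fun y => MM V k (fun i => a i.succ) (v + a 0 • y))

lemma tendsto_vlim (V : Ultrafilter Y) (f : Y → ℝ) (B : ℝ) (h : ∀ᶠ y in (V : Filter Y), |f y| ≤ B) :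
    Tendsto f V (𝓝 (limUnder (V : Filter Y) f)) := by
  apply tendsto_nhds_limUnder
  have hc : IsCompact (Set.Icc (-B) B) := isCompact_Icc
  have := hc.ultrafilter_le_nhds (V.map f) (by
    rw [Filter.le_principal_iff]
    change ∀ᶠ y in (V : Filter Y), f y ∈ Set.Icc (-B) B
    filter_upwards [h] with y hy
    exact abs_le.1 hy)
  obtain ⟨x, _, hx⟩ := this
  exact ⟨x, hx⟩

variable (V : Ultrafilter Y) (B : ℝ) (hB : ∀ᶠ y in (V : Filter Y), ‖y‖ ≤ B)
include hB

lemma tendsto_of_lip (F : Y → ℝ) (hF : ∀ v w, |F v - F w| ≤ ‖v - w‖) (v : Y) (c : ℝ) :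
    Tendsto (fun y => F (v + c • y)) V (𝓝 (limUnder (V : Filter Y) (fun y => F (v + c • y)))) := by
  apply tendsto_vlim V _ (|F v| + |c| * B)
  filter_upwards [hB] with y hy
  have h1 := hF (v + c • y) v
  have h2 : ‖v + c • y - v‖ ≤ |c| * B := by
    rw [add_sub_cancel_left, norm_smul, Real.norm_eq_abs]; gcongr
  have h3 : |F (v + c • y)| ≤ |F (v + c • y) - F v| + |F v| := by
    have := abs_add_le (F (v + c • y) - F v) (F v)
    simpa using this
  linarith

lemma MM_lip (k : ℕ) : ∀ (a : Fin k → ℝ) (v w : Y), |MM V k a v - MM V k a w| ≤ ‖v - w‖ := by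
  induction k with
  | zero => intro a v w; exact abs_norm_sub_norm_le v w
  | succ k ih =>
    intro a v w
    have h1 := tendsto_of_lip V B hB _ (ih (fun i => a i.succ)) v (a 0)
    have h2 := tendsto_of_lip V B hB _ (ih (fun i => a i.succ)) w (a 0)
    refine le_of_tendsto (h1.sub h2).abs (Eventually.of_forall fun y => ?_)
    refine (ih _ _ _).trans (le_of_eq ?_)
    congr 1; abel

lemma MM_tendsto (k : ℕ) (a : Fin (k + 1) → ℝ) (v : Y) :
    Tendsto (fun y => MM V k (fun i => a i.succ) (v + a 0 • y)) V (𝓝 (MM V (k + 1) a v)) :=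
  tendsto_of_lip V B hB _ (MM_lip V B hB k _) v (a 0)

lemma MM_add (k : ℕ) : ∀ (a b : Fin k → ℝ) (v w : Y),
    MM V k (a + b) (v + w) ≤ MM V k a v + MM V k b w := by
  induction k with
  | zero => intro a b v w; exact norm_add_le v w
  | succ k ih =>
    intro a b v w
    refine le_of_tendsto_of_tendsto (MM_tendsto V B hB k (a + b) (v + w))
      ((MM_tendsto V B hB k a v).add (MM_tendsto V B hB k b w)) (Eventually.of_forall fun y => ?_)
    have := ih (fun i => a i.succ) (fun i => b i.succ) (v + a 0 • y) (w + b 0 • y)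
    have e : v + w + (a + b) 0 • y = (v + a 0 • y) + (w + b 0 • y) := by
      simp only [Pi.add_apply, add_smul]; abel
    beta_reduce
    rw [e]
    exact this

lemma MM_neg (k : ℕ) : ∀ (a : Fin k → ℝ) (v : Y), MM V k (-a) (-v) = MM V k a v := by
  induction k with
  | zero => intro a v; exact norm_neg v
  | succ k ih =>
    intro a v
    refine tendsto_nhds_unique (MM_tendsto V B hB k (-a) (-v)) ?_
    refine (MM_tendsto V B hB k a v).congr fun y => ?_
    rw [← ih]
    congr 1
    simp only [Pi.neg_apply, neg_smul]; abel

lemma MM_convex (k : ℕ) : ∀ (a : Fin k → ℝ) (v w : Y),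
    MM V k a ((1 / 2 : ℝ) • (v + w)) ≤ (MM V k a v + MM V k a w) / 2 := by
  induction k with
  | zero =>
    intro a v w
    change ‖(1 / 2 : ℝ) • (v + w)‖ ≤ (‖v‖ + ‖w‖) / 2
    rw [norm_smul, Real.norm_eq_abs, abs_of_pos (by norm_num)]
    linarith [norm_add_le v w]
  | succ k ih =>
    intro a v w
    refine le_of_tendsto_of_tendsto (MM_tendsto V B hB k a _)
      (((MM_tendsto V B hB k a v).add (MM_tendsto V B hB k a w)).div_const 2) (Eventually.of_forall fun y => ?_)
    have := ih (fun i => a i.succ) (v + a 0 • y) (w + a 0 • y)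
    have e : (1 / 2 : ℝ) • (v + w) + a 0 • y = (1 / 2 : ℝ) • (v + a 0 • y + (w + a 0 • y)) := by
      module
    beta_reduce
    rw [e]
    exact this

lemma MM_zero (k : ℕ) : ∀ (v : Y), MM V k (fun _ => 0) v = ‖v‖ := by
  induction k with
  | zero => intro v; rfl
  | succ k ih =>
    intro v
    refine tendsto_nhds_unique (MM_tendsto V B hB k _ v) ?_
    simp only [ih, zero_smul, add_zero]
    exact tendsto_const_nhds

lemma MM_suppress (hk : ∀ F : Y → ℝ, (∀ v w, |F v - F w| ≤ ‖v - w‖) →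
      (∀ v w, F ((1 / 2 : ℝ) • (v + w)) ≤ (F v + F w) / 2) →
      ∀ (v : Y) (c : ℝ), F v ≤ limUnder (V : Filter Y) (fun y => F (v + c • y)))
    (k : ℕ) : ∀ (a b : Fin k → ℝ) (_ : ∀ i, b i = 0 ∨ b i = a i) (v : Y),
      MM V k b v ≤ MM V k a v := by
  induction k with
  | zero => intro a b _ v; exact le_refl _
  | succ k ih =>
    intro a b hab v
    rcases hab 0 with h0 | h0
    · have h1 : MM V (k + 1) b v = MM V k (fun i => b i.succ) v := by
        refine tendsto_nhds_unique (MM_tendsto V B hB k b v) ?_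
        simp only [h0, zero_smul, add_zero]
        exact tendsto_const_nhds
      rw [h1]
      exact (ih _ _ (fun i => hab i.succ) v).trans
        (hk _ (MM_lip V B hB k _) (MM_convex V B hB k _) v (a 0))
    · refine le_of_tendsto_of_tendsto (MM_tendsto V B hB k b v) (MM_tendsto V B hB k a v)
        (Eventually.of_forall fun y => ?_)
      simp only [h0]
      exact ih _ _ (fun i => hab i.succ) _

lemma MM_realize (G : Y → Prop) (hG : ∀ᶠ y in (V : Filter Y), G y) {ι : Type*} [Finite ι]
    (η : ℝ) (hη : 0 < η) (k : ℕ) : ∀ (a : ι → Fin k → ℝ) (v : ι → Y),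
    ∃ φ : Fin k → Y, (∀ l, G (φ l)) ∧
      ∀ i, |‖v i + ∑ l, a i l • φ l‖ - MM V k (a i) (v i)| ≤ k * η := by
  induction k with
  | zero => intro a v; exact ⟨Fin.elim0, fun l => l.elim0, fun i => by simp [MM]⟩
  | succ k ih =>
    intro a v
    have h1 : ∀ᶠ y in (V : Filter Y), ∀ i,
        |MM V k (fun l => a i l.succ) (v i + a i 0 • y) - MM V (k + 1) (a i) (v i)| < η := by
      rw [eventually_all]
      intro i
      have := MM_tendsto V B hB k (a i) (v i)
      rw [Metric.tendsto_nhds] at this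
      exact this η hη
    obtain ⟨y, hy, hGy⟩ := (h1.and hG).exists
    obtain ⟨φ, hφG, hφ⟩ := ih (fun i l => a i l.succ) (fun i => v i + a i 0 • y)
    refine ⟨Fin.cons y φ, ?_, fun i => ?_⟩
    · intro l
      refine Fin.cases ?_ (fun l => ?_) l
      · simpa using hGy
      · simpa using hφG l
    · have e : v i + ∑ l, a i l • (Fin.cons y φ : Fin (k + 1) → Y) l =
          v i + a i 0 • y + ∑ l : Fin k, a i l.succ • φ l := by
        rw [Fin.sum_univ_succ]; simp [add_assoc]
      rw [e]
      have h2 := hφ i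
      have h3 := hy i
      have h4 := abs_sub_le ‖v i + a i 0 • y + ∑ l : Fin k, a i l.succ • φ l‖
        (MM V k (fun l => a i l.succ) (v i + a i 0 • y)) (MM V (k + 1) (a i) (v i))
      push_cast
      linarith

end spreading

section spreading2
open Filter Topology
variable {Y : Type*} [NormedAddCommGroup Y] [NormedSpace ℝ Y]

lemma exists_V (R : ℝ) (ψ : ℕ → Y) (h1 : ∀ n, ‖ψ n‖ ≤ R) (h2 : ∀ i j, i ≠ j → 1 ≤ ‖ψ i - ψ j‖) :
    ∃ V : Ultrafilter Y, (∀ᶠ y in (V : Filter Y), 1 ≤ ‖y‖ ∧ ‖y‖ ≤ 2 * R) ∧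
      ∀ F : Y → ℝ, (∀ v w, |F v - F w| ≤ ‖v - w‖) →
      (∀ v w, F ((1 / 2 : ℝ) • (v + w)) ≤ (F v + F w) / 2) →
      ∀ (v : Y) (c : ℝ), F v ≤ limUnder (V : Filter Y) (fun y => F (v + c • y)) := by
  let U : Ultrafilter ℕ := hyperfilter ℕ
  let V : Ultrafilter Y := U.bind (fun i => U.map (fun j => ψ i - ψ j))
  have hV : ∀ q : Y → Prop, (∀ᶠ y in (V : Filter Y), q y) ↔
      ∀ᶠ i in (U : Filter ℕ), ∀ᶠ j in (U : Filter ℕ), q (ψ i - ψ j) := fun q => Iff.rfl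
  have hG : ∀ᶠ y in (V : Filter Y), 1 ≤ ‖y‖ ∧ ‖y‖ ≤ 2 * R := by
    rw [hV]
    refine Eventually.of_forall fun i => ?_
    have : ∀ᶠ j in (U : Filter ℕ), j ≠ i := by
      apply hyperfilter_le_cofinite
      exact (Set.finite_singleton i).compl_mem_cofinite
    filter_upwards [this] with j hj
    refine ⟨h2 i j hj.symm, ?_⟩
    have := norm_sub_le (ψ i) (ψ j)
    linarith [h1 i, h1 j]
  refine ⟨V, hG, ?_⟩
  intro F hF hconv v c
  have hB : ∀ᶠ y in (V : Filter Y), ‖y‖ ≤ 2 * R := hG.mono fun y hy => hy.2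
  set ℓ : ℝ → ℝ := fun c => limUnder (V : Filter Y) (fun y => F (v + c • y)) with hℓ
  have ht : ∀ c, Tendsto (fun y => F (v + c • y)) V (𝓝 (ℓ c)) := fun c => tendsto_of_lip V _ hB F hF v c
  have hhalf : ∀ c, ℓ (c / 2) ≤ ℓ c := by
    intro c
    refine le_of_forall_pos_le_add fun η hη => ?_
    refine le_of_tendsto (ht (c / 2)) ?_
    rw [hV]
    have h3 : ∀ᶠ y in (V : Filter Y), F (v + c • y) < ℓ c + η :=
      (ht c).eventually_lt_const (by linarith)
    rw [hV] at h3
    filter_upwards [h3] with i hi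
    obtain ⟨j, hij, hj⟩ := (hi.and h3).exists
    filter_upwards [hj] with k hk
    have h4 := hconv (v + c • (ψ i - ψ j)) (v + c • (ψ j - ψ k))
    have e : (1 / 2 : ℝ) • (v + c • (ψ i - ψ j) + (v + c • (ψ j - ψ k))) = v + (c / 2) • (ψ i - ψ k) := by
      module
    rw [e] at h4
    linarith
  have hpow : ∀ n : ℕ, ℓ (c / 2 ^ n) ≤ ℓ c := by
    intro n
    induction n with
    | zero => simp
    | succ n ih =>
      have := hhalf (c / 2 ^ n)
      rw [div_div, ← pow_succ] at this
      exact this.trans ih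
  have hlow : ∀ c, F v - |c| * (2 * R) ≤ ℓ c := by
    intro c
    refine ge_of_tendsto (ht c) ?_
    filter_upwards [hB] with y hy
    have h5 := hF v (v + c • y)
    have h6 : ‖v - (v + c • y)‖ ≤ |c| * (2 * R) := by
      rw [sub_add_cancel_left, norm_neg, norm_smul, Real.norm_eq_abs]; gcongr
    have := le_abs_self (F v - F (v + c • y))
    linarith
  have hlim : Tendsto (fun n : ℕ => F v - |c / 2 ^ n| * (2 * R)) atTop (𝓝 (F v - |0| * (2 * R))) := by
    have : Tendsto (fun n : ℕ => c / 2 ^ n) atTop (𝓝 0) := by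
      have := (tendsto_pow_atTop_nhds_zero_of_lt_one (r := (1/2:ℝ)) (by norm_num) (by norm_num)).const_mul c
      simpa [div_eq_mul_inv] using this
    exact tendsto_const_nhds.sub (this.abs.mul_const _)
  have := le_of_tendsto hlim (Eventually.of_forall fun n => (hlow _).trans (hpow n))
  simpa using this

theorem exists_uncond (hY : ¬ FiniteDimensional ℝ Y) : ∃ R : ℝ, 0 < R ∧ ∀ m : ℕ, ∃ φ : Fin m → Y,
    (∀ l, 1 ≤ ‖φ l‖ ∧ ‖φ l‖ ≤ R) ∧ ∀ δ δ' : Fin m → Bool,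
      ‖∑ l, sg (δ l) • φ l‖ ≤ 3 * ‖∑ l, sg (δ' l) • φ l‖ := by
  obtain ⟨R, ψ, hR, hψ, hsep⟩ := exists_seq_norm_le_one_le_norm_sub (𝕜 := ℝ) (E := Y) hY
  obtain ⟨V, hG, hk⟩ := exists_V R ψ hψ (fun i j hij => hsep hij)
  have hB : ∀ᶠ y in (V : Filter Y), ‖y‖ ≤ 2 * R := hG.mono fun y hy => hy.2
  refine ⟨2 * R, by linarith, fun m => ?_⟩
  obtain ⟨φ, hφG, hφ⟩ := MM_realize V _ hB _ hG (1 / (4 * (m + 1)) : ℝ) (by positivity) m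
    (fun (δ : Fin m → Bool) l => sg (δ l)) (fun _ => 0)
  refine ⟨φ, hφG, fun δ δ' => ?_⟩
  have hm : (m : ℝ) * (1 / (4 * (m + 1))) ≤ 1 / 4 := by
    rw [mul_one_div, div_le_div_iff₀ (by positivity) (by norm_num)]; linarith
  have h1 := abs_le.1 ((hφ δ).trans hm)
  have h2 := abs_le.1 ((hφ δ').trans hm)
  simp only [zero_add] at h1 h2
  have h3 : MM V m (fun l => sg (δ l)) 0 ≤ 2 * MM V m (fun l => sg (δ' l)) 0 := by
    set x : Fin m → ℝ := fun l => if δ l = δ' l then sg (δ l) else 0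
    set y : Fin m → ℝ := fun l => if δ l = δ' l then 0 else sg (δ l)
    have e : (fun l => sg (δ l)) = x + y := by
      ext l; simp only [x, y, Pi.add_apply]; split_ifs <;> simp
    have h4 := MM_add V _ hB m x y 0 0
    have h5 := MM_suppress V _ hB hk m (fun l => sg (δ' l)) x (by
      intro i; simp only [x]; split_ifs with h
      · right; rw [h]
      · left; rfl) 0
    have h6 := MM_suppress V _ hB hk m (fun l => sg (δ' l)) (-y) (by
      intro i; simp only [y, Pi.neg_apply]; split_ifs with h
      · left; simp
      · right
        revert h
        cases δ i <;> cases δ' i <;> simp [sg]) (-0)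
    rw [MM_neg V _ hB, neg_zero] at h6
    rw [add_zero, ← e] at h4
    linarith
  cases m with
  | zero => simp
  | succ k =>
    have h7 : 1 ≤ MM V (k + 1) (fun l => sg (δ' l)) 0 := by
      have h8 := MM_suppress V _ hB hk (k + 1) (fun l => sg (δ' l)) (Fin.cons (sg (δ' 0)) (fun _ => 0)) (by
        intro i
        refine Fin.cases ?_ (fun l => ?_) i
        · right; simp
        · left; simp) 0
      refine le_trans ?_ h8
      refine ge_of_tendsto (MM_tendsto V _ hB k _ 0) ?_
      filter_upwards [hG] with y hy
      simp only [Fin.cons_succ, Fin.cons_zero]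
      rw [MM_zero V _ hB, zero_add, norm_smul, Real.norm_eq_abs, sg_abs, one_mul]
      exact hy.1
    linarith [h1.1, h1.2, h2.1, h2.2]

lemma dual_infinite (X : Type*) [NormedAddCommGroup X] [NormedSpace ℝ X] (hinf : ¬ FiniteDimensional ℝ X) :
    ¬ FiniteDimensional ℝ (StrongDual ℝ X) := by
  intro h
  apply hinf
  have h2 : FiniteDimensional ℝ (StrongDual ℝ (StrongDual ℝ X)) := inferInstance
  exact Module.Finite.of_injective (NormedSpace.inclusionInDoubleDualLi ℝ (E := X)).toLinearMap
    (NormedSpace.inclusionInDoubleDualLi ℝ (E := X)).injective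

end spreading2

lemma sg_orth {m : ℕ} (k l : Fin m) :
    ∑ ω : Fin m → Bool, sg (ω k) * sg (ω l) = if k = l then (2:ℝ) ^ m else 0 := by
  have := walsh_orth ({k} : Finset (Fin m)) {l}
  simpa [walsh] using this

lemma prod_sub_bound {ι : Type*} (s : Finset ι) (a b : ι → ℂ) (c : ι → ℝ) (hc : ∀ i, 1 ≤ c i)
    (ha : ∀ i, ‖a i‖ ≤ c i) (hb : ∀ i, ‖b i‖ ≤ c i) :
    ‖∏ i ∈ s, a i - ∏ i ∈ s, b i‖ ≤ (∏ i ∈ s, c i) * ∑ i ∈ s, ‖a i - b i‖ := by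
  classical
  induction s using Finset.induction_on with
  | empty => simp
  | insert i s hi ih =>
    rw [Finset.prod_insert hi, Finset.prod_insert hi, Finset.prod_insert hi, Finset.sum_insert hi]
    have e : a i * ∏ j ∈ s, a j - b i * ∏ j ∈ s, b j =
      a i * (∏ j ∈ s, a j - ∏ j ∈ s, b j) + (a i - b i) * ∏ j ∈ s, b j := by ring
    rw [e]
    refine (norm_add_le _ _).trans ?_
    rw [norm_mul, norm_mul]
    have h1 : ‖∏ j ∈ s, b j‖ ≤ ∏ j ∈ s, c j := by
      rw [norm_prod]; exact Finset.prod_le_prod (fun _ _ => norm_nonneg _) fun j _ => hb j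
    have h0 : 0 ≤ ∏ j ∈ s, c j := (norm_nonneg _).trans h1
    have h2 : ‖a i‖ * ‖∏ j ∈ s, a j - ∏ j ∈ s, b j‖ ≤ c i * ((∏ j ∈ s, c j) * ∑ i ∈ s, ‖a i - b i‖) :=
      mul_le_mul (ha i) ih (norm_nonneg _) (by linarith [hc i])
    have h3 : ‖a i - b i‖ * ‖∏ j ∈ s, b j‖ ≤ ‖a i - b i‖ * (c i * ∏ j ∈ s, c j) := by
      refine mul_le_mul_of_nonneg_left (h1.trans ?_) (norm_nonneg _)
      exact le_mul_of_one_le_left h0 (hc i)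
    linarith

lemma norm_one_add_I (s : ℝ) : ‖(1 : ℂ) + Complex.I * (s : ℂ)‖ ≤ Real.exp (s ^ 2 / 2) := by
  refine le_of_sq_le_sq ?_ (Real.exp_pos _).le
  rw [← Complex.normSq_eq_norm_sq, ← Real.exp_nat_mul]
  have : Complex.normSq ((1 : ℂ) + Complex.I * (s : ℂ)) = s ^ 2 + 1 := by
    simp [Complex.normSq_apply]; ring
  rw [this]
  refine (Real.add_one_le_exp _).trans (le_of_eq ?_)
  congr 1; push_cast; ring

def rz {m : ℕ} (u : Fin m → ℝ) (ε : Fin m → Bool) : ℂ :=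
  ∏ l, ((1 : ℂ) + Complex.I * ((sg (ε l) * u l : ℝ) : ℂ))

lemma rz_lip {m : ℕ} (u v : Fin m → ℝ) (ε : Fin m → Bool) (hu : ∑ l, u l ^ 2 ≤ 1) (hv : ∑ l, v l ^ 2 ≤ 1) :
    |(rz u ε).re - (rz v ε).re| ≤ 3 * ∑ l, |u l - v l| := by
  have hsq : ∀ b : Bool, sg b ^ 2 = 1 := fun b => by rw [sq, sg_sq]
  have h := prod_sub_bound Finset.univ (fun l => (1 : ℂ) + Complex.I * ((sg (ε l) * u l : ℝ) : ℂ))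
    (fun l => (1 : ℂ) + Complex.I * ((sg (ε l) * v l : ℝ) : ℂ)) (fun l => Real.exp ((u l ^ 2 + v l ^ 2) / 2))
    (fun l => Real.one_le_exp (by positivity))
    (fun l => (norm_one_add_I _).trans (Real.exp_le_exp.2 (by
      rw [mul_pow, hsq]; linarith [sq_nonneg (v l)])))
    (fun l => (norm_one_add_I _).trans (Real.exp_le_exp.2 (by
      rw [mul_pow, hsq]; linarith [sq_nonneg (u l)])))
  rw [← Complex.sub_re]
  refine (Complex.abs_re_le_norm _).trans (h.trans ?_)
  have e : ∀ l, ‖(1 : ℂ) + Complex.I * ((sg (ε l) * u l : ℝ) : ℂ) - (1 + Complex.I * ((sg (ε l) * v l : ℝ) : ℂ))‖ =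
      |u l - v l| := by
    intro l
    have : (1 : ℂ) + Complex.I * ((sg (ε l) * u l : ℝ) : ℂ) - (1 + Complex.I * ((sg (ε l) * v l : ℝ) : ℂ)) =
      Complex.I * ((sg (ε l) * (u l - v l) : ℝ) : ℂ) := by push_cast; ring
    rw [this, norm_mul, Complex.norm_I, one_mul, Complex.norm_real, Real.norm_eq_abs, abs_mul, sg_abs, one_mul]
  simp only [e]
  refine mul_le_mul_of_nonneg_right ?_ (Finset.sum_nonneg fun _ _ => abs_nonneg _)
  rw [← Real.exp_sum]
  have : ∑ l, (u l ^ 2 + v l ^ 2) / 2 ≤ 1 := by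
    rw [← Finset.sum_div, Finset.sum_add_distrib]; linarith
  refine (Real.exp_le_exp.2 this).trans ?_
  have := Real.exp_one_lt_d9
  linarith

lemma rz_fourier {m : ℕ} (u : Fin m → ℝ) (k l : Fin m) (hkl : k ≠ l) :
    ∑ ε : Fin m → Bool, sg (ε k) * sg (ε l) * (rz u ε).re = - (2 ^ m * (u k * u l)) := by
  have h : ∑ ε : Fin m → Bool, ((sg (ε k) * sg (ε l) : ℝ) : ℂ) * rz u ε =
      2 ^ m * ((Complex.I * u k) * (Complex.I * u l)) := by
    have e : ∀ ε : Fin m → Bool, ((sg (ε k) * sg (ε l) : ℝ) : ℂ) * rz u ε =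
        ∏ j, (((if j = k then (sg (ε j) : ℂ) else 1) * (if j = l then (sg (ε j) : ℂ) else 1)) *
          ((1 : ℂ) + Complex.I * ((sg (ε j) * u j : ℝ) : ℂ))) := by
      intro ε
      rw [Finset.prod_mul_distrib, Finset.prod_mul_distrib]
      simp [rz]
    simp only [e]
    rw [← Fintype.prod_sum (fun (j : Fin m) (b : Bool) =>
      (((if j = k then (sg b : ℂ) else 1) * (if j = l then (sg b : ℂ) else 1)) *
          ((1 : ℂ) + Complex.I * ((sg b * u j : ℝ) : ℂ))))]
    have e2 : ∀ j : Fin m, ∑ b : Bool, (((if j = k then (sg b : ℂ) else 1) * (if j = l then (sg b : ℂ) else 1)) *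
          ((1 : ℂ) + Complex.I * ((sg b * u j : ℝ) : ℂ))) =
        2 * ((if j = k then Complex.I * u j else 1) * (if j = l then Complex.I * u j else 1)) := by
      intro j
      by_cases h1 : j = k
      · have h2 : ¬ j = l := fun h2 => hkl (h1.symm.trans h2)
        simp [h1, sg, hkl]; ring
      · by_cases h2 : j = l
        · simp [h2, sg, hkl.symm]; ring
        · simp [h1, h2, sg]; ring
    rw [Finset.prod_congr rfl (fun j _ => e2 j), Finset.prod_mul_distrib, Finset.prod_mul_distrib]
    simp
  have h2 := congrArg Complex.re h
  rw [Complex.re_sum] at h2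
  simp only [Complex.re_ofReal_mul] at h2
  rw [h2]
  have : (2:ℂ) ^ m * ((Complex.I * u k) * (Complex.I * u l)) = ((- (2 ^ m * (u k * u l)) : ℝ) : ℂ) := by
    push_cast
    linear_combination (2:ℂ) ^ m * u k * u l * Complex.I_sq
  rw [this, Complex.ofReal_re]

lemma bessel {m : ℕ} (g : (Fin m → Bool) → ℝ) :
    ∑ l, ((1 / 2 ^ m : ℝ) * ∑ δ, sg (δ l) * g δ) ^ 2 ≤ (1 / 2 ^ m : ℝ) * ∑ δ, g δ ^ 2 := by
  set c : Fin m → ℝ := fun l => (1 / 2 ^ m : ℝ) * ∑ δ, sg (δ l) * g δ with hc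
  have h2 : (0:ℝ) < 2 ^ m := by positivity
  have hc2 : ∀ l, ∑ δ, sg (δ l) * g δ = 2 ^ m * c l := by
    intro l; simp only [hc]; field_simp
  have h0 : 0 ≤ ∑ δ : Fin m → Bool, (g δ - ∑ l, c l * sg (δ l)) ^ 2 := Finset.sum_nonneg fun _ _ => sq_nonneg _
  have e : ∑ δ : Fin m → Bool, (g δ - ∑ l, c l * sg (δ l)) ^ 2 = ∑ δ, g δ ^ 2 - 2 ^ m * ∑ l, c l ^ 2 := by
    have e1 : ∀ δ : Fin m → Bool, (g δ - ∑ l, c l * sg (δ l)) ^ 2 =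
        g δ ^ 2 - 2 * ∑ l, c l * (sg (δ l) * g δ) + ∑ k, ∑ l, c k * c l * (sg (δ k) * sg (δ l)) := by
      intro δ
      have e2 : ∑ k, ∑ l, c k * c l * (sg (δ k) * sg (δ l)) = (∑ l, c l * sg (δ l)) ^ 2 := by
        rw [sq, Finset.sum_mul_sum]
        exact Finset.sum_congr rfl fun k _ => Finset.sum_congr rfl fun l _ => by ring
      have e3 : ∑ l, c l * (sg (δ l) * g δ) = (∑ l, c l * sg (δ l)) * g δ := by
        rw [Finset.sum_mul]; exact Finset.sum_congr rfl fun l _ => by ring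
      rw [e2, e3]; ring
    simp only [e1]
    rw [Finset.sum_add_distrib, Finset.sum_sub_distrib, ← Finset.mul_sum]
    have e4 : ∑ δ : Fin m → Bool, ∑ l, c l * (sg (δ l) * g δ) = 2 ^ m * ∑ l, c l ^ 2 := by
      rw [Finset.sum_comm, Finset.mul_sum]
      refine Finset.sum_congr rfl fun l _ => ?_
      rw [← Finset.mul_sum, hc2]; ring
    have e5 : ∑ δ : Fin m → Bool, ∑ k, ∑ l, c k * c l * (sg (δ k) * sg (δ l)) = 2 ^ m * ∑ l, c l ^ 2 := by
      rw [Finset.sum_comm, Finset.mul_sum]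
      refine Finset.sum_congr rfl fun k _ => ?_
      rw [Finset.sum_comm]
      simp only [← Finset.mul_sum, sg_orth]
      simp; ring
    rw [e4, e5]; ring
  rw [e] at h0
  change (∑ l, c l ^ 2) ≤ _
  rw [one_div, inv_mul_eq_div, le_div_iff₀ h2]
  linarith

section core
variable {X : Type*} [NormedAddCommGroup X] [NormedSpace ℝ X]

lemma bil_cube {m : ℕ} (S : X →ₗ[ℝ] X →ₗ[ℝ] ℝ) (z : Fin m → X) (ε : Fin m → Bool) :
    S (∑ k, sg (ε k) • z k) (∑ k, sg (ε k) • z k) = ∑ k, ∑ l, sg (ε k) * sg (ε l) * S (z k) (z l) := by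
  simp only [map_sum, map_smul, LinearMap.sum_apply, LinearMap.smul_apply, smul_eq_mul, Finset.mul_sum]
  rw [Finset.sum_comm]
  refine Finset.sum_congr rfl fun k _ => Finset.sum_congr rfl fun l _ => by ring

lemma bil_diag {m : ℕ} (S : X →ₗ[ℝ] X →ₗ[ℝ] ℝ) (z : Fin m → X) :
    ∑ η : Fin m → Bool, S (∑ k, sg (η k) • z k) (∑ k, sg (η k) • z k) = 2 ^ m * ∑ k, S (z k) (z k) := by
  simp only [bil_cube]
  rw [Finset.sum_comm, Finset.mul_sum]
  refine Finset.sum_congr rfl fun k _ => ?_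
  rw [Finset.sum_comm]
  simp only [← Finset.sum_mul, sg_orth]
  simp

lemma offdiag_bound {m : ℕ} (S : (Fin m → Bool) → X →ₗ[ℝ] X →ₗ[ℝ] ℝ) (Λ : ℝ)
    (hS : ∀ ε x, |S ε x x| ≤ Λ * ‖x‖ ^ 2) (z : Fin m → X) :
    |∑ k, ∑ l, if k = l then 0 else ∑ ε, sg (ε k) * sg (ε l) * S ε (z k) (z l)| ≤
      2 * (Λ * ∑ ε : Fin m → Bool, ‖∑ k, sg (ε k) • z k‖ ^ 2) := by
  have e : (∑ k, ∑ l, if k = l then 0 else ∑ ε, sg (ε k) * sg (ε l) * S ε (z k) (z l)) =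
      ∑ ε, S ε (∑ k, sg (ε k) • z k) (∑ k, sg (ε k) • z k) -
        ∑ ε : Fin m → Bool, (1 / 2 ^ m : ℝ) * ∑ η : Fin m → Bool, S ε (∑ k, sg (η k) • z k) (∑ k, sg (η k) • z k) := by
    have e1 : ∑ ε, S ε (∑ k, sg (ε k) • z k) (∑ k, sg (ε k) • z k) =
        ∑ k, ∑ l, ∑ ε, sg (ε k) * sg (ε l) * S ε (z k) (z l) := by
      simp only [bil_cube]
      rw [Finset.sum_comm]
      refine Finset.sum_congr rfl fun k _ => ?_
      rw [Finset.sum_comm]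
    have e2 : ∑ ε : Fin m → Bool, (1 / 2 ^ m : ℝ) * ∑ η : Fin m → Bool, S ε (∑ k, sg (η k) • z k) (∑ k, sg (η k) • z k)
        = ∑ k, ∑ l, if k = l then ∑ ε, sg (ε k) * sg (ε l) * S ε (z k) (z l) else 0 := by
      simp only [bil_diag]
      simp only [Finset.sum_ite_eq, Finset.mem_univ, if_true, sg_sq, one_mul]
      rw [Finset.sum_comm]
      refine Finset.sum_congr rfl fun ε _ => ?_
      field_simp
    rw [e1, e2, ← Finset.sum_sub_distrib]
    refine Finset.sum_congr rfl fun k _ => ?_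
    rw [← Finset.sum_sub_distrib]
    refine Finset.sum_congr rfl fun l _ => ?_
    split_ifs <;> simp
  rw [e]
  refine (abs_sub _ _).trans ?_
  have h1 : |∑ ε, S ε (∑ k, sg (ε k) • z k) (∑ k, sg (ε k) • z k)| ≤
      Λ * ∑ ε : Fin m → Bool, ‖∑ k, sg (ε k) • z k‖ ^ 2 := by
    refine (Finset.abs_sum_le_sum_abs _ _).trans ?_
    rw [Finset.mul_sum]
    exact Finset.sum_le_sum fun ε _ => hS ε _
  have h2 : |∑ ε : Fin m → Bool, (1 / 2 ^ m : ℝ) * ∑ η : Fin m → Bool, S ε (∑ k, sg (η k) • z k) (∑ k, sg (η k) • z k)| ≤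
      Λ * ∑ ε : Fin m → Bool, ‖∑ k, sg (ε k) • z k‖ ^ 2 := by
    refine (Finset.abs_sum_le_sum_abs _ _).trans ?_
    have : ∀ ε ∈ (Finset.univ : Finset (Fin m → Bool)),
        |(1 / 2 ^ m : ℝ) * ∑ η : Fin m → Bool, S ε (∑ k, sg (η k) • z k) (∑ k, sg (η k) • z k)| ≤
        (1 / 2 ^ m : ℝ) * (Λ * ∑ ε : Fin m → Bool, ‖∑ k, sg (ε k) • z k‖ ^ 2) := by
      intro ε _
      rw [abs_mul, abs_of_pos (by positivity : (0:ℝ) < 1 / 2 ^ m)]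
      refine mul_le_mul_of_nonneg_left ?_ (by positivity)
      refine (Finset.abs_sum_le_sum_abs _ _).trans ?_
      rw [Finset.mul_sum]
      exact Finset.sum_le_sum fun η _ => hS ε _
    refine (Finset.sum_le_sum this).trans (le_of_eq ?_)
    rw [Finset.sum_const]
    simp
  linarith

lemma trace_ineq {m : ℕ} (Z : Fin m → Fin m → ℝ) :
    (∑ k, Z k k) ^ 2 - 3 * ∑ k, ∑ l, Z k l ^ 2 ≤
      ∑ k, ∑ l, if k = l then 0 else (Z k k * Z l l + Z l k * Z k l) := by
  have e : (∑ k, ∑ l, if k = l then 0 else (Z k k * Z l l + Z l k * Z k l)) =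
      (∑ k, Z k k) ^ 2 + ∑ k, ∑ l, Z l k * Z k l - 2 * ∑ k, Z k k ^ 2 := by
    have e1 : ∀ k l, (if k = l then 0 else (Z k k * Z l l + Z l k * Z k l)) =
        Z k k * Z l l + Z l k * Z k l - if k = l then 2 * Z k k ^ 2 else 0 := by
      intro k l; split_ifs with h
      · subst h; ring
      · ring
    simp only [e1, Finset.sum_sub_distrib, Finset.sum_add_distrib]
    rw [sq, Finset.sum_mul_sum]
    simp [Finset.mul_sum]
  rw [e]
  have h1 : ∑ k, Z k k ^ 2 ≤ ∑ k, ∑ l, Z k l ^ 2 :=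
    Finset.sum_le_sum fun k _ => Finset.single_le_sum (f := fun l => Z k l ^ 2) (fun _ _ => sq_nonneg _) (Finset.mem_univ k)
  have h2 : -(∑ k, ∑ l, Z k l ^ 2) ≤ ∑ k, ∑ l, Z l k * Z k l := by
    have h3 : ∑ k, ∑ l, Z l k ^ 2 = ∑ k, ∑ l, Z k l ^ 2 := Finset.sum_comm
    have h4 : ∑ k, ∑ l, (-(Z l k ^ 2 + Z k l ^ 2) / 2) ≤ ∑ k, ∑ l, Z l k * Z k l :=
      Finset.sum_le_sum fun k _ => Finset.sum_le_sum fun l _ => by nlinarith [sq_nonneg (Z l k + Z k l)]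
    have h5 : ∑ k, ∑ l, (-(Z l k ^ 2 + Z k l ^ 2) / 2) = -(∑ k, ∑ l, Z k l ^ 2) := by
      have : ∀ k l, (-(Z l k ^ 2 + Z k l ^ 2) / 2) = (-1/2) * Z l k ^ 2 + (-1/2) * Z k l ^ 2 := fun k l => by ring
      simp only [this, Finset.sum_add_distrib, ← Finset.mul_sum]
      rw [h3]; ring
    linarith
  linarith

end core

section core2
variable {X : Type*} [NormedAddCommGroup X] [NormedSpace ℝ X]

lemma norming (f : StrongDual ℝ X) : ∃ x : X, ‖x‖ ≤ 1 ∧ ‖f‖ / 2 ≤ f x := by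
  by_cases h : ‖f‖ = 0
  · exact ⟨0, by simp, by simp [h]⟩
  · have hpos : 0 < ‖f‖ := lt_of_le_of_ne (norm_nonneg _) (Ne.symm h)
    obtain ⟨x, hx, hfx⟩ := ContinuousLinearMap.exists_lt_apply_of_lt_opNorm f (half_lt_self hpos)
    rcases le_or_gt 0 (f x) with h0 | h0
    · exact ⟨x, hx.le, by rw [Real.norm_eq_abs, abs_of_nonneg h0] at hfx; exact hfx.le⟩
    · refine ⟨-x, by rw [norm_neg]; exact hx.le, ?_⟩
      rw [Real.norm_eq_abs, abs_of_neg h0] at hfx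
      rw [map_neg]; exact hfx.le

lemma sum_dual_apply {m : ℕ} (φ : Fin m → StrongDual ℝ X) (δ : Fin m → Bool) (x : X) :
    (∑ l, sg (δ l) • φ l) x = ∑ l, sg (δ l) * φ l x := by
  simp [ContinuousLinearMap.sum_apply]

lemma sum_abs_le {m : ℕ} (φ : Fin m → StrongDual ℝ X) (A : ℝ)
    (h : ∀ δ : Fin m → Bool, ‖∑ l, sg (δ l) • φ l‖ ≤ A) (x : X) : ∑ l, |φ l x| ≤ A * ‖x‖ := by
  classical
  have h1 := (∑ l, sg (decide (0 ≤ φ l x)) • φ l).le_opNorm x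
  rw [sum_dual_apply φ (fun l => decide (0 ≤ φ l x))] at h1
  have e : ∑ l, sg (decide (0 ≤ φ l x)) * φ l x = ∑ l, |φ l x| := by
    refine Finset.sum_congr rfl fun l _ => ?_
    by_cases h0 : 0 ≤ φ l x
    · simp [sg, h0, abs_of_nonneg h0]
    · simp [sg, h0, abs_of_neg (not_le.1 h0)]
  rw [e] at h1
  have h2 := h (fun l => decide (0 ≤ φ l x))
  calc _ ≤ ‖∑ l, |φ l x|‖ := le_abs_self _
    _ ≤ _ := h1
    _ ≤ _ := by gcongr

lemma sum_sq_le {m : ℕ} (φ : Fin m → StrongDual ℝ X) (A R : ℝ) (hA : 0 ≤ A) (hR0 : 0 ≤ R) (hR : ∀ l, ‖φ l‖ ≤ R)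
    (h : ∀ δ : Fin m → Bool, ‖∑ l, sg (δ l) • φ l‖ ≤ A) (x : X) (hx : ‖x‖ ≤ 1) :
    ∑ l, φ l x ^ 2 ≤ R * A := by
  have h1 := sum_abs_le φ A h x
  have h2 : ∀ l, φ l x ^ 2 ≤ R * |φ l x| := by
    intro l
    have h3 : |φ l x| ≤ R := by
      have := (φ l).le_opNorm x
      rw [Real.norm_eq_abs] at this
      have h4 : ‖φ l‖ * ‖x‖ ≤ R * 1 := mul_le_mul (hR l) hx (norm_nonneg _) hR0
      linarith
    rw [← sq_abs, sq]
    exact mul_le_mul_of_nonneg_right h3 (abs_nonneg _)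
  calc _ ≤ ∑ l, R * |φ l x| := Finset.sum_le_sum fun l _ => h2 l
    _ = R * ∑ l, |φ l x| := by rw [Finset.mul_sum]
    _ ≤ R * (A * ‖x‖) := by gcongr
    _ ≤ R * (A * 1) := by gcongr
    _ = _ := by ring

lemma a0_large {m : ℕ} (p T : ℝ) (hp : 1 < p) (hT : 0 ≤ T) (h : HasTyp X p T) (φ : Fin m → StrongDual ℝ X) (A : ℝ)
    (hA : 0 ≤ A)
    (hφ : ∀ l, 1 ≤ ‖φ l‖) (hup : ∀ δ : Fin m → Bool, ‖∑ l, sg (δ l) • φ l‖ ≤ A) :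
    (m : ℝ) / 2 ≤ A * (T * (m : ℝ) ^ (1 / p)) := by
  choose y hy1 hy2 using fun l => norming (φ l)
  have h1 : (m : ℝ) / 2 ≤ ∑ l, φ l (y l) := by
    have : ∑ _l : Fin m, (1 / 2 : ℝ) ≤ ∑ l, φ l (y l) :=
      Finset.sum_le_sum fun l _ => by linarith [hy2 l, hφ l]
    simp at this
    linarith
  have h2 : 2 ^ m * ∑ l, φ l (y l) = ∑ ε : Fin m → Bool, (∑ l, sg (ε l) • φ l) (∑ k, sg (ε k) • y k) := by
    have e : ∀ ε : Fin m → Bool, (∑ l, sg (ε l) • φ l) (∑ k, sg (ε k) • y k) =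
        ∑ l, ∑ k, sg (ε l) * sg (ε k) * φ l (y k) := by
      intro ε
      rw [sum_dual_apply]
      refine Finset.sum_congr rfl fun l _ => ?_
      rw [map_sum, Finset.mul_sum]
      refine Finset.sum_congr rfl fun k _ => ?_
      rw [map_smul, smul_eq_mul]; ring
    simp only [e]
    rw [Finset.sum_comm, Finset.mul_sum]
    refine Finset.sum_congr rfl fun l _ => ?_
    rw [Finset.sum_comm]
    simp only [← Finset.sum_mul, sg_orth]
    simp
  have h3 : ∑ ε : Fin m → Bool, (∑ l, sg (ε l) • φ l) (∑ k, sg (ε k) • y k) ≤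
      A * ∑ ε : Fin m → Bool, ‖∑ k, sg (ε k) • y k‖ := by
    rw [Finset.mul_sum]
    refine Finset.sum_le_sum fun ε _ => ?_
    refine (le_abs_self _).trans (((∑ l, sg (ε l) • φ l).le_opNorm _).trans ?_)
    exact mul_le_mul_of_nonneg_right (hup ε) (norm_nonneg _)
  have h4 := h m y
  rw [div_le_iff₀ (by positivity)] at h4
  have h5 : (∑ i, ‖y i‖ ^ p) ^ (1 / p) ≤ (m : ℝ) ^ (1 / p) := by
    refine Real.rpow_le_rpow (Finset.sum_nonneg fun i _ => Real.rpow_nonneg (norm_nonneg _) _) ?_ (by positivity)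
    have : ∑ i, ‖y i‖ ^ p ≤ ∑ _i : Fin m, (1:ℝ) :=
      Finset.sum_le_sum fun i _ => Real.rpow_le_one (norm_nonneg _) (hy1 i) (by linarith)
    simpa using this
  have h6 : A * ∑ ε : Fin m → Bool, ‖∑ k, sg (ε k) • y k‖ ≤ A * (T * (m : ℝ) ^ (1 / p) * 2 ^ m) := by
    refine mul_le_mul_of_nonneg_left (h4.trans ?_) hA
    gcongr
  have h7 : (0:ℝ) < 2 ^ m := by positivity
  have h8 : 2 ^ m * ∑ l, φ l (y l) ≤ 2 ^ m * (A * (T * (m : ℝ) ^ (1 / p))) := by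
    rw [h2]; linarith
  exact h1.trans (le_of_mul_le_mul_left h8 h7)

lemma core_ineq {m : ℕ} (φ : Fin m → StrongDual ℝ X) (a0 R t Λ C : ℝ) (ha0 : 0 ≤ a0) (hR0 : 0 ≤ R)
    (hΛ : 0 ≤ Λ) (hR : ∀ l, ‖φ l‖ ≤ R)
    (hup : ∀ δ : Fin m → Bool, ‖∑ l, sg (δ l) • φ l‖ ≤ 3 * a0)
    (hlow : ∀ δ : Fin m → Bool, a0 ≤ 3 * ‖∑ l, sg (δ l) • φ l‖) (hC0 : 0 ≤ C)
    (hC : ∀ F : (Fin m → Bool) → X,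
      ∑ ω : Fin m → Bool, ‖∑ i, sg (ω i) • ((1 / 2 ^ m : ℝ) • ∑ η : Fin m → Bool, sg (η i) • F η)‖ ^ 2
        ≤ C * ∑ ω, ‖F ω‖ ^ 2)
    (S : (Fin m → Bool) → X →ₗ[ℝ] X →ₗ[ℝ] ℝ) (hS : ∀ ε x, |S ε x x| ≤ Λ * ‖x‖ ^ 2)
    (hS2 : ∀ k l, k ≠ l → ∀ x y, ∑ ε, sg (ε k) * sg (ε l) * S ε x y =
      -(2 ^ m * t ^ 2 / 2 * (φ k x * φ l y + φ l x * φ k y))) :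
    t ^ 2 * ((a0 / 6) ^ 2 - 9 * R * a0) ≤ 4 * Λ * C := by
  choose x hx1 hx2 using fun δ : Fin m → Bool => norming (∑ l, sg (δ l) • φ l)
  set z : Fin m → X := fun l => (1 / 2 ^ m : ℝ) • ∑ δ : Fin m → Bool, sg (δ l) • x δ with hz
  have h2m : (0:ℝ) < 2 ^ m := by positivity
  have hφz : ∀ k l, φ k (z l) = (1 / 2 ^ m : ℝ) * ∑ δ : Fin m → Bool, sg (δ l) * φ k (x δ) := by
    intro k l
    simp only [hz, map_smul, map_sum, smul_eq_mul]
  have htr : a0 / 6 ≤ ∑ k, φ k (z k) := by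
    simp only [hφz]
    rw [← Finset.mul_sum, Finset.sum_comm]
    have h1 : ∑ _δ : Fin m → Bool, a0 / 6 ≤ ∑ δ : Fin m → Bool, ∑ k, sg (δ k) * φ k (x δ) := by
      refine Finset.sum_le_sum fun δ _ => ?_
      rw [← sum_dual_apply]
      linarith [hx2 δ, hlow δ]
    simp at h1
    rw [one_div, inv_mul_eq_div, le_div_iff₀ h2m]
    linarith
  have hH : ∑ k, ∑ l, φ k (z l) ^ 2 ≤ 3 * R * a0 := by
    have h1 : ∀ k, ∑ l, φ k (z l) ^ 2 ≤ (1 / 2 ^ m : ℝ) * ∑ δ : Fin m → Bool, φ k (x δ) ^ 2 := by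
      intro k
      simp only [hφz]
      exact bessel (fun δ => φ k (x δ))
    refine (Finset.sum_le_sum fun k _ => h1 k).trans ?_
    rw [← Finset.mul_sum, Finset.sum_comm]
    have h3 : ∑ δ : Fin m → Bool, ∑ k, φ k (x δ) ^ 2 ≤ ∑ _δ : Fin m → Bool, R * (3 * a0) :=
      Finset.sum_le_sum fun δ _ => sum_sq_le φ (3 * a0) R (by linarith) hR0 hR hup (x δ) (hx1 δ)
    simp at h3
    rw [one_div, inv_mul_eq_div, div_le_iff₀ h2m]
    linarith
  have hoff := offdiag_bound S Λ hS z
  have hK : ∑ ε : Fin m → Bool, ‖∑ k, sg (ε k) • z k‖ ^ 2 ≤ C * 2 ^ m := by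
    refine (hC x).trans ?_
    refine mul_le_mul_of_nonneg_left ?_ hC0
    have : ∑ ω, ‖x ω‖ ^ 2 ≤ ∑ _ω : Fin m → Bool, (1:ℝ) :=
      Finset.sum_le_sum fun ω _ => pow_le_one₀ (norm_nonneg _) (hx1 ω)
    simpa using this
  have e : (∑ k, ∑ l, if k = l then 0 else ∑ ε, sg (ε k) * sg (ε l) * S ε (z k) (z l)) =
      -(2 ^ m * t ^ 2 / 2) * ∑ k, ∑ l, if k = l then 0 else
        (φ k (z k) * φ l (z l) + φ l (z k) * φ k (z l)) := by
    rw [Finset.mul_sum]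
    refine Finset.sum_congr rfl fun k _ => ?_
    rw [Finset.mul_sum]
    refine Finset.sum_congr rfl fun l _ => ?_
    split_ifs with hkl
    · simp
    · rw [hS2 k l hkl]; ring
  rw [e] at hoff
  have htri := trace_ineq (fun k l => φ k (z l))
  set W := ∑ k, ∑ l, if k = l then 0 else (φ k (z k) * φ l (z l) + φ l (z k) * φ k (z l)) with hW
  have h5 : 2 ^ m * t ^ 2 / 2 * W ≤ 2 * (Λ * (C * 2 ^ m)) := by
    have h6 := neg_abs_le (-(2 ^ m * t ^ 2 / 2) * W)
    have h7 : Λ * ∑ ε : Fin m → Bool, ‖∑ k, sg (ε k) • z k‖ ^ 2 ≤ Λ * (C * 2 ^ m) := by gcongr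
    linarith
  have h8 : (a0 / 6) ^ 2 - 9 * R * a0 ≤ W := by
    have h9 : (a0 / 6) ^ 2 ≤ (∑ k, φ k (z k)) ^ 2 := pow_le_pow_left₀ (by linarith) htr 2
    linarith
  have h10 : t ^ 2 * W ≤ 4 * Λ * C := by
    have : 2 ^ m * (t ^ 2 * W) ≤ 2 ^ m * (4 * Λ * C) := by linarith
    exact le_of_mul_le_mul_left this h2m
  exact (mul_le_mul_of_nonneg_left h8 (sq_nonneg t)).trans h10

def symBil (M : ContinuousMultilinearMap ℝ (fun _ : Fin 2 => X) ℝ) : X →ₗ[ℝ] X →ₗ[ℝ] ℝ :=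
  LinearMap.mk₂ ℝ (fun x y => (M ![x, y] + M ![y, x]) / 2)
    (by
      intro x x' y
      have u0 : ∀ w, Function.update ![x, y] 0 w = ![w, y] := fun w => by
        ext i; fin_cases i <;> simp
      have u1 : ∀ w, Function.update ![y, x] 1 w = ![y, w] := fun w => by
        ext i; fin_cases i <;> simp
      have h0 := M.map_update_add ![x, y] 0 x x'
      have h1 := M.map_update_add ![y, x] 1 x x'
      rw [u0, u0, u0] at h0
      rw [u1, u1, u1] at h1
      rw [h0, h1]; ring)
    (by
      intro c x y
      have u0 : ∀ w, Function.update ![x, y] 0 w = ![w, y] := fun w => by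
        ext i; fin_cases i <;> simp
      have u1 : ∀ w, Function.update ![y, x] 1 w = ![y, w] := fun w => by
        ext i; fin_cases i <;> simp
      have h0 := M.map_update_smul ![x, y] 0 c x
      have h1 := M.map_update_smul ![y, x] 1 c x
      rw [u0, u0] at h0
      rw [u1, u1] at h1
      rw [h0, h1]; simp only [smul_eq_mul]; ring)
    (by
      intro x y y'
      have u0 : ∀ w, Function.update ![y, x] 0 w = ![w, x] := fun w => by
        ext i; fin_cases i <;> simp
      have u1 : ∀ w, Function.update ![x, y] 1 w = ![x, w] := fun w => by
        ext i; fin_cases i <;> simp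
      have h0 := M.map_update_add ![y, x] 0 y y'
      have h1 := M.map_update_add ![x, y] 1 y y'
      rw [u0, u0, u0] at h0
      rw [u1, u1, u1] at h1
      rw [h0, h1]; ring)
    (by
      intro c x y
      have u0 : ∀ w, Function.update ![y, x] 0 w = ![w, x] := fun w => by
        ext i; fin_cases i <;> simp
      have u1 : ∀ w, Function.update ![x, y] 1 w = ![x, w] := fun w => by
        ext i; fin_cases i <;> simp
      have h0 := M.map_update_smul ![y, x] 0 c y
      have h1 := M.map_update_smul ![x, y] 1 c y
      rw [u0, u0] at h0
      rw [u1, u1] at h1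
      rw [h0, h1]; simp only [smul_eq_mul]; ring)

lemma symBil_apply (M : ContinuousMultilinearMap ℝ (fun _ : Fin 2 => X) ℝ) (x y : X) :
    symBil M x y = (M ![x, y] + M ![y, x]) / 2 := rfl

lemma symBil_diag (M : ContinuousMultilinearMap ℝ (fun _ : Fin 2 => X) ℝ) (x : X) :
    symBil M x x = M (fun _ => x) := by
  rw [symBil_apply]
  have : (![x, x] : Fin 2 → X) = fun _ => x := by
    ext i; fin_cases i <;> simp
  rw [this]; ring

lemma symBil_symm (M : ContinuousMultilinearMap ℝ (fun _ : Fin 2 => X) ℝ) (x y : X) :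
    symBil M x y = symBil M y x := by
  rw [symBil_apply, symBil_apply]; ring

lemma symBil_polar (M : ContinuousMultilinearMap ℝ (fun _ : Fin 2 => X) ℝ) (x y : X) :
    symBil M x y = (symBil M (x + y) (x + y) - symBil M x x - symBil M y y) / 2 := by
  simp only [map_add, LinearMap.add_apply]
  rw [symBil_symm M y x]; ring

lemma symBil_smul (M : ContinuousMultilinearMap ℝ (fun _ : Fin 2 => X) ℝ) (c : ℝ) (x : X) :
    symBil M (c • x) (c • x) = c ^ 2 * symBil M x x := by
  simp only [map_smul, LinearMap.smul_apply, smul_eq_mul]; ring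

end core2

section final
variable {X : Type*} [NormedAddCommGroup X] [NormedSpace ℝ X]

lemma Q_to_S (Q : (↥(UBall X) → ℝ) →ₗ[ℝ] (↥(UBall X) → ℝ)) (K : NNReal)
    (hQ1 : ∀ f ∈ Lip0B X, Q f ∈ PhomB 2 X) (hQ2 : ∀ f ∈ PhomB 2 X, Q f = f)
    (hQ3 : ∀ f ∈ Lip0B X, ∀ L : NNReal, LipschitzWith L f → LipschitzWith (K * L) (Q f))
    {m : ℕ} (φ : Fin m → StrongDual ℝ X) (t A : ℝ) (ht : 0 ≤ t) (hA : 0 ≤ A)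
    (hsq : ∀ x : X, ‖x‖ ≤ 1 → ∑ l, (t * φ l x) ^ 2 ≤ 1)
    (habs : ∀ x : X, ∑ l, |φ l x| ≤ A * ‖x‖) :
    ∃ S : (Fin m → Bool) → X →ₗ[ℝ] X →ₗ[ℝ] ℝ,
      (∀ ε x, |S ε x x| ≤ (K * (3 * t * A)) * ‖x‖ ^ 2) ∧
      (∀ k l, k ≠ l → ∀ x y, ∑ ε, sg (ε k) * sg (ε l) * S ε x y =
        -(2 ^ m * t ^ 2 / 2 * (φ k x * φ l y + φ l x * φ k y))) := by
  have hmem : ∀ x : ↥(UBall X), ‖(x : X)‖ ≤ 1 := fun x => mem_closedBall_zero_iff.1 x.2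
  set f : (Fin m → Bool) → ↥(UBall X) → ℝ := fun ε x => (rz (fun l => t * φ l x) ε).re - 1 with hf
  set L : NNReal := Real.toNNReal (3 * t * A) with hL
  have hLc : (L : ℝ) = 3 * t * A := Real.coe_toNNReal _ (by positivity)
  have hlip : ∀ ε, LipschitzWith L (f ε) := by
    intro ε
    refine LipschitzWith.of_dist_le_mul fun x y => ?_
    rw [Real.dist_eq, hLc, Subtype.dist_eq, dist_eq_norm]
    simp only [hf]
    rw [sub_sub_sub_cancel_right]
    refine (rz_lip _ _ ε (hsq x (hmem x)) (hsq y (hmem y))).trans ?_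
    have e : ∀ l, |t * φ l x - t * φ l y| = t * |φ l ((x : X) - y)| := by
      intro l
      rw [map_sub, ← mul_sub, abs_mul, abs_of_nonneg ht]
    simp only [e]
    rw [← Finset.mul_sum]
    have := mul_le_mul_of_nonneg_left (habs ((x : X) - y)) ht
    linarith
  have hf0 : ∀ ε, f ε (zeroB X) = 0 := by
    intro ε
    simp [hf, rz, zeroB]
  have hfL : ∀ ε, f ε ∈ Lip0B X := fun ε => ⟨⟨L, hlip ε⟩, hf0 ε⟩
  choose M hM using fun ε => hQ1 (f ε) (hfL ε)
  have hbound : ∀ ε x, |symBil (M ε) x x| ≤ (K * (3 * t * A)) * ‖x‖ ^ 2 := by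
    intro ε
    have hball : ∀ u : X, ‖u‖ ≤ 1 → |symBil (M ε) u u| ≤ (K * (3 * t * A)) * ‖u‖ := by
      intro u hu
      have h1 := (hQ3 (f ε) (hfL ε) L (hlip ε)).dist_le_mul ⟨u, mem_closedBall_zero_iff.2 hu⟩ (zeroB X)
      rw [Real.dist_eq, hM, hM, Subtype.dist_eq, dist_eq_norm, NNReal.coe_mul, hLc] at h1
      rw [← symBil_diag, ← symBil_diag] at h1
      simpa [zeroB] using h1
    intro x
    by_cases hx : x = 0
    · simp [hx]
    · have hn : 0 < ‖x‖ := norm_pos_iff.2 hx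
      have hu : ‖(‖x‖⁻¹ • x)‖ = 1 := by
        rw [norm_smul, norm_inv, norm_norm, inv_mul_cancel₀ hn.ne']
      have h2 := hball (‖x‖⁻¹ • x) hu.le
      have e : x = ‖x‖ • (‖x‖⁻¹ • x) := by rw [smul_smul, mul_inv_cancel₀ hn.ne', one_smul]
      have e2 : symBil (M ε) x x = ‖x‖ ^ 2 * symBil (M ε) (‖x‖⁻¹ • x) (‖x‖⁻¹ • x) := by
        rw [← symBil_smul, ← e]
      rw [hu, mul_one] at h2
      rw [e2, abs_mul, abs_of_nonneg (by positivity : 0 ≤ ‖x‖ ^ 2), mul_comm]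
      gcongr
  refine ⟨fun ε => symBil (M ε), hbound, ?_⟩
  intro k l hkl
  set g : ↥(UBall X) → ℝ := fun x => -(2 ^ m * t ^ 2) * (φ k x * φ l x) with hg
  have hsum : ∑ ε, (sg (ε k) * sg (ε l)) • f ε = g := by
    ext x
    rw [Finset.sum_apply]
    simp only [Pi.smul_apply, smul_eq_mul, hf, mul_sub, mul_one, Finset.sum_sub_distrib]
    rw [rz_fourier _ k l hkl, sg_orth, if_neg hkl]
    simp only [hg]; ring
  have hgP : g ∈ PhomB 2 X := by
    refine ⟨(-(2 ^ m * t ^ 2)) • (ContinuousMultilinearMap.mkPiAlgebra ℝ (Fin 2) ℝ).compContinuousLinearMap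
      (fun i => (![φ k, φ l] i : X →L[ℝ] ℝ)), fun x => ?_⟩
    simp [hg]
  have hQg : ∑ ε, (sg (ε k) * sg (ε l)) • Q (f ε) = g := by
    rw [← hQ2 g hgP, ← hsum, map_sum]
    simp only [map_smul]
  have hball : ∀ u : X, ‖u‖ ≤ 1 → ∑ ε, sg (ε k) * sg (ε l) * symBil (M ε) u u = -(2 ^ m * t ^ 2) * (φ k u * φ l u) := by
    intro u hu
    have h1 := congrFun hQg ⟨u, mem_closedBall_zero_iff.2 hu⟩
    rw [Finset.sum_apply] at h1
    simp only [Pi.smul_apply, smul_eq_mul, hM] at h1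
    simp only [symBil_diag]
    exact h1
  have hall : ∀ x : X, ∑ ε, sg (ε k) * sg (ε l) * symBil (M ε) x x = -(2 ^ m * t ^ 2) * (φ k x * φ l x) := by
    intro x
    by_cases hx : x = 0
    · simp [hx]
    · have hn : 0 < ‖x‖ := norm_pos_iff.2 hx
      have hu : ‖(‖x‖⁻¹ • x)‖ = 1 := by
        rw [norm_smul, norm_inv, norm_norm, inv_mul_cancel₀ hn.ne']
      have h2 := hball (‖x‖⁻¹ • x) hu.le
      simp only [symBil_smul] at h2
      rw [map_smul, map_smul, smul_eq_mul, smul_eq_mul] at h2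
      have e1 : ∑ ε : Fin m → Bool, sg (ε k) * sg (ε l) * (‖x‖⁻¹ ^ 2 * symBil (M ε) x x) =
          ‖x‖⁻¹ ^ 2 * ∑ ε : Fin m → Bool, sg (ε k) * sg (ε l) * symBil (M ε) x x := by
        rw [Finset.mul_sum]; exact Finset.sum_congr rfl fun _ _ => by ring
      rw [e1] at h2
      have hne : ‖x‖⁻¹ ^ 2 ≠ 0 := by positivity
      refine mul_left_cancel₀ hne ?_
      rw [h2]; ring
  intro x y
  have e : ∀ ε : Fin m → Bool, sg (ε k) * sg (ε l) * symBil (M ε) x y =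
      (sg (ε k) * sg (ε l) * symBil (M ε) (x + y) (x + y) - sg (ε k) * sg (ε l) * symBil (M ε) x x -
        sg (ε k) * sg (ε l) * symBil (M ε) y y) / 2 := by
    intro ε
    rw [symBil_polar]; ring
  simp only [e]
  rw [← Finset.sum_div, Finset.sum_sub_distrib, Finset.sum_sub_distrib, hall, hall, hall]
  simp only [map_add]; ring

theorem main_aux [CompleteSpace X] (hinf : ¬ FiniteDimensional ℝ X)
    (p : ℝ) (hp : 1 < p) (T : ℝ) (hT : 0 ≤ T) (htyp : HasTyp X p T)
    (Q : (↥(UBall X) → ℝ) →ₗ[ℝ] (↥(UBall X) → ℝ)) (K : NNReal)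
    (hQ1 : ∀ f ∈ Lip0B X, Q f ∈ PhomB 2 X) (hQ2 : ∀ f ∈ PhomB 2 X, Q f = f)
    (hQ3 : ∀ f ∈ Lip0B X, ∀ L : NNReal, LipschitzWith L f → LipschitzWith (K * L) (Q f)) : False := by
  obtain ⟨R, hR0, hR⟩ := exists_uncond (dual_infinite X hinf)
  obtain ⟨C, hC0, hC⟩ := Kconvex p hp T hT htyp
  set D : ℝ := 36 * K * C with hD
  have hD0 : 0 ≤ D := by positivity
  set A : ℝ := 648 * R + 15552 * R * D ^ 2 with hAdef
  have hA0 : 0 < A := by positivity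
  have hpp : 0 < p := by linarith
  obtain ⟨m, hm, hm1⟩ : ∃ m : ℕ, 6 * T * A < (m : ℝ) ^ (1 - 1 / p) ∧ 1 ≤ m := by
    have h1 : Filter.Tendsto (fun N : ℕ => (N : ℝ) ^ (1 - 1 / p)) Filter.atTop Filter.atTop :=
      (tendsto_rpow_atTop (by
        have : 1 / p < 1 := by rw [div_lt_one hpp]; exact hp
        linarith)).comp tendsto_natCast_atTop_atTop
    exact ((h1.eventually_gt_atTop (6 * T * A)).and (Filter.eventually_ge_atTop 1)).exists
  obtain ⟨φ, hφ, hφs⟩ := hR m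
  set a0 : ℝ := ‖∑ l, sg ((fun _ => true : Fin m → Bool) l) • φ l‖ with ha0
  have ha00 : 0 ≤ a0 := norm_nonneg _
  have hup : ∀ δ : Fin m → Bool, ‖∑ l, sg (δ l) • φ l‖ ≤ 3 * a0 := fun δ => hφs δ _
  have hlow : ∀ δ : Fin m → Bool, a0 ≤ 3 * ‖∑ l, sg (δ l) • φ l‖ := fun δ => hφs _ δ
  have hmp : (0:ℝ) < m := by exact_mod_cast hm1
  have hbig : A < a0 := by
    by_contra hc
    push Not at hc
    have h1 := a0_large p T hp hT htyp φ (3 * a0) (by positivity) (fun l => (hφ l).1) hup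
    have h2 : 3 * a0 * (T * (m : ℝ) ^ (1 / p)) ≤ 3 * A * (T * (m : ℝ) ^ (1 / p)) := by gcongr
    have h3 : (m : ℝ) = (m : ℝ) ^ (1 - 1 / p) * (m : ℝ) ^ (1 / p) := by
      rw [← Real.rpow_add hmp]; simp
    have h4 : 6 * T * A * (m : ℝ) ^ (1 / p) < (m : ℝ) ^ (1 - 1 / p) * (m : ℝ) ^ (1 / p) := by gcongr
    rw [← h3] at h4
    linarith
  have ha0p : 0 < a0 := hA0.trans hbig
  set w : ℝ := Real.sqrt (3 * R * a0) with hw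
  have hwp : 0 < w := Real.sqrt_pos.2 (by positivity)
  have hw2 : w ^ 2 = 3 * R * a0 := Real.sq_sqrt (by positivity)
  have hsq : ∀ x : X, ‖x‖ ≤ 1 → ∑ l, (1 / w * φ l x) ^ 2 ≤ 1 := by
    intro x hx
    have h1 := sum_sq_le φ (3 * a0) R (by positivity) hR0.le (fun l => (hφ l).2) hup x hx
    simp only [mul_pow]
    rw [← Finset.mul_sum, div_pow, one_pow, one_div, inv_mul_eq_div, div_le_one (by positivity), hw2]
    linarith
  obtain ⟨S, hS1, hS2⟩ := Q_to_S Q K hQ1 hQ2 hQ3 φ (1 / w) (3 * a0) (by positivity) (by positivity) hsq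
    (sum_abs_le φ (3 * a0) hup)
  have hcore := core_ineq φ a0 R (1 / w) (K * (3 * (1 / w) * (3 * a0))) C ha00 hR0.le (by positivity)
    (fun l => (hφ l).2) hup hlow hC0 (hC m) S hS1 hS2
  have h5 : a0 / 36 - 9 * R ≤ D * w := by
    have e1 : (1 / w) ^ 2 * ((a0 / 6) ^ 2 - 9 * R * a0) = (a0 / w ^ 2) * (a0 / 36 - 9 * R) := by
      field_simp; ring
    have e2 : 4 * (K * (3 * (1 / w) * (3 * a0))) * C = (a0 / w ^ 2) * (D * w) := by
      rw [hD]; field_simp; ring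
    rw [e1, e2] at hcore
    exact le_of_mul_le_mul_left hcore (by positivity)
  have h6 : a0 / 72 ≤ D * w := by
    have : 0 ≤ 15552 * R * D ^ 2 := by positivity
    linarith
  have h7 : (a0 / 72) ^ 2 ≤ (D * w) ^ 2 := pow_le_pow_left₀ (by positivity) h6 2
  rw [mul_pow, hw2] at h7
  have h8 : a0 * a0 ≤ a0 * (15552 * R * D ^ 2) := by linarith
  have h9 := le_of_mul_le_mul_left h8 ha0p
  linarith

end final

/-- **Theorem B (i).** If an infinite-dimensional Banach space `X` has non-trivial
Rademacher type (type `p` for some `p > 1`), then `P(²X)` is not complemented in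
`Lip₀(B_X)`. -/
theorem statement3 (X : Type*) [NormedAddCommGroup X] [NormedSpace ℝ X] [CompleteSpace X]
    (hinf : ¬ FiniteDimensional ℝ X)
    (p : ℝ) (hp : 1 < p) (T : ℝ)
    (htype : ∀ (m : ℕ) (x : Fin m → X),
      (∑ ε : Fin m → Bool, ‖∑ i, (if ε i then x i else - x i)‖) / 2 ^ m
        ≤ T * (∑ i, ‖x i‖ ^ p) ^ (1 / p)) :
    ¬ ∃ (Q : (↥(UBall X) → ℝ) →ₗ[ℝ] (↥(UBall X) → ℝ)) (K : NNReal),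
      (∀ f ∈ Lip0B X, Q f ∈ PhomB 2 X) ∧ (∀ f ∈ PhomB 2 X, Q f = f) ∧
      (∀ f ∈ Lip0B X, ∀ L : NNReal, LipschitzWith L f → LipschitzWith (K * L) (Q f)) := by
  rintro ⟨Q, K, hQ1, hQ2, hQ3⟩
  refine main_aux hinf p hp |T| (abs_nonneg T) (fun m x => ?_) Q K hQ1 hQ2 hQ3
  have h := htype m x
  have e : ∀ ε : Fin m → Bool, ∑ i, (if ε i then x i else - x i) = ∑ i, sg (ε i) • x i := by
    intro ε
    refine Finset.sum_congr rfl fun i _ => ?_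
    cases ε i <;> simp [sg]
  simp only [e] at h
  refine h.trans (mul_le_mul_of_nonneg_right (le_abs_self T) ?_)
  exact Real.rpow_nonneg (Finset.sum_nonneg fun i _ => Real.rpow_nonneg (norm_nonneg _) _) _
end
end

section
/- P(²ℓ₂) is not complemented in Lip₀(B_{ℓ₂}): there is no bounded linear projection from Lip₀(B_{ℓ₂}) onto the image of the space of 2-homogeneous polynomials on ℓ₂ under the restriction embedding. -/
open Metric Set Real

noncomputable section

/-- Sign attached to a Boolean. -/
def sgB (b : Bool) : ℝ := if b then 1 else -1

lemma sgB_sq (b : Bool) : sgB b * sgB b = 1 := by cases b <;> simp [sgB]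

lemma sgB_abs (b : Bool) : |sgB b| = 1 := by cases b <;> simp [sgB]

lemma exp_sum_le {N : ℕ} (a : Fin N → ℝ) (ha : ∑ i, a i ^ 2 ≤ 1) :
    ∑ ε : Fin N → Bool, Real.exp (∑ i, sgB (ε i) * a i) ≤ 2 * 2 ^ N := by
  have h1 : ∑ ε : Fin N → Bool, Real.exp (∑ i, sgB (ε i) * a i)
      = ∏ i, ∑ b : Bool, Real.exp (sgB b * a i) := by
    rw [Finset.prod_univ_sum, Fintype.piFinset_univ]
    simp [Real.exp_sum]
  rw [h1]
  have h2 : ∀ i, ∑ b : Bool, Real.exp (sgB b * a i) ≤ 2 * Real.exp (a i ^ 2 / 2) := by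
    intro i
    have := Real.cosh_le_exp_half_sq (a i)
    rw [Real.cosh_eq] at this
    simp [sgB]
    linarith
  calc _ ≤ ∏ i, (2 * Real.exp (a i ^ 2 / 2)) :=
        Finset.prod_le_prod (fun i _ => Finset.sum_nonneg fun b _ => (Real.exp_pos _).le)
          (fun i _ => h2 i)
    _ = 2 ^ N * Real.exp (∑ i, a i ^ 2 / 2) := by
        rw [Finset.prod_mul_distrib, Real.exp_sum]; simp
    _ ≤ 2 ^ N * 2 := by
        gcongr
        rw [← Finset.sum_div]
        have : Real.exp (1/2) ≤ 2 := by
          have h := Real.exp_one_lt_d9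
          have h3 : Real.exp (1/2) * Real.exp (1/2) = Real.exp 1 := by
            rw [← Real.exp_add]; norm_num
          nlinarith [Real.exp_pos (1/2)]
        refine le_trans (Real.exp_le_exp.2 ?_) this
        linarith
    _ = _ := by ring

lemma cube_sum_le {N : ℕ} (a : Fin N → ℝ) (ha : ∑ i, a i ^ 2 ≤ 1) :
    ∑ ε : Fin N → Bool, |∑ i, sgB (ε i) * a i| ^ 3 ≤ 24 * 2 ^ N := by
  have key : ∀ t : ℝ, |t| ^ 3 ≤ 6 * (Real.exp t + Real.exp (-t)) := by
    intro t
    have h := Real.pow_div_factorial_le_exp |t| (abs_nonneg t) 3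
    have h2 : Real.exp |t| ≤ Real.exp t + Real.exp (-t) := by
      rcases abs_cases t with ⟨h, _⟩ | ⟨h, _⟩ <;> rw [h] <;>
        linarith [Real.exp_pos t, Real.exp_pos (-t)]
    norm_num [Nat.factorial] at h
    linarith
  have h1 := exp_sum_le a ha
  have h2 := exp_sum_le (fun i => - a i) (by simpa using ha)
  calc _ ≤ ∑ ε : Fin N → Bool, 6 * (Real.exp (∑ i, sgB (ε i) * a i)
        + Real.exp (∑ i, sgB (ε i) * - a i)) := by
        refine Finset.sum_le_sum fun ε _ => ?_
        have := key (∑ i, sgB (ε i) * a i)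
        simpa using this
    _ ≤ _ := by
        rw [← Finset.mul_sum, Finset.sum_add_distrib]; linarith

lemma abs_sub_sin_le_cube (u : ℝ) : |u - Real.sin u| ≤ |u| ^ 3 := by
  have pos : ∀ u : ℝ, 0 ≤ u → |u - Real.sin u| ≤ |u| ^ 3 := by
    intro u hu
    rw [abs_of_nonneg (sub_nonneg.2 (Real.sin_le hu)), abs_of_nonneg hu]
    rcases hu.eq_or_lt with rfl | hu
    · simp
    by_cases h1 : u ≤ 1
    · have := Real.sin_gt_sub_cube hu
      have h3 : 0 < u ^ 3 := by positivity
      linarith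
    · push Not at h1
      by_cases h2 : u ≤ 2
      · have := Real.sin_nonneg_of_nonneg_of_le_pi hu.le (by linarith [Real.pi_gt_three])
        nlinarith [sq_nonneg (u-1), mul_pos hu hu]
      · have := Real.neg_one_le_sin u
        push Not at h2
        nlinarith [mul_pos hu hu, mul_pos (mul_pos hu hu) hu]
  rcases le_total 0 u with h | h
  · exact pos u h
  · have := pos (-u) (by linarith)
    rw [Real.sin_neg, abs_neg] at this
    rw [abs_sub_comm]
    convert this using 2
    ring

/-- The remainder of `(1 - cos (B t)) / B` after its quadratic part. -/
def hB (B t : ℝ) : ℝ := B / 2 * t ^ 2 - (1 - Real.cos (B * t)) / B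

lemma hB_lip {B : ℝ} (hB0 : 0 < B) (s t : ℝ) :
    |hB B s - hB B t| ≤ B ^ 3 * (|s| ^ 3 + |t| ^ 3) * |s - t| := by
  have hd : ∀ x : ℝ, HasDerivAt (hB B) (B * x - Real.sin (B * x)) x := by
    intro x
    have h1 : HasDerivAt (fun x => Real.cos (B * x)) (-Real.sin (B * x) * (B * 1)) x :=
      ((hasDerivAt_id x).const_mul B).cos
    have h2 := (((hasDerivAt_id x).pow 2).const_mul (B/2)).sub ((h1.const_sub 1).div_const B)
    refine h2.congr_deriv ?_
    simp
    field_simp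
  have := (convex_uIcc t s).norm_image_sub_le_of_norm_hasDerivWithin_le
    (f := hB B) (C := B ^ 3 * (|s| ^ 3 + |t| ^ 3)) (x := t) (y := s)
    (fun x _ => (hd x).hasDerivWithinAt) ?_ left_mem_uIcc right_mem_uIcc
  · simpa [Real.norm_eq_abs] using this
  · intro x hx
    rw [Real.norm_eq_abs]
    refine (abs_sub_sin_le_cube _).trans ?_
    rw [abs_mul, abs_of_pos hB0, mul_pow]
    gcongr
    have hm : |x| ≤ max |s| |t| := by
      rcases le_total t s with h | h
      · rw [uIcc_of_le h] at hx
        rw [max_comm]; exact abs_le_max_abs_abs hx.1 hx.2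
      · rw [uIcc_of_ge h] at hx
        exact abs_le_max_abs_abs hx.1 hx.2
    have h3 : |x| ^ 3 ≤ (max |s| |t|) ^ 3 := by gcongr
    rcases max_choice |s| |t| with h | h <;> rw [h] at h3 <;>
      linarith [pow_nonneg (abs_nonneg s) 3, pow_nonneg (abs_nonneg t) 3]

lemma pB_lip {B : ℝ} (hB0 : 0 < B) (s t : ℝ) :
    |(1 - Real.cos (B * s)) / B - (1 - Real.cos (B * t)) / B| ≤ |s - t| := by
  have h := Real.abs_cos_sub_cos_le (B * t) (B * s)
  have : (1 - Real.cos (B * s)) / B - (1 - Real.cos (B * t)) / B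
    = (Real.cos (B * t) - Real.cos (B * s)) / B := by ring
  rw [this, abs_div, abs_of_pos hB0, div_le_iff₀ hB0]
  refine h.trans ?_
  rw [← mul_sub, abs_mul, abs_of_pos hB0, abs_sub_comm, mul_comm]

section general
variable {E : Type*} [NormedAddCommGroup E] [InnerProductSpace ℝ E]

lemma phom_form {g : ↥(UBall E) → ℝ} (hg : g ∈ PhomB 2 E) :
    ∃ b : E →ₗ[ℝ] E →ₗ[ℝ] ℝ, ∀ x, g x = b x x := by
  obtain ⟨M, hM⟩ := hg
  have u0 : ∀ x y a : E, Function.update ![x, y] 0 a = ![a, y] := by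
    intro x y a; ext i; fin_cases i <;> rfl
  have u1 : ∀ x y a : E, Function.update ![x, y] 1 a = ![x, a] := by
    intro x y a; ext i; fin_cases i <;> rfl
  refine ⟨LinearMap.mk₂ ℝ (fun x y => M ![x, y]) ?_ ?_ ?_ ?_, ?_⟩
  · intro x x' y
    have := M.map_update_add ![x, y] 0 x x'
    rwa [u0, u0, u0] at this
  · intro c x y
    have := M.map_update_smul ![x, y] 0 c x
    rwa [u0, u0] at this
  · intro x y y'
    have := M.map_update_add ![x, y] 1 y y'
    rwa [u1, u1, u1] at this
  · intro c x y
    have := M.map_update_smul ![x, y] 1 c y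
    rwa [u1, u1] at this
  · intro x
    rw [hM, LinearMap.mk₂_apply]
    congr 1
    ext i
    fin_cases i <;> rfl

lemma phom_zero {g : ↥(UBall E) → ℝ} (hg : g ∈ PhomB 2 E) : g (zeroB E) = 0 := by
  obtain ⟨b, hb⟩ := phom_form hg
  rw [hb]; simp [zeroB]

lemma sq_mem_phom (c : ℝ) (y : E) :
    (fun x : ↥(UBall E) => c * (inner ℝ (x : E) y) ^ 2) ∈ PhomB 2 E := by
  refine ⟨c • (ContinuousMultilinearMap.mkPiAlgebra ℝ (Fin 2) ℝ).compContinuousLinearMap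
    (fun _ => innerSL ℝ y), ?_⟩
  intro x
  simp [real_inner_comm, sq]

lemma half_mem {x y : E} (hx : ‖x‖ ≤ 1) (hy : ‖y‖ ≤ 1) : (1 / 2 : ℝ) • (x + y) ∈ UBall E := by
  rw [UBall, mem_closedBall_zero_iff, norm_smul]
  have := norm_add_le x y
  norm_num
  linarith

lemma half_mem' {x : E} (hx : ‖x‖ ≤ 1) : (1 / 2 : ℝ) • x ∈ UBall E := by
  rw [UBall, mem_closedBall_zero_iff, norm_smul]
  norm_num
  linarith

/-- Polarised coefficient, as a functional on functions on the ball. -/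
def coefB (x y : E) (hx : ‖x‖ ≤ 1) (hy : ‖y‖ ≤ 1) : (↥(UBall E) → ℝ) →ₗ[ℝ] ℝ where
  toFun g := 2 * (g ⟨_, half_mem hx hy⟩ - g ⟨_, half_mem' hx⟩ - g ⟨_, half_mem' hy⟩)
  map_add' f g := by simp; ring
  map_smul' c g := by simp; ring

lemma coefB_eq {x y : E} (hx : ‖x‖ ≤ 1) (hy : ‖y‖ ≤ 1) {g : ↥(UBall E) → ℝ}
    (b : E →ₗ[ℝ] E →ₗ[ℝ] ℝ) (hb : ∀ x, g x = b x x) :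
    coefB x y hx hy g = (b x y + b y x) / 2 := by
  simp only [coefB, LinearMap.coe_mk, AddHom.coe_mk, hb]
  simp
  ring

lemma lip_le {g : ↥(UBall E) → ℝ} {L : NNReal} (hL : LipschitzWith L g)
    (h0 : g (zeroB E) = 0) (x : ↥(UBall E)) : |g x| ≤ L := by
  have := hL.dist_le_mul x (zeroB E)
  rw [h0, Real.dist_eq, sub_zero] at this
  refine this.trans ?_
  have h1 : dist x (zeroB E) ≤ 1 := x.2
  nlinarith [L.2, NNReal.coe_nonneg L]

lemma coefB_le {x y : E} (hx : ‖x‖ ≤ 1) (hy : ‖y‖ ≤ 1) {g : ↥(UBall E) → ℝ} {L : NNReal}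
    (hL : LipschitzWith L g) (h0 : g (zeroB E) = 0) : |coefB x y hx hy g| ≤ 6 * L := by
  simp only [coefB, LinearMap.coe_mk, AddHom.coe_mk]
  have h1 := abs_le.1 (lip_le hL h0 ⟨_, half_mem hx hy⟩)
  have h2 := abs_le.1 (lip_le hL h0 ⟨_, half_mem' hx⟩)
  have h3 := abs_le.1 (lip_le hL h0 ⟨_, half_mem' hy⟩)
  rw [abs_le]
  constructor <;> linarith [h1.1, h1.2, h2.1, h2.2, h3.1, h3.2]

/-- The cube vectors. -/
def cubeV (e : ℕ → E) (m : ℕ) (ε : Fin (m ^ 2) → Bool) : E :=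
  (1 / (m : ℝ)) • ∑ i, sgB (ε i) • e i

lemma inner_cubeV (e : ℕ → E) (m : ℕ) (ε : Fin (m ^ 2) → Bool) (x : E) :
    inner ℝ x (cubeV e m ε) = (1 / (m : ℝ)) * ∑ i, sgB (ε i) * inner ℝ (e i) x := by
  rw [cubeV, inner_smul_right, inner_sum]
  simp [inner_smul_right, real_inner_comm]

lemma inner_cubeV_self {e : ℕ → E} (he : Orthonormal ℝ e) {m : ℕ} (hm : 0 < m)
    (ε : Fin (m ^ 2) → Bool) : inner ℝ (cubeV e m ε) (cubeV e m ε) = (1 : ℝ) := by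
  have h1 : ∀ i : Fin (m ^ 2), inner ℝ (e i) (cubeV e m ε) = (1 / (m : ℝ)) * sgB (ε i) := by
    intro i
    have he' : Orthonormal ℝ (fun i : Fin (m ^ 2) => e i) := he.comp _ Fin.val_injective
    rw [cubeV, inner_smul_right]
    congr 1
    exact he'.inner_right_fintype (fun i => sgB (ε i)) i
  rw [inner_cubeV]
  simp_rw [h1]
  have : ∀ i, sgB (ε i) * (1 / (m : ℝ) * sgB (ε i)) = 1 / (m : ℝ) := by
    intro i
    linear_combination (1 / (m : ℝ)) * sgB_sq (ε i)
  simp_rw [this]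
  have hm' : (m : ℝ) ≠ 0 := by positivity
  simp
  field_simp

lemma norm_cubeV {e : ℕ → E} (he : Orthonormal ℝ e) {m : ℕ} (hm : 0 < m)
    (ε : Fin (m ^ 2) → Bool) : ‖cubeV e m ε‖ = 1 := by
  have := inner_cubeV_self he hm ε
  rw [real_inner_self_eq_norm_sq] at this
  nlinarith [norm_nonneg (cubeV e m ε)]

lemma cube_avg {e : ℕ → E} (he : Orthonormal ℝ e) {m : ℕ} (hm : 0 < m) (x : ↥(UBall E)) :
    ∑ ε : Fin (m ^ 2) → Bool, |inner ℝ (x : E) (cubeV e m ε)| ^ 3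
      ≤ 24 * 2 ^ (m ^ 2) / (m : ℝ) ^ 3 := by
  have he' : Orthonormal ℝ (fun i : Fin (m ^ 2) => e i) := he.comp _ Fin.val_injective
  have hx : ‖(x : E)‖ ≤ 1 := by simpa [UBall] using x.2
  have h1 := he'.sum_inner_products_le (x : E) (s := Finset.univ)
  have h2 := cube_sum_le (fun i : Fin (m ^ 2) => inner ℝ (e i) (x : E)) (by
    simp only [Real.norm_eq_abs, sq_abs] at h1
    refine h1.trans ?_
    nlinarith [norm_nonneg (x : E)])
  simp_rw [inner_cubeV, abs_mul, mul_pow]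
  rw [← Finset.mul_sum]
  have hm' : (0 : ℝ) < m := by positivity
  rw [abs_of_pos (by positivity), le_div_iff₀ (by positivity)]
  calc _ = (∑ ε : Fin (m ^ 2) → Bool, |∑ i, sgB (ε i) * inner ℝ (e i) (x : E)| ^ 3) := by
        field_simp
    _ ≤ _ := h2

theorem general_not {e : ℕ → E} (he : Orthonormal ℝ e) :
    ¬ ∃ (Q : (↥(UBall E) → ℝ) →ₗ[ℝ] (↥(UBall E) → ℝ)) (K : NNReal),
      (∀ f ∈ Lip0B E, Q f ∈ PhomB 2 E) ∧
      (∀ f ∈ PhomB 2 E, Q f = f) ∧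
      (∀ f ∈ Lip0B E, ∀ L : NNReal, LipschitzWith L f → LipschitzWith (K * L) (Q f)) := by
  rintro ⟨Q, K, hQ1, hQ2, hQ3⟩
  set B : ℝ := 2 * K + 4 with hBdef
  have hB0 : 0 < B := by positivity
  obtain ⟨m, hm⟩ := exists_nat_gt (6 * K * (48 * B ^ 3) : ℝ)
  have hmR : (0 : ℝ) < m := lt_of_le_of_lt (by positivity) hm
  have hm0 : 0 < m := by exact_mod_cast hmR
  set Y := cubeV e m with hY
  have hYmem : ∀ ε, Y ε ∈ UBall E := fun ε => by
    rw [UBall, mem_closedBall_zero_iff, norm_cubeV he hm0]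
  have hinner : ∀ ε (x x' : ↥(UBall E)),
      |inner ℝ (x : E) (Y ε) - inner ℝ (x' : E) (Y ε)| ≤ dist x x' := by
    intro ε x x'
    rw [← inner_sub_left, Subtype.dist_eq, dist_eq_norm]
    refine (abs_real_inner_le_norm _ _).trans ?_
    rw [norm_cubeV he hm0, mul_one]
  let F : (Fin (m ^ 2) → Bool) → ↥(UBall E) → ℝ :=
    fun ε x => (1 - Real.cos (B * inner ℝ (x : E) (Y ε))) / B
  let H : (Fin (m ^ 2) → Bool) → ↥(UBall E) → ℝ := fun ε x => hB B (inner ℝ (x : E) (Y ε))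
  let S : (Fin (m ^ 2) → Bool) → ↥(UBall E) → ℝ :=
    fun ε x => B / 2 * (inner ℝ (x : E) (Y ε)) ^ 2
  have hFL : ∀ ε, LipschitzWith 1 (F ε) := by
    intro ε
    refine LipschitzWith.of_dist_le_mul fun x x' => ?_
    rw [Real.dist_eq, NNReal.coe_one, one_mul]
    exact (pB_lip hB0 _ _).trans (hinner ε x x')
  have hF0 : ∀ ε, F ε ∈ Lip0B E := fun ε => ⟨⟨1, hFL ε⟩, by simp [F, zeroB]⟩
  have hSH : ∀ ε, H ε = S ε - F ε := by
    intro ε; ext x; rfl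
  have hHbound : ∀ ε x x', |H ε x - H ε x'| ≤ B ^ 3 *
      (|inner ℝ (x : E) (Y ε)| ^ 3 + |inner ℝ (x' : E) (Y ε)| ^ 3) * dist x x' := by
    intro ε x x'
    refine (hB_lip hB0 _ _).trans ?_
    gcongr
    exact hinner ε x x'
  have hQF : ∀ ε, |Q (F ε) ⟨Y ε, hYmem ε⟩| ≤ K := by
    intro ε
    have := lip_le (hQ3 _ (hF0 ε) 1 (hFL ε)) (phom_zero (hQ1 _ (hF0 ε))) ⟨Y ε, hYmem ε⟩
    simpa using this
  have hQS : ∀ ε, Q (S ε) = S ε := fun ε => hQ2 _ (sq_mem_phom _ _)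
  have hSY : ∀ ε, S ε ⟨Y ε, hYmem ε⟩ = B / 2 := by
    intro ε
    simp only [S]
    rw [hY, inner_cubeV_self he hm0]; ring
  -- lower bound for `Q H` at the cube vectors
  have hlow : ∀ ε, 2 ≤ Q (H ε) ⟨Y ε, hYmem ε⟩ := by
    intro ε
    rw [hSH, map_sub, Pi.sub_apply, hQS, hSY]
    have := (abs_le.1 (hQF ε)).2
    rw [hBdef]; linarith
  have hQH : ∀ ε, Q (H ε) ∈ PhomB 2 E := by
    intro ε
    rw [hSH, map_sub, hQS]
    obtain ⟨M, hM⟩ := sq_mem_phom (B / 2) (Y ε)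
    obtain ⟨M', hM'⟩ := hQ1 _ (hF0 ε)
    refine ⟨M - M', fun x => ?_⟩
    rw [Pi.sub_apply, hM', ContinuousMultilinearMap.sub_apply, ← hM]
  have hen : ∀ i, ‖e i‖ ≤ 1 := fun i => (he.1 i).le
  let c : Fin (m ^ 2) → Fin (m ^ 2) → (↥(UBall E) → ℝ) →ₗ[ℝ] ℝ :=
    fun i j => coefB (e i) (e j) (hen i) (hen j)
  have hexp : ∀ ε, Q (H ε) ⟨Y ε, hYmem ε⟩ =
      (1 / (m : ℝ)) ^ 2 * ∑ i, ∑ j, sgB (ε i) * sgB (ε j) * c i j (Q (H ε)) := by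
    intro ε
    obtain ⟨b, hb⟩ := phom_form (hQH ε)
    have hc : ∀ i j, c i j (Q (H ε)) = (b (e i) (e j) + b (e j) (e i)) / 2 :=
      fun i j => coefB_eq _ _ b hb
    simp_rw [hb, hc]
    have h1 : b (Y ε) (Y ε) =
        (1 / (m : ℝ)) ^ 2 * ∑ i, ∑ j, sgB (ε i) * sgB (ε j) * b (e i) (e j) := by
      simp only [hY, cubeV, map_smul, map_sum, LinearMap.smul_apply, LinearMap.sum_apply,
        smul_eq_mul, Finset.mul_sum]
      rw [Finset.sum_comm]
      refine Finset.sum_congr rfl fun i _ => Finset.sum_congr rfl fun j _ => ?_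
      ring
    have h2 : ∑ i, ∑ j, sgB (ε i) * sgB (ε j) * b (e i) (e j)
        = ∑ i, ∑ j, sgB (ε i) * sgB (ε j) * b (e j) (e i) := by
      rw [Finset.sum_comm]
      refine Finset.sum_congr rfl fun i _ => Finset.sum_congr rfl fun j _ => ?_
      ring
    have h3 : ∑ i, ∑ j, sgB (ε i) * sgB (ε j) * ((b (e i) (e j) + b (e j) (e i)) / 2)
        = (∑ i, ∑ j, sgB (ε i) * sgB (ε j) * b (e i) (e j)
          + ∑ i, ∑ j, sgB (ε i) * sgB (ε j) * b (e j) (e i)) / 2 := by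
      simp only [← Finset.sum_add_distrib, Finset.sum_div]
      refine Finset.sum_congr rfl fun i _ => Finset.sum_congr rfl fun j _ => ?_
      ring
    rw [h3, ← h2, h1]; ring
  let G : Fin (m ^ 2) → Fin (m ^ 2) → ↥(UBall E) → ℝ :=
    fun i j => ∑ ε, (sgB (ε i) * sgB (ε j)) • H ε
  let L : NNReal := ⟨48 * B ^ 3 * 2 ^ (m ^ 2) / (m : ℝ) ^ 3, by positivity⟩
  have hLdef : (L : ℝ) = 48 * B ^ 3 * 2 ^ (m ^ 2) / (m : ℝ) ^ 3 := rfl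
  have hGL : ∀ i j, LipschitzWith L (G i j) := by
    intro i j
    refine LipschitzWith.of_dist_le_mul fun x x' => ?_
    rw [Real.dist_eq]
    have h1 : G i j x - G i j x' = ∑ ε, sgB (ε i) * sgB (ε j) * (H ε x - H ε x') := by
      simp only [G, Finset.sum_apply, Pi.smul_apply, smul_eq_mul, ← Finset.sum_sub_distrib,
        mul_sub]
    rw [h1]
    calc _ ≤ ∑ ε, |sgB (ε i) * sgB (ε j) * (H ε x - H ε x')| := Finset.abs_sum_le_sum_abs _ _
      _ ≤ ∑ ε, B ^ 3 * (|inner ℝ (x : E) (Y ε)| ^ 3 + |inner ℝ (x' : E) (Y ε)| ^ 3)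
            * dist x x' := by
          refine Finset.sum_le_sum fun ε _ => ?_
          rw [abs_mul, abs_mul, sgB_abs, sgB_abs, one_mul, one_mul]
          exact hHbound ε x x'
      _ = B ^ 3 * (∑ ε, |inner ℝ (x : E) (Y ε)| ^ 3 + ∑ ε, |inner ℝ (x' : E) (Y ε)| ^ 3)
            * dist x x' := by
          rw [← Finset.sum_mul, ← Finset.mul_sum, Finset.sum_add_distrib]
      _ ≤ B ^ 3 * (24 * 2 ^ (m ^ 2) / (m : ℝ) ^ 3 + 24 * 2 ^ (m ^ 2) / (m : ℝ) ^ 3)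
            * dist x x' := by
          gcongr
          · exact cube_avg he hm0 x
          · exact cube_avg he hm0 x'
      _ = _ := by
          rw [hLdef]; ring
  have hG0 : ∀ i j, G i j ∈ Lip0B E := fun i j => ⟨⟨L, hGL i j⟩, by
    simp [G, H, hB, zeroB]⟩
  have hcG : ∀ i j, c i j (Q (G i j)) ≤ 6 * (K * L) := by
    intro i j
    have := coefB_le (hen i) (hen j) (hQ3 _ (hG0 i j) L (hGL i j)) (phom_zero (hQ1 _ (hG0 i j)))
    refine (le_abs_self _).trans (this.trans_eq ?_)
    simp
  have hsum : ∑ ε, Q (H ε) ⟨Y ε, hYmem ε⟩ = (1 / (m : ℝ)) ^ 2 * ∑ i, ∑ j, c i j (Q (G i j)) := by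
    simp_rw [hexp]
    rw [← Finset.mul_sum]
    congr 1
    simp only [G, map_sum, map_smul, smul_eq_mul]
    rw [Finset.sum_comm]
    refine Finset.sum_congr rfl fun i _ => ?_
    rw [Finset.sum_comm]
  have hlow2 : (2 : ℝ) ^ (m ^ 2) * 2 ≤ ∑ ε, Q (H ε) ⟨Y ε, hYmem ε⟩ := by
    calc _ = ∑ ε : Fin (m ^ 2) → Bool, (2 : ℝ) := by simp
      _ ≤ _ := Finset.sum_le_sum fun ε _ => hlow ε
  have hup : ∑ i, ∑ j, c i j (Q (G i j)) ≤ (m : ℝ) ^ 4 * (6 * (K * L)) := by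
    calc _ ≤ ∑ i : Fin (m ^ 2), ∑ j : Fin (m ^ 2), (6 * (K * L) : ℝ) :=
          Finset.sum_le_sum fun i _ => Finset.sum_le_sum fun j _ => hcG i j
      _ = _ := by simp; ring
  have hfin : (2 : ℝ) ^ (m ^ 2) * 2 ≤ 2 ^ (m ^ 2) * (6 * K * (48 * B ^ 3) / m) := by
    refine hlow2.trans ?_
    rw [hsum]
    calc _ ≤ (1 / (m : ℝ)) ^ 2 * ((m : ℝ) ^ 4 * (6 * (K * L))) := by gcongr
      _ = _ := by
        rw [hLdef]
        field_simp
  have h2 := le_of_mul_le_mul_left hfin (by positivity)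
  rw [le_div_iff₀ hmR] at h2
  linarith

end general

lemma orthonormal_single :
    Orthonormal ℝ (fun i : ℕ => (lp.single 2 i (1 : ℝ) : lp (fun _ : ℕ => ℝ) 2)) := by
  rw [orthonormal_iff_ite]
  intro i j
  rw [lp.inner_single_left]
  by_cases h : i = j
  · subst h; simp
  · simp [h, lp.single_apply, Pi.single_apply]

/-- **Theorem B (ii).** `P(²ℓ₂)` is not complemented in `Lip₀(B_{ℓ₂})`. -/
theorem statement4 :
    ¬ ∃ (Q : (↥(UBall (lp (fun _ : ℕ => ℝ) 2)) → ℝ) →ₗ[ℝ]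
             (↥(UBall (lp (fun _ : ℕ => ℝ) 2)) → ℝ)) (K : NNReal),
      (∀ f ∈ Lip0B (lp (fun _ : ℕ => ℝ) 2), Q f ∈ PhomB 2 (lp (fun _ : ℕ => ℝ) 2)) ∧
      (∀ f ∈ PhomB 2 (lp (fun _ : ℕ => ℝ) 2), Q f = f) ∧
      (∀ f ∈ Lip0B (lp (fun _ : ℕ => ℝ) 2), ∀ L : NNReal,
        LipschitzWith L f → LipschitzWith (K * L) (Q f)) := by
  exact general_not orthonormal_single
end
end

section
/- Let X be an infinite-dimensional Banach space that contains uniformly complemented (ℓ₂ⁿ)_{n=1}^∞, i.e. there are a constant C ≥ 1 and a sequence (F_n)_{n=1}^∞ of subspaces of X such that, for each n, F_n is C-isomorphic to ℓ₂ⁿ and C-complemented in X. Then for every k ≥ 2 the space P(ᵏX) of k-homogeneous polynomials on X is not complemented in Lip₀(B_X). -/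
open Metric Set Real

noncomputable section

/-- sign of a boolean -/
def sg5 (b : Bool) : ℝ := if b then 1 else -1

/-- Walsh character -/
def chi5 {n : ℕ} (S : Finset (Fin n)) (ε : Fin n → Bool) : ℝ := ∏ j ∈ S, sg5 (ε j)

lemma sg5_sq (b : Bool) : sg5 b * sg5 b = 1 := by cases b <;> simp [sg5]

lemma walsh_inv5 {n : ℕ} (ε η : Fin n → Bool) :
    ∑ S : Finset (Fin n), chi5 S ε * chi5 S η = if ε = η then (2:ℝ)^n else 0 := by
  have h1 : ∑ S : Finset (Fin n), chi5 S ε * chi5 S η = ∏ j, (1 + sg5 (ε j) * sg5 (η j)) := by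
    rw [Finset.prod_one_add]
    simp [chi5, Finset.prod_mul_distrib]
  rw [h1]
  split_ifs with h
  · subst h
    simp [sg5_sq]; norm_num
  · obtain ⟨j, hj⟩ := Function.ne_iff.mp h
    apply Finset.prod_eq_zero (Finset.mem_univ j)
    revert hj
    cases ε j <;> cases η j <;> simp [sg5]

lemma walsh_prod5 {n : ℕ} (S : Finset (Fin n)) (z : Fin n → ℂ) :
    ∑ ε : Fin n → Bool, (chi5 S ε : ℂ) * ∏ j, (1 + z j * (sg5 (ε j) : ℂ))
      = 2 ^ n * ∏ j ∈ S, z j := by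
  have h1 : ∀ ε : Fin n → Bool, (chi5 S ε : ℂ) * ∏ j, (1 + z j * (sg5 (ε j) : ℂ))
      = ∏ j, ((if j ∈ S then (sg5 (ε j) : ℂ) else 1) * (1 + z j * (sg5 (ε j) : ℂ))) := by
    intro ε
    rw [Finset.prod_mul_distrib]
    congr 1
    simp [chi5, Finset.prod_ite_mem]
  simp_rw [h1]
  rw [← Fintype.piFinset_univ, ← Finset.prod_univ_sum (fun _ => Finset.univ)
    (fun j b => ((if j ∈ S then (sg5 b : ℂ) else 1) * (1 + z j * (sg5 b : ℂ))))]
  have h2 : ∀ j, ∑ b : Bool, ((if j ∈ S then (sg5 b : ℂ) else 1) * (1 + z j * (sg5 b : ℂ)))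
      = 2 * (if j ∈ S then z j else 1) := by
    intro j
    simp [sg5]
    split_ifs <;> ring
  simp_rw [h2]
  rw [Finset.prod_mul_distrib]
  simp [Finset.prod_ite_mem]

lemma walsh_vanish5 {n k : ℕ} (S : Finset (Fin n)) (hS : k < S.card) (i : Fin k → Fin n) :
    ∑ η : Fin n → Bool, chi5 S η * ∏ l, sg5 (η (i l)) = 0 := by
  obtain ⟨j, hjS, hj⟩ : ∃ j ∈ S, ∀ l, i l ≠ j := by
    by_contra! hcon
    have : S ⊆ Finset.univ.image i := by
      intro j hj
      obtain ⟨l, hl⟩ := hcon j hj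
      simp; exact ⟨l, hl⟩
    have h2 := (Finset.card_le_card this).trans Finset.card_image_le
    simp at h2
    omega
  have key : ∀ η : Fin n → Bool, chi5 S (Function.update η j (!η j)) *
      ∏ l, sg5 ((Function.update η j (!η j)) (i l)) = -(chi5 S η * ∏ l, sg5 (η (i l))) := by
    intro η
    have e1 : chi5 S (Function.update η j (!η j)) = - chi5 S η := by
      unfold chi5
      rw [← Finset.mul_prod_erase S _ hjS, ← Finset.mul_prod_erase S (fun j => sg5 (η j)) hjS]
      have : ∏ x ∈ S.erase j, sg5 (Function.update η j (!η j) x)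
          = ∏ x ∈ S.erase j, sg5 (η x) := by
        apply Finset.prod_congr rfl
        intro x hx
        rw [Function.update_of_ne (Finset.ne_of_mem_erase hx)]
      rw [this]
      cases h : η j <;> simp [sg5]
    have e2 : ∀ l, (Function.update η j (!η j)) (i l) = η (i l) := by
      intro l
      rw [Function.update_of_ne (hj l)]
    simp_rw [e2]
    rw [e1]; ring
  have hinv : Function.Involutive (fun η : Fin n → Bool => Function.update η j (!η j)) := by
    intro η; simp
  have := Equiv.sum_comp (hinv.toPerm _) (fun η => chi5 S η * ∏ l, sg5 (η (i l)))
  simp only [Function.Involutive.coe_toPerm] at this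
  simp_rw [key] at this
  rw [Finset.sum_neg_distrib] at this
  linarith

lemma poly_vanish5 {X : Type*} [NormedAddCommGroup X] [NormedSpace ℝ X] {n k : ℕ}
    (M : ContinuousMultilinearMap ℝ (fun _ : Fin k => X) ℝ) (s : ℝ) (e : Fin n → X)
    (S : Finset (Fin n)) (hS : k < S.card) :
    ∑ η : Fin n → Bool, chi5 S η * M (fun _ => s • ∑ j, sg5 (η j) • e j) = 0 := by
  have h : ∀ η : Fin n → Bool, M (fun _ => s • ∑ j, sg5 (η j) • e j)
      = ∑ i : Fin k → Fin n, (∏ l, sg5 (η (i l))) * (s ^ k * M (fun l => e (i l))) := by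
    intro η
    have h1 := M.map_smul_univ (fun _ => s) (fun _ => ∑ j, sg5 (η j) • e j)
    rw [h1, M.map_sum]
    simp only [Finset.prod_const, Finset.card_univ, Fintype.card_fin, smul_eq_mul, Finset.mul_sum]
    apply Finset.sum_congr rfl
    intro i _
    have h2 := M.map_smul_univ (fun l => sg5 (η (i l))) (fun l => e (i l))
    rw [h2, smul_eq_mul]; ring
  simp_rw [h, Finset.mul_sum]
  rw [Finset.sum_comm]
  apply Finset.sum_eq_zero
  intro i _
  simp_rw [← mul_assoc]
  rw [← Finset.sum_mul, ← Finset.sum_mul, walsh_vanish5 S hS i]; simp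

lemma prod_lip5 {ι : Type*} (s : Finset ι) (a b : ι → ℝ) :
    ‖∏ j ∈ s, (1 + Complex.I * a j) - ∏ j ∈ s, (1 + Complex.I * b j)‖
      ≤ (∑ j ∈ s, |a j - b j|) * ((∏ j ∈ s, ‖1 + Complex.I * a j‖) * ∏ j ∈ s, ‖1 + Complex.I * b j‖) := by
  have h1 : ∀ x : ℝ, 1 ≤ ‖1 + Complex.I * x‖ := by
    intro x
    have := Complex.abs_re_le_norm (1 + Complex.I * x)
    simpa using this
  classical
  induction s using Finset.induction_on with
  | empty => simp
  | insert j s hj ih =>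
    rw [Finset.prod_insert hj, Finset.prod_insert hj, Finset.prod_insert hj, Finset.prod_insert hj,
      Finset.sum_insert hj]
    have hA : 1 ≤ ∏ j ∈ s, ‖1 + Complex.I * a j‖ := by
      simpa using Finset.prod_le_prod (s := s) (f := fun _ => (1:ℝ))
        (fun _ _ => zero_le_one) (fun j _ => h1 (a j))
    have hB : 1 ≤ ∏ j ∈ s, ‖1 + Complex.I * b j‖ := by
      simpa using Finset.prod_le_prod (s := s) (f := fun _ => (1:ℝ))
        (fun _ _ => zero_le_one) (fun j _ => h1 (b j))
    have hd : 0 ≤ ∑ j ∈ s, |a j - b j| := Finset.sum_nonneg (fun _ _ => abs_nonneg _)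
    have e : (1 + Complex.I * a j) * ∏ j ∈ s, (1 + Complex.I * a j)
        - (1 + Complex.I * b j) * ∏ j ∈ s, (1 + Complex.I * b j)
        = (Complex.I * ((a j - b j : ℝ) : ℂ)) * ∏ j ∈ s, (1 + Complex.I * a j)
        + (1 + Complex.I * b j) * (∏ j ∈ s, (1 + Complex.I * a j) - ∏ j ∈ s, (1 + Complex.I * b j)) := by
      push_cast; ring
    rw [e]
    refine (norm_add_le _ _).trans ?_
    rw [norm_mul, norm_mul, norm_mul, Complex.norm_I, one_mul, Complex.norm_real, norm_prod, Real.norm_eq_abs]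
    have ha := h1 (a j)
    have hb := h1 (b j)
    set A := ∏ j ∈ s, ‖1 + Complex.I * a j‖
    set B := ∏ j ∈ s, ‖1 + Complex.I * b j‖
    set D := ∑ j ∈ s, |a j - b j|
    set α := ‖1 + Complex.I * a j‖
    set β := ‖1 + Complex.I * b j‖
    have hz : 0 ≤ |a j - b j| := abs_nonneg _
    calc |a j - b j| * A + β * _ ≤ |a j - b j| * A + β * (D * (A * B)) := by gcongr
      _ ≤ |a j - b j| * (A * (α * β * B)) + β * (D * (A * B)) * α := by
        have : 1 ≤ α * β * B := by
          have := one_le_mul_of_one_le_of_one_le (one_le_mul_of_one_le_of_one_le ha hb) hB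
          exact this
        refine add_le_add (mul_le_mul_of_nonneg_left ?_ hz) ?_
        · exact le_mul_of_one_le_right (by positivity) this
        · exact le_mul_of_one_le_right (by positivity) ha
      _ = _ := by ring

lemma norm_prod5 {ι : Type*} (s : Finset ι) (a : ι → ℝ) (c : ℝ) (hc : ∑ j ∈ s, a j ^ 2 ≤ c) :
    ∏ j ∈ s, ‖1 + Complex.I * a j‖ ≤ Real.exp c := by
  have h : ∀ x : ℝ, ‖1 + Complex.I * x‖ ≤ Real.exp (x^2) := by
    intro x
    have h2 : ‖1 + Complex.I * x‖ ^ 2 = 1 + x ^ 2 := by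
      rw [Complex.sq_norm, Complex.normSq_apply]; simp; ring
    have h1 : 1 + x ^ 2 ≤ Real.exp (x ^ 2) := by
      have := Real.add_one_le_exp (x^2); linarith
    nlinarith [norm_nonneg (1 + Complex.I * x), sq_nonneg x]
  calc _ ≤ ∏ j ∈ s, Real.exp (a j ^ 2) := Finset.prod_le_prod (fun _ _ => norm_nonneg _) (fun j _ => h _)
    _ = Real.exp (∑ j ∈ s, a j ^ 2) := (Real.exp_sum _ _).symm
    _ ≤ _ := Real.exp_le_exp.mpr hc

/-- finite difference coefficients -/
def fd5 (k r : ℕ) : ℝ := (-1) ^ (k - r) * (k.choose r : ℝ)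

lemma fd5_sum (k m : ℕ) (hm : m ≤ k) :
    ∑ r ∈ Finset.range (k + 1), fd5 k r * (r : ℝ) ^ m = if m = k then (k.factorial : ℝ) else 0 := by
  have h := fwdDiff_iter_eq_sum_shift (1 : ℝ) (fun r : ℝ => r ^ m) k 0
  have h2 : ∑ r ∈ Finset.range (k + 1), fd5 k r * (r : ℝ) ^ m
      = (fwdDiff (1:ℝ))^[k] (fun r : ℝ => r ^ m) 0 := by
    rw [h]
    apply Finset.sum_congr rfl
    intro r _
    simp [fd5]
  rw [h2]
  split_ifs with hmk
  · subst hmk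
    rw [fwdDiff_iter_eq_factorial]; simp
  · rw [fwdDiff_iter_pow_eq_zero_of_lt (lt_of_le_of_ne hm hmk)]; simp

/-- the test functions -/
def tf5 {X : Type*} [NormedAddCommGroup X] [NormedSpace ℝ X] {n : ℕ} (k : ℕ)
    (φ : Fin n → X →L[ℝ] ℝ) (ε : Fin n → Bool) (x : ↥(UBall X)) : ℝ :=
  ∑ r ∈ Finset.range (k + 1), fd5 k r *
    ((-Complex.I) ^ k * ∏ j, (1 + Complex.I * ((r * φ j x * sg5 (ε j) : ℝ) : ℂ))).re

/-- the Lipschitz constant factor -/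
def lc5 (k : ℕ) (C : ℝ) : ℝ :=
  ∑ r ∈ Finset.range (k + 1), |fd5 k r| * (r * C * Real.exp (2 * (r ^ 2 * C ^ 2)))

lemma tf5_zero {X : Type*} [NormedAddCommGroup X] [NormedSpace ℝ X] {n k : ℕ} (hk : 2 ≤ k)
    (φ : Fin n → X →L[ℝ] ℝ) (ε : Fin n → Bool) : tf5 k φ ε (zeroB X) = 0 := by
  have h := fd5_sum k 0 (by omega)
  rw [if_neg (by omega)] at h
  simp only [pow_zero, mul_one] at h
  simp [tf5, zeroB, ← Finset.sum_mul, h]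

lemma abs_sg5 (b : Bool) : |sg5 b| = 1 := by cases b <;> simp [sg5]

lemma sg5_sq' (b : Bool) : sg5 b ^ 2 = 1 := by cases b <;> simp [sg5]

lemma tf5_lip {X : Type*} [NormedAddCommGroup X] [NormedSpace ℝ X] {n k : ℕ} {C : ℝ} (hC : 0 ≤ C)
    (φ : Fin n → X →L[ℝ] ℝ) (hφ : ∀ x, ∑ j, (φ j x) ^ 2 ≤ C ^ 2 * ‖x‖ ^ 2)
    (ε : Fin n → Bool) (x y : ↥(UBall X)) :
    |tf5 k φ ε x - tf5 k φ ε y| ≤ lc5 k C * √n * ‖(x : X) - y‖ := by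
  have hball : ∀ z : ↥(UBall X), ‖(z : X)‖ ≤ 1 := by
    intro z
    have := z.2
    simpa [UBall] using this
  have hsq : ∀ (r : ℕ) (z : ↥(UBall X)), ∑ j, (r * φ j z * sg5 (ε j)) ^ 2 ≤ (r:ℝ) ^ 2 * C ^ 2 := by
    intro r z
    have : ∀ j, (r * φ j z * sg5 (ε j)) ^ 2 = (r:ℝ) ^ 2 * (φ j z) ^ 2 := by
      intro j; rw [mul_pow, mul_pow, sg5_sq', mul_one]
    simp_rw [this]
    rw [← Finset.mul_sum]
    apply mul_le_mul_of_nonneg_left _ (by positivity)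
    refine (hφ z).trans ?_
    have := hball z
    have h2 : ‖(z : X)‖ ^ 2 ≤ 1 := pow_le_one₀ (norm_nonneg _) this
    nlinarith [sq_nonneg C]
  have hl1 : ∑ j, |φ j ((x : X) - y)| ≤ C * √n * ‖(x : X) - y‖ := by
    have h1 := sq_sum_le_card_mul_sum_sq (s := Finset.univ) (f := fun j => |φ j ((x : X) - y)|)
    simp only [sq_abs, Finset.card_univ, Fintype.card_fin] at h1
    apply le_of_sq_le_sq _ (by positivity)
    rw [mul_pow, mul_pow, Real.sq_sqrt (by positivity)]
    refine h1.trans ?_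
    have := mul_le_mul_of_nonneg_left (hφ ((x : X) - y)) (Nat.cast_nonneg n : (0:ℝ) ≤ n)
    linarith
  unfold tf5 lc5
  rw [← Finset.sum_sub_distrib, Finset.sum_mul, Finset.sum_mul]
  refine (Finset.abs_sum_le_sum_abs _ _).trans (Finset.sum_le_sum fun r _ => ?_)
  rw [← mul_sub, abs_mul, ← Complex.sub_re, ← mul_sub, mul_assoc, mul_assoc]
  apply mul_le_mul_of_nonneg_left _ (abs_nonneg _)
  refine (Complex.abs_re_le_norm _).trans ?_
  rw [norm_mul, norm_pow, norm_neg, Complex.norm_I, one_pow, one_mul]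
  refine (prod_lip5 _ _ _).trans ?_
  have e1 := norm_prod5 Finset.univ _ _ (hsq r x)
  have e2 := norm_prod5 Finset.univ _ _ (hsq r y)
  have e3 : ∑ j, |r * φ j x * sg5 (ε j) - r * φ j y * sg5 (ε j)| ≤ r * (C * √n * ‖(x : X) - y‖) := by
    have : ∀ j, |r * φ j x * sg5 (ε j) - r * φ j y * sg5 (ε j)| = r * |φ j ((x : X) - y)| := by
      intro j
      rw [← sub_mul, ← mul_sub, abs_mul, abs_sg5, abs_mul, map_sub, Nat.abs_cast, mul_one]
    simp_rw [this]
    rw [← Finset.mul_sum]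
    exact mul_le_mul_of_nonneg_left hl1 (by positivity)
  calc _ ≤ r * (C * √n * ‖(x : X) - y‖) * (Real.exp (r ^ 2 * C ^ 2) * Real.exp (r ^ 2 * C ^ 2)) := by
        gcongr
    _ = _ := by
        rw [two_mul, Real.exp_add]; ring

lemma tf5_sum {X : Type*} [NormedAddCommGroup X] [NormedSpace ℝ X] {n k : ℕ}
    (φ : Fin n → X →L[ℝ] ℝ) (S : Finset (Fin n)) (hS : S.card ≤ k) (x : ↥(UBall X)) :
    ∑ ε, chi5 S ε * tf5 k φ ε x
      = if S.card = k then 2 ^ n * (k.factorial : ℝ) * ∏ j ∈ S, φ j x else 0 := by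
  have h1 : ∑ ε, chi5 S ε * tf5 k φ ε x = ∑ r ∈ Finset.range (k + 1), fd5 k r *
      ((-Complex.I) ^ k * (∑ ε, (chi5 S ε : ℂ) *
        ∏ j, (1 + (Complex.I * ((r * φ j x : ℝ) : ℂ)) * (sg5 (ε j) : ℂ)))).re := by
    unfold tf5
    simp_rw [Finset.mul_sum]
    rw [Finset.sum_comm]
    apply Finset.sum_congr rfl
    intro r _
    rw [Complex.re_sum, Finset.mul_sum]
    apply Finset.sum_congr rfl
    intro ε _
    rw [mul_left_comm ((-Complex.I) ^ k), Complex.re_ofReal_mul, mul_left_comm]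
    congr 5
    funext j
    push_cast; ring
  have h2 : ∀ r : ℕ, ((-Complex.I) ^ k * ((2:ℂ) ^ n * ∏ j ∈ S, (Complex.I * ((r * φ j x : ℝ) : ℂ)))).re
      = ((-Complex.I) ^ k * Complex.I ^ S.card).re * (2 ^ n * (r ^ S.card * ∏ j ∈ S, φ j x)) := by
    intro r
    rw [← Complex.re_mul_ofReal]
    congr 1
    rw [Finset.prod_mul_distrib, Finset.prod_const]
    push_cast
    rw [Finset.prod_mul_distrib, Finset.prod_const]
    ring
  rw [h1]
  simp_rw [walsh_prod5, h2]
  have h3 := fd5_sum k S.card hS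
  have h4 : ∑ r ∈ Finset.range (k + 1), fd5 k r * (((-Complex.I) ^ k * Complex.I ^ S.card).re *
      (2 ^ n * ((r:ℝ) ^ S.card * ∏ j ∈ S, φ j x)))
      = ((-Complex.I) ^ k * Complex.I ^ S.card).re * 2 ^ n * (∏ j ∈ S, φ j x) *
        ∑ r ∈ Finset.range (k + 1), fd5 k r * (r:ℝ) ^ S.card := by
    rw [Finset.mul_sum]
    apply Finset.sum_congr rfl
    intro r _; ring
  rw [h4, h3]
  split_ifs with h
  · rw [h, ← mul_pow]
    simp; ring
  · simp

lemma mono_mem5 {X : Type*} [NormedAddCommGroup X] [NormedSpace ℝ X] {n k : ℕ}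
    (φ : Fin n → X →L[ℝ] ℝ) (S : Finset (Fin n)) (hS : S.card = k) :
    (fun x : ↥(UBall X) => ∏ j ∈ S, φ j x) ∈ PhomB k X := by
  refine ⟨(ContinuousMultilinearMap.mkPiAlgebra ℝ (Fin k) ℝ).compContinuousLinearMap
    (fun l => φ (S.orderEmbOfFin hS l)), ?_⟩
  intro x
  simp only [ContinuousMultilinearMap.compContinuousLinearMap_apply,
    ContinuousMultilinearMap.mkPiAlgebra_apply]
  have := Finset.prod_map Finset.univ (S.orderEmbOfFin hS).toEmbedding (fun j => φ j (x : X))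
  rw [Finset.map_orderEmbOfFin_univ] at this
  exact this

lemma core5 {X : Type*} [NormedAddCommGroup X] [NormedSpace ℝ X] {n k : ℕ} (hk : 2 ≤ k)
    {C : ℝ} (hC : 0 ≤ C) {s : ℝ}
    (φ : Fin n → X →L[ℝ] ℝ) (hφ : ∀ x, ∑ j, (φ j x) ^ 2 ≤ C ^ 2 * ‖x‖ ^ 2)
    (e : Fin n → X) (hφe : ∀ i j, φ i (e j) = if i = j then 1 else 0)
    (he : ∀ η : Fin n → Bool, ‖s • ∑ j, sg5 (η j) • e j‖ ≤ 1)
    (Q : (↥(UBall X) → ℝ) →ₗ[ℝ] (↥(UBall X) → ℝ)) (K : NNReal)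
    (hQ1 : ∀ f ∈ Lip0B X, Q f ∈ PhomB k X) (hQ2 : ∀ f ∈ PhomB k X, Q f = f)
    (hQ3 : ∀ f ∈ Lip0B X, ∀ L : NNReal, LipschitzWith L f → LipschitzWith (K * L) (Q f)) :
    (n.descFactorial k : ℝ) * s ^ k ≤ K * (lc5 k C * √n) := by
  have hlc : 0 ≤ lc5 k C * √n := by unfold lc5; positivity
  have hlip : ∀ ε, LipschitzWith (lc5 k C * √n).toNNReal (tf5 k φ ε) := by
    intro ε
    apply LipschitzWith.of_dist_le_mul
    intro x y
    rw [Real.coe_toNNReal _ hlc, Real.dist_eq, Subtype.dist_eq, dist_eq_norm]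
    exact tf5_lip hC φ hφ ε x y
  have hmem : ∀ ε, tf5 k φ ε ∈ Lip0B X := fun ε => ⟨⟨_, hlip ε⟩, tf5_zero hk φ ε⟩
  let y : (Fin n → Bool) → ↥(UBall X) := fun η => ⟨s • ∑ j, sg5 (η j) • e j, by
    simpa [UBall] using he η⟩
  have hy : ∀ η j, φ j (y η) = s * sg5 (η j) := by
    intro η j
    simp [y, hφe]
  -- upper bound
  have hub : ∀ ε, Q (tf5 k φ ε) (y ε) ≤ K * (lc5 k C * √n) := by
    intro ε
    have h := hQ3 _ (hmem ε) _ (hlip ε)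
    have h0 : Q (tf5 k φ ε) (zeroB X) = 0 := by
      obtain ⟨M, hM⟩ := hQ1 _ (hmem ε)
      rw [hM]
      exact M.map_coord_zero (⟨0, by omega⟩ : Fin k) rfl
    have h2 := h.dist_le_mul (y ε) (zeroB X)
    rw [h0, Real.dist_eq, sub_zero, Subtype.dist_eq, dist_eq_norm, NNReal.coe_mul,
      Real.coe_toNNReal _ hlc] at h2
    have h3 : ‖((y ε : X)) - (zeroB X : X)‖ ≤ 1 := by simpa [zeroB, y] using he ε
    calc _ ≤ _ := (le_abs_self _).trans h2
      _ ≤ K * (lc5 k C * √n) * 1 := by gcongr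
      _ = _ := mul_one _
  -- trace computation
  have hW : ∀ ε, 2 ^ n * Q (tf5 k φ ε) (y ε)
      = ∑ S : Finset (Fin n), ∑ η, chi5 S η * (chi5 S ε * Q (tf5 k φ ε) (y η)) := by
    intro ε
    rw [Finset.sum_comm]
    have : ∀ η, ∑ S : Finset (Fin n), chi5 S η * (chi5 S ε * Q (tf5 k φ ε) (y η))
        = (if ε = η then (2:ℝ) ^ n else 0) * Q (tf5 k φ ε) (y η) := by
      intro η
      rw [← walsh_inv5, Finset.sum_mul]
      apply Finset.sum_congr rfl
      intro S _; ring
    simp_rw [this]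
    simp
  have hS : ∀ S : Finset (Fin n), ∑ ε, ∑ η, chi5 S η * (chi5 S ε * Q (tf5 k φ ε) (y η))
      = if S.card = k then 2 ^ n * (2 ^ n * (k.factorial * s ^ k)) else 0 := by
    intro S
    by_cases hSk : k < S.card
    · rw [if_neg (by omega)]
      apply Finset.sum_eq_zero
      intro ε _
      obtain ⟨M, hM⟩ := hQ1 _ (hmem ε)
      have := poly_vanish5 M s e S hSk
      simp_rw [mul_left_comm _ (chi5 S ε), hM]
      rw [← Finset.mul_sum, this, mul_zero]
    · have hSk' : S.card ≤ k := by omega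
      rw [Finset.sum_comm]
      have h1 : ∀ η, ∑ ε, chi5 S η * (chi5 S ε * Q (tf5 k φ ε) (y η))
          = chi5 S η * Q (fun x => ∑ ε, chi5 S ε * tf5 k φ ε x) (y η) := by
        intro η
        have : (fun x => ∑ ε, chi5 S ε * tf5 k φ ε x) = ∑ ε, chi5 S ε • tf5 k φ ε := by
          ext x; simp
        rw [this, map_sum, ← Finset.mul_sum]
        simp
      simp_rw [h1, tf5_sum φ S hSk']
      split_ifs with h
      · have h2 : (fun x : ↥(UBall X) => 2 ^ n * (k.factorial : ℝ) * ∏ j ∈ S, φ j x)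
            = (2 ^ n * (k.factorial : ℝ)) • (fun x : ↥(UBall X) => ∏ j ∈ S, φ j x) := rfl
        rw [h2, map_smul, hQ2 _ (mono_mem5 φ S h)]
        have h3 : ∀ η, chi5 S η * ((2 ^ n * (k.factorial : ℝ)) •
            (fun x : ↥(UBall X) => ∏ j ∈ S, φ j x)) (y η) = 2 ^ n * (k.factorial * s ^ k) := by
          intro η
          simp only [Pi.smul_apply, smul_eq_mul, hy]
          rw [Finset.prod_mul_distrib, Finset.prod_const, h]
          have : chi5 S η * ∏ j ∈ S, sg5 (η j) = 1 := by
            unfold chi5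
            rw [← Finset.prod_mul_distrib]
            exact Finset.prod_eq_one fun j _ => sg5_sq _
          linear_combination (2 ^ n * (k.factorial : ℝ) * s ^ k) * this
        simp_rw [h3]
        simp
      · have : Q (fun _ => 0) = 0 := map_zero Q
        simp [this]
  have htr : 2 ^ n * ∑ ε, Q (tf5 k φ ε) (y ε) = 2 ^ n * (2 ^ n * (n.descFactorial k * s ^ k)) := by
    rw [Finset.mul_sum]
    simp_rw [hW]
    rw [Finset.sum_comm]
    simp_rw [hS]
    rw [← Finset.sum_filter, Finset.sum_const]
    have hc : (Finset.univ.filter (fun S : Finset (Fin n) => S.card = k)).card = n.choose k := by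
      have := Finset.card_powersetCard k (Finset.univ : Finset (Fin n))
      rw [Finset.card_univ, Fintype.card_fin] at this
      rw [← this]
      congr 1
      ext S; simp [Finset.mem_powersetCard]
    rw [hc, Nat.descFactorial_eq_factorial_mul_choose, nsmul_eq_mul]
    push_cast; ring
  have h2n : (0:ℝ) < 2 ^ n := by positivity
  have htr' := mul_left_cancel₀ h2n.ne' htr
  have hle : ∑ ε, Q (tf5 k φ ε) (y ε) ≤ 2 ^ n * (K * (lc5 k C * √n)) := by
    refine (Finset.sum_le_sum fun ε _ => hub ε).trans ?_
    simp
  rw [htr'] at hle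
  exact le_of_mul_le_mul_left hle h2n

/-- **Theorem 4.3 (homogeneous case).** If an infinite-dimensional Banach space `X`
contains uniformly complemented `ℓ₂ⁿ`'s, then for every `k ≥ 2` the space `P(ᵏX)` of
`k`-homogeneous polynomials is not complemented in `Lip₀(B_X)`. -/
theorem statement5 (X : Type*) [NormedAddCommGroup X] [NormedSpace ℝ X] [CompleteSpace X]
    (hinf : ¬ FiniteDimensional ℝ X)
    (C : ℝ) (hC : 1 ≤ C)
    (hunif : ∀ n : ℕ, ∃ F : Submodule ℝ X,
      (∃ T : EuclideanSpace ℝ (Fin n) ≃ₗ[ℝ] F,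
        ∀ v : EuclideanSpace ℝ (Fin n), ‖v‖ ≤ ‖(T v : X)‖ ∧ ‖(T v : X)‖ ≤ C * ‖v‖) ∧
      (∃ P : X →L[ℝ] X, (∀ x : X, P x ∈ F) ∧ (∀ y ∈ F, P y = y) ∧ ‖P‖ ≤ C))
    (k : ℕ) (hk : 2 ≤ k) :
    ¬ ∃ (Q : (↥(UBall X) → ℝ) →ₗ[ℝ] (↥(UBall X) → ℝ)) (K : NNReal),
      (∀ f ∈ Lip0B X, Q f ∈ PhomB k X) ∧ (∀ f ∈ PhomB k X, Q f = f) ∧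
      (∀ f ∈ Lip0B X, ∀ L : NNReal, LipschitzWith L f → LipschitzWith (K * L) (Q f)) := by
  rintro ⟨Q, K, hQ1, hQ2, hQ3⟩
  have hC0 : 0 < C := by linarith
  have hlc : 0 ≤ lc5 k C := by unfold lc5; positivity
  obtain ⟨m0, hm0⟩ := exists_nat_gt (K * lc5 k C * (2 * C) ^ k)
  set m : ℕ := m0 + 2 * k with hm
  have hmpos : 0 < m := by omega
  have hmgt : K * lc5 k C * (2 * C) ^ k < m := by
    refine hm0.trans_le ?_
    exact_mod_cast (by omega : m0 ≤ m)
  obtain ⟨F, ⟨T, hT⟩, P, hPF, hPid, hPn⟩ := hunif (m ^ 2)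
  let Pc : X →ₗ[ℝ] F := (P : X →ₗ[ℝ] X).codRestrict F hPF
  let R : X →ₗ[ℝ] EuclideanSpace ℝ (Fin (m ^ 2)) := (T.symm : F →ₗ[ℝ] _).comp Pc
  have hR : ∀ x, ‖R x‖ ≤ C * ‖x‖ := by
    intro x
    have h1 := (hT (R x)).1
    have h2 : (T (R x) : X) = P x := by simp [R, Pc]
    rw [h2] at h1
    exact h1.trans (P.le_of_opNorm_le hPn x)
  let φ : Fin (m ^ 2) → X →L[ℝ] ℝ := fun j =>
    (EuclideanSpace.proj j : EuclideanSpace ℝ (Fin (m ^ 2)) →L[ℝ] ℝ).comp (R.mkContinuous C hR)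
  have hφv : ∀ j x, φ j x = R x j := fun j x => rfl
  let e : Fin (m ^ 2) → X := fun j => (T (EuclideanSpace.single j 1) : X)
  have hφ : ∀ x, ∑ j, (φ j x) ^ 2 ≤ C ^ 2 * ‖x‖ ^ 2 := by
    intro x
    have h1 := EuclideanSpace.real_norm_sq_eq (R x)
    simp_rw [hφv]
    rw [← h1, ← mul_pow]
    exact pow_le_pow_left₀ (norm_nonneg _) (hR x) 2
  have hRT : ∀ v, R (T v : X) = v := by
    intro v
    have : Pc (T v : X) = T v := Subtype.ext (hPid _ (T v).2)
    simp [R, this]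
  have hφe : ∀ i j, φ i (e j) = if i = j then 1 else 0 := by
    intro i j
    rw [hφv]
    simp only [e]
    rw [hRT]
    simp [Pi.single_apply]
  have hmR : (0:ℝ) < m := by exact_mod_cast hmpos
  have he : ∀ η : Fin (m ^ 2) → Bool, ‖(1 / (C * m)) • ∑ j, sg5 (η j) • e j‖ ≤ 1 := by
    intro η
    have h1 : ∑ j, sg5 (η j) • e j
        = (T (∑ j, sg5 (η j) • EuclideanSpace.single j (1:ℝ)) : X) := by
      simp [e]
    have h2 : ‖∑ j, sg5 (η j) • (EuclideanSpace.single j (1:ℝ) : EuclideanSpace ℝ (Fin (m ^ 2)))‖ = m := by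
      have h3 := EuclideanSpace.real_norm_sq_eq
        (∑ j, sg5 (η j) • (EuclideanSpace.single j (1:ℝ) : EuclideanSpace ℝ (Fin (m ^ 2))))
      have h4 : ∀ i, (∑ j, sg5 (η j) • (EuclideanSpace.single j (1:ℝ) : EuclideanSpace ℝ (Fin (m ^ 2)))) i
          = sg5 (η i) := by
        intro i
        simp [Pi.single_apply]
      simp_rw [h4, sg5_sq'] at h3
      simp at h3
      exact h3
    rw [norm_smul, h1, Real.norm_of_nonneg (by positivity), div_mul_eq_mul_div, one_mul,
      div_le_one (by positivity)]
    have := (hT (∑ j, sg5 (η j) • EuclideanSpace.single j (1:ℝ))).2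
    rwa [h2] at this
  have hcore := core5 hk hC0.le φ hφ e hφe he Q K hQ1 hQ2 hQ3
  have hsq : √((m ^ 2 : ℕ) : ℝ) = m := by
    push_cast; exact Real.sqrt_sq hmR.le
  rw [hsq] at hcore
  have hdf : ((m:ℝ) ^ 2 / 2) ^ k ≤ ((m ^ 2).descFactorial k : ℝ) := by
    have h1 : ((m ^ 2 + 1 - k : ℕ) : ℝ) ^ k ≤ ((m ^ 2).descFactorial k : ℝ) := by
      exact_mod_cast Nat.pow_sub_le_descFactorial (m ^ 2) k
    refine le_trans (pow_le_pow_left₀ (by positivity) ?_ k) h1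
    have h2 : 2 * k ≤ m ^ 2 := by nlinarith
    have h3 : m ^ 2 ≤ 2 * (m ^ 2 + 1 - k) := by omega
    have h4 : (m:ℝ) ^ 2 ≤ 2 * ((m ^ 2 + 1 - k : ℕ) : ℝ) := by exact_mod_cast h3
    linarith
  have h5 : ((m:ℝ) ^ 2 / 2) ^ k * (1 / (C * m)) ^ k ≤ K * (lc5 k C * m) :=
    (mul_le_mul_of_nonneg_right hdf (by positivity)).trans hcore
  have h6 : ((m:ℝ) ^ 2 / 2) ^ k * (1 / (C * m)) ^ k = m ^ k / (2 * C) ^ k := by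
    rw [← mul_pow, ← div_pow]
    congr 1
    field_simp
  rw [h6, div_le_iff₀ (by positivity)] at h5
  have h7 : (m:ℝ) ^ 2 ≤ m ^ k := pow_le_pow_right₀ (by exact_mod_cast hmpos) hk
  nlinarith
end
end
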